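/- arXiv:2309.10368 — 6 statements merged into one kernel-verified Lean document; each statement's English description precedes it below -/
import Mathlib

section
/- For every natural number m ≥ 2 there exists a finite set X of n = 4m−3 points on the real line, a number of clusters k = 2m−1, an initial partition of X into k nonempty clusters, and a sequence of at least 2^(m−1) successive partitions of X into k clusters such that each partition in the sequence is obtained from the previous one by reassigning a single point to a different cluster and each such reassignment strictly decreases the k-means potential Φ. (Hence the Hartigan–Wong method can take 2^(Ω(n)) iterations to converge on instances on the line.) -/
/-- Center of mass of a finite set of points on the real line. -/
noncomputable def cm1 (S : Finset ℝ) : ℝ := (S.card : ℝ)⁻¹ * ∑ x ∈ S, x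

/-- `k`-means potential of a single cluster of points on the line. -/
noncomputable def pot1 (S : Finset ℝ) : ℝ := ∑ x ∈ S, (x - cm1 S) ^ 2

/-- `C'` is obtained from `C` by reassigning a single point `x` from cluster `i` to a
different cluster `j`. -/
def IsSinglePointMove {k : ℕ} (C C' : Fin k → Finset ℝ) : Prop :=
  ∃ (i j : Fin k) (x : ℝ), i ≠ j ∧ x ∈ C i ∧
    C' i = (C i).erase x ∧ C' j = insert x (C j) ∧
    ∀ l : Fin k, l ≠ i → l ≠ j → C' l = C l

/-- `C` is a partition of the point set `X` into `k` (possibly empty) clusters. -/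
def IsPartitionOf {k : ℕ} (X : Finset ℝ) (C : Fin k → Finset ℝ) : Prop :=
  (∀ i j : Fin k, i ≠ j → Disjoint (C i) (C j)) ∧ (⋃ i : Fin k, (C i : Set ℝ)) = ↑X


namespace HW

/-- Potential of a finite set of integers (rational number). -/
def potZ (T : Finset ℤ) : ℚ := ∑ z ∈ T, (z : ℚ) ^ 2 - (∑ z ∈ T, (z : ℚ)) ^ 2 / (T.card : ℚ)

/-- Scaled set. -/
def sc (s : ℤ) (T : Finset ℤ) : Finset ℤ := T.image (fun z => s * z)

/-- Improving single point move between clusters with index below `K`. -/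
def Step (K : ℕ) (C C' : ℕ → Finset ℤ) : Prop :=
  ∃ (a b : ℕ) (x : ℤ), a < K ∧ b < K ∧ a ≠ b ∧ x ∈ C a ∧ C' a = (C a).erase x ∧
    C' b = insert x (C b) ∧ (∀ c, c ≠ a → c ≠ b → C' c = C c) ∧
    potZ (C' a) + potZ (C' b) < potZ (C a) + potZ (C b)

inductive Reach (K : ℕ) (C : ℕ → Finset ℤ) : ℕ → (ℕ → Finset ℤ) → Prop
  | refl : Reach K C 0 C
  | step {n C' C''} : Reach K C n C' → Step K C' C'' → Reach K C (n + 1) C''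

theorem Reach.trans {K n n' : ℕ} {C C' C''} (h : Reach K C n C') (h' : Reach K C' n' C'') :
    Reach K C (n + n') C'' := by
  induction h' with
  | refl => exact h
  | step _ h2 ih => exact Reach.step ih h2

theorem Reach.seq {K n : ℕ} {C C'} (h : Reach K C n C') :
    ∃ f : ℕ → ℕ → Finset ℤ, f 0 = C ∧ f n = C' ∧ ∀ t < n, Step K (f t) (f (t + 1)) := by
  induction h with
  | refl => exact ⟨fun _ => C, rfl, rfl, by simp⟩
  | @step n C1 C2 h1 h2 ih =>
    obtain ⟨f, f0, fn, hf⟩ := ih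
    refine ⟨fun t => if t ≤ n then f t else C2, by simp [f0], by simp, ?_⟩
    intro t ht
    rcases Nat.lt_succ_iff_lt_or_eq.mp ht with h | h
    · have e1 : t ≤ n := h.le
      have e2 : t + 1 ≤ n := h
      simpa [e1, e2] using hf t h
    · subst h
      simpa [fn] using h2

theorem potZ_sc (s : ℤ) (hs : s ≠ 0) (T : Finset ℤ) : potZ (sc s T) = (s : ℚ) ^ 2 * potZ T := by
  have hinj : Function.Injective (fun z : ℤ => s * z) := mul_right_injective₀ hs
  unfold potZ sc
  rw [Finset.sum_image (fun _ _ _ _ h => hinj h), Finset.sum_image (fun _ _ _ _ h => hinj h),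
    Finset.card_image_of_injective _ hinj]
  push_cast
  simp only [mul_pow, ← Finset.mul_sum]
  ring

theorem mv {K : ℕ} {s : ℤ} (hs : s ≠ 0) {C : ℕ → Finset ℤ} {a b : ℕ} {A B : Finset ℤ}
    (A' B' : Finset ℤ) (x : ℤ)
    (ha : a < K) (hb : b < K) (hab : a ≠ b) (hA : C a = sc s A) (hB : C b = sc s B)
    (hx : x ∈ A) (hA' : A' = A.erase x) (hB' : B' = insert x B)
    (hg : potZ A' + potZ B' < potZ A + potZ B) :
    ∃ C', Step K C C' ∧ C' a = sc s A' ∧ C' b = sc s B' ∧ ∀ c, c ≠ a → c ≠ b → C' c = C c := by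
  have hinj : Function.Injective (fun z : ℤ => s * z) := mul_right_injective₀ hs
  have e1 : Function.update (Function.update C a (sc s A')) b (sc s B') a = sc s A' := by
    simp [hab]
  have e2 : Function.update (Function.update C a (sc s A')) b (sc s B') b = sc s B' := by
    simp
  have e3 : ∀ c, c ≠ a → c ≠ b →
      Function.update (Function.update C a (sc s A')) b (sc s B') c = C c := by
    intro c h1 h2
    simp [h1, h2]
  refine ⟨Function.update (Function.update C a (sc s A')) b (sc s B'),
    ⟨a, b, s * x, ha, hb, hab, ?_, ?_, ?_, e3, ?_⟩, e1, e2, e3⟩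
  · rw [hA]; exact Finset.mem_image_of_mem _ hx
  · rw [e1, hA, hA']; exact Finset.image_erase hinj A x
  · rw [e2, hB, hB']; exact Finset.image_insert _ x B
  · rw [e1, e2, hA, hB]
    simp only [potZ_sc s hs]
    have : (0 : ℚ) < (s : ℚ) ^ 2 := by positivity
    nlinarith

/-- A gadget call: the point `y` travels from `u1` through the lower gadget to `u0`,
resetting the lower gadget. -/
theorem dance {K : ℕ} {s : ℤ} (hs : s ≠ 0) {C : ℕ → Finset ℤ} {l0 l1 u0 u1 : ℕ}
    (hl : l0 < K ∧ l1 < K ∧ u0 < K ∧ u1 < K)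
    (hne : l0 ≠ l1 ∧ l0 ≠ u0 ∧ l0 ≠ u1 ∧ l1 ≠ u0 ∧ l1 ≠ u1 ∧ u0 ≠ u1)
    (y : ℤ) {U W : Finset ℤ} (U' W' : Finset ℤ)
    (h1 : C u1 = sc s U) (h0 : C u0 = sc s W) (k0 : C l0 = sc s {-7, -1, -15})
    (k1 : C l1 = sc s {11})
    (hy : y ∈ U) (hU : U' = U.erase y) (hW : W' = insert y W)
    (hy7 : y ≠ -7) (hy1 : y ≠ -1) (hy15 : y ≠ -15) (hy11 : y ≠ 11)
    (g1 : potZ U' + potZ {11, y} < potZ U + potZ {11})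
    (g2 : potZ {-7, -1} + potZ {11, y, -15} < potZ {-7, -1, -15} + potZ {11, y})
    (g3 : potZ {11, -15} + potZ {-7, -1, y} < potZ {11, y, -15} + potZ {-7, -1})
    (g4 : potZ {-1, y} + potZ {11, -15, -7} < potZ {-7, -1, y} + potZ {11, -15})
    (g5 : potZ {-1} + potZ W' < potZ {-1, y} + potZ W) :
    ∃ C', Reach K C 5 C' ∧ C' u1 = sc s U' ∧ C' u0 = sc s W' ∧ C' l0 = sc s {-1} ∧
      C' l1 = sc s {11, -15, -7} ∧
      ∀ c, c ≠ u1 → c ≠ u0 → c ≠ l0 → c ≠ l1 → C' c = C c := by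
  obtain ⟨hl0, hl1, hu0, hu1⟩ := hl
  obtain ⟨n1, n2, n3, n4, n5, n6⟩ := hne
  obtain ⟨C1, s1, a1, b1, r1⟩ := mv hs U' {11, y} y hu1 hl1 n5.symm h1 k1 hy hU
    (by ext; simp; tauto) g1
  have c10 := r1 l0 n3 n1
  have c11 := r1 u0 n6 n4.symm
  rw [k0] at c10
  rw [h0] at c11
  obtain ⟨C2, s2, a2, b2, r2⟩ := mv hs {-7, -1} {11, y, -15} (-15) hl0 hl1 n1 c10 b1 (by simp)
    (by decide) (by ext; simp; tauto) g2
  obtain ⟨C3, s3, a3, b3, r3⟩ := mv hs {11, -15} {-7, -1, y} y hl1 hl0 n1.symm b2 a2 (by simp)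
    (by ext; simp; grind) (by ext; simp; tauto) g3
  obtain ⟨C4, s4, a4, b4, r4⟩ := mv hs {-1, y} {11, -15, -7} (-7) hl0 hl1 n1 b3 a3 (by simp)
    (by ext; simp; grind) (by decide) g4
  have c4 : C4 u0 = sc s W := by
    rw [r4 u0 n2.symm n4.symm, r3 u0 n4.symm n2.symm, r2 u0 n2.symm n4.symm, c11]
  obtain ⟨C5, s5, a5, b5, r5⟩ := mv hs {-1} W' y hl0 hu0 n2 a4 c4 (by simp)
    (by ext; simp; grind) hW g5
  refine ⟨C5, .step (.step (.step (.step (.step .refl s1) s2) s3) s4) s5, ?_, b5, a5, ?_, ?_⟩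
  · rw [r5 u1 n3.symm n6.symm, r4 u1 n3.symm n5.symm, r3 u1 n5.symm n3.symm,
      r2 u1 n3.symm n5.symm, a1]
  · rw [r5 l1 n1.symm n4, b4]
  · intro c m1 m2 m3 m4
    rw [r5 c m3 m2, r4 c m3 m4, r3 c m4 m3, r2 c m3 m4, r1 c m1 m4]

theorem sc_four (s : ℤ) (T : Finset ℤ) : sc (4 * s) T = sc s (T.image (fun z => 4 * z)) := by
  unfold sc
  rw [Finset.image_image]
  congr 1
  funext z
  simp only [Function.comp]
  ring

theorem run (K : ℕ) : ∀ (i : ℕ), 2 * i + 2 < K → ∀ C : ℕ → Finset ℤ, C 0 = {0} →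
    C (2 * i + 1) = sc (4 ^ i) {-1} → C (2 * i + 2) = sc (4 ^ i) {11, -15, -7} →
    (∀ j < i, C (2 * j + 1) = sc (4 ^ j) {-7, -1, -15} ∧ C (2 * j + 2) = sc (4 ^ j) {11}) →
    ∃ N C', 2 ^ (i + 1) ≤ N ∧ Reach K C N C' ∧ C' (2 * i + 1) = sc (4 ^ i) {-7, -1, -15} ∧
      C' (2 * i + 2) = sc (4 ^ i) {11} ∧
      ∀ c, c ≠ 2 * i + 1 → c ≠ 2 * i + 2 → C' c = C c := by
  intro i
  induction i with
  | zero =>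
    intro hK C hf h0 h1 _
    have hs : (1 : ℤ) ≠ 0 := one_ne_zero
    simp only [mul_zero, zero_add, pow_zero] at *
    have hf' : C 0 = sc 1 {0} := by rw [hf]; decide
    obtain ⟨C1, s1, a1, b1, r1⟩ := mv (K := K) hs {11, -7} {0, -15} (-15) hK (by omega)
      (by decide) h1 hf' (by decide) (by decide) (by decide) (by norm_num [potZ])
    have c1 := r1 1 (by decide) (by decide)
    rw [h0] at c1
    obtain ⟨C2, s2, a2, b2, r2⟩ := mv (K := K) hs {0} {-1, -15} (-15) (by omega) (by omega)
      (by decide) b1 c1 (by decide) (by decide) (by decide) (by norm_num [potZ])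
    have c2 := r2 2 (by decide) (by decide)
    rw [a1] at c2
    obtain ⟨C3, s3, a3, b3, r3⟩ := mv (K := K) hs {11} {0, -7} (-7) hK (by omega)
      (by decide) c2 a2 (by decide) (by decide) (by decide) (by norm_num [potZ])
    have c3 := r3 1 (by decide) (by decide)
    rw [b2] at c3
    obtain ⟨C4, s4, a4, b4, r4⟩ := mv (K := K) hs {0} {-7, -1, -15} (-7) (by omega) (by omega)
      (by decide) b3 c3 (by decide) (by decide) (by decide) (by norm_num [potZ])
    refine ⟨4, C4, by norm_num, .step (.step (.step (.step .refl s1) s2) s3) s4, b4, ?_, ?_⟩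
    · rw [r4 2 (by decide) (by decide), a3]
    · intro c m1 m2
      by_cases hc : c = 0
      · subst hc; rw [a4, hf']
      · rw [r4 c hc m1, r3 c m2 hc, r2 c hc m1, r1 c m2 hc]
  | succ i ih =>
    intro hK C hf h0 h1 hlow
    have hs : (4 ^ i : ℤ) ≠ 0 := by positivity
    have hp : (4 ^ (i + 1) : ℤ) = 4 * 4 ^ i := by ring
    rw [hp, sc_four] at h0 h1
    have h0' : C (2 * (i + 1) + 1) = sc (4 ^ i) {-4} := by rw [h0]; rfl
    have h1' : C (2 * (i + 1) + 2) = sc (4 ^ i) {44, -28, -60} := by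
      rw [h1]; congr 1; decide
    obtain ⟨k0, k1⟩ := hlow i (Nat.lt_succ_self i)
    obtain ⟨C1, R1, p1, p2, p3, p4, p5⟩ := dance (K := K) hs (l0 := 2 * i + 1) (l1 := 2 * i + 2)
      (u0 := 2 * (i + 1) + 1) (u1 := 2 * (i + 1) + 2) (by omega) (by omega) (-60)
      {44, -28} {-4, -60} h1' h0' k0 k1 (by decide) (by decide) (by decide) (by decide)
      (by decide) (by decide) (by decide) (by norm_num [potZ]) (by norm_num [potZ])
      (by norm_num [potZ]) (by norm_num [potZ]) (by norm_num [potZ])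
    obtain ⟨N2, C2, hN2, R2, q1, q2, q3⟩ := ih (by omega) C1
      (by rw [p5 0 (by omega) (by omega) (by omega) (by omega), hf]) p3 p4 (by
        intro j hj
        rw [p5 _ (by omega) (by omega) (by omega) (by omega),
          p5 _ (by omega) (by omega) (by omega) (by omega)]
        exact hlow j (by omega))
    obtain ⟨C3, R3, t1, t2, t3, t4, t5⟩ := dance (K := K) hs (l0 := 2 * i + 1) (l1 := 2 * i + 2)
      (u0 := 2 * (i + 1) + 1) (u1 := 2 * (i + 1) + 2) (C := C2) (by omega) (by omega) (-28)
      {44} {-28, -4, -60} ((q3 _ (by omega) (by omega)).trans p1)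
      ((q3 _ (by omega) (by omega)).trans p2) q1 q2 (by decide) (by decide) (by decide)
      (by decide) (by decide) (by decide) (by decide) (by norm_num [potZ]) (by norm_num [potZ])
      (by norm_num [potZ]) (by norm_num [potZ]) (by norm_num [potZ])
    obtain ⟨N4, C4, hN4, R4, w1, w2, w3⟩ := ih (by omega) C3
      (by rw [t5 0 (by omega) (by omega) (by omega) (by omega), q3 0 (by omega) (by omega),
            p5 0 (by omega) (by omega) (by omega) (by omega), hf]) t3 t4 (by
        intro j hj
        rw [t5 _ (by omega) (by omega) (by omega) (by omega),
          t5 _ (by omega) (by omega) (by omega) (by omega),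
          q3 _ (by omega) (by omega), q3 _ (by omega) (by omega),
          p5 _ (by omega) (by omega) (by omega) (by omega),
          p5 _ (by omega) (by omega) (by omega) (by omega)]
        exact hlow j (by omega))
    refine ⟨5 + N2 + 5 + N4, C4, ?_, ((R1.trans R2).trans R3).trans R4, ?_, ?_, ?_⟩
    · rw [pow_succ 2 (i + 1)]; omega
    · rw [w3 _ (by omega) (by omega), t2, hp, sc_four]; congr 1
    · rw [w3 _ (by omega) (by omega), t1, hp, sc_four]; congr 1
    · intro c m1 m2
      by_cases e1 : c = 2 * i + 1
      · subst e1; rw [w1, k0]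
      by_cases e2 : c = 2 * i + 2
      · subst e2; rw [w2, k1]
      rw [w3 c e1 e2, t5 c m2 m1 e1 e2, q3 c e1 e2, p5 c m2 m1 e1 e2]

/-- Initial configuration; the top gadget has index `n`. -/
def startConf (n c : ℕ) : Finset ℤ :=
  if c = 0 then {0} else
    if c % 2 = 1 then sc (4 ^ ((c - 1) / 2)) (if (c - 1) / 2 = n then {-1} else {-7, -1, -15})
    else sc (4 ^ ((c - 1) / 2)) (if (c - 1) / 2 = n then {11, -15, -7} else {11})

theorem startConf_odd (n j : ℕ) :
    startConf n (2 * j + 1) = sc (4 ^ j) (if j = n then {-1} else {-7, -1, -15}) := by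
  have h1 : (2 * j + 1) % 2 = 1 := by omega
  have h2 : (2 * j + 1 - 1) / 2 = j := by omega
  simp only [startConf, h1, h2, if_true]
  simp

theorem startConf_even (n j : ℕ) :
    startConf n (2 * j + 2) = sc (4 ^ j) (if j = n then {11, -15, -7} else {11}) := by
  have h1 : (2 * j + 2) % 2 = 0 := by omega
  have h2 : (2 * j + 2 - 1) / 2 = j := by omega
  simp only [startConf, h1, h2]
  simp

theorem card_sc {s : ℤ} (hs : s ≠ 0) (T : Finset ℤ) : (sc s T).card = T.card :=
  Finset.card_image_of_injective _ (mul_right_injective₀ hs)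

theorem startConf_card (n : ℕ) : ∀ j, ∑ c ∈ Finset.range (2 * j + 1), (startConf n c).card = 4 * j + 1 := by
  intro j
  induction j with
  | zero => simp [startConf]
  | succ j ih =>
    have hs : (4 ^ j : ℤ) ≠ 0 := by positivity
    rw [show 2 * (j + 1) + 1 = 2 * j + 1 + 1 + 1 by ring, Finset.sum_range_succ,
      Finset.sum_range_succ, ih, startConf_odd, startConf_even, card_sc hs, card_sc hs]
    split_ifs <;> simp <;> ring

theorem pow_odd_inj {i j : ℕ} {z w : ℤ} (hz : z % 2 = 1) (hw : w % 2 = 1)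
    (h : (4 : ℤ) ^ i * z = 4 ^ j * w) : i = j ∧ z = w := by
  have key : ∀ (i j : ℕ) (z w : ℤ), z % 2 = 1 → (4 : ℤ) ^ i * z = 4 ^ j * w → ¬ i < j := by
    intro i j z w hz h hij
    obtain ⟨d, rfl⟩ := Nat.exists_eq_add_of_lt hij
    have h4 : (4 : ℤ) ^ i ≠ 0 := by positivity
    have : z = 4 * (4 ^ d * w) := by
      apply mul_left_cancel₀ h4
      rw [h]; ring
    omega
  have e : i = j := le_antisymm (not_lt.mp (key j i w z hw h.symm)) (not_lt.mp (key i j z w hz h))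
  subst e
  exact ⟨rfl, mul_left_cancel₀ (by positivity) h⟩

theorem startConf_mem {n c : ℕ} {x : ℤ} (h : x ∈ startConf n c) :
    (c = 0 ∧ x = 0) ∨ ∃ j z, x = 4 ^ j * z ∧ z % 2 = 1 ∧
      ((c = 2 * j + 1 ∧ z ∈ (if j = n then {-1} else {-7, -1, -15} : Finset ℤ)) ∨
      (c = 2 * j + 2 ∧ z ∈ (if j = n then {11, -15, -7} else {11} : Finset ℤ))) := by
  rcases Nat.eq_zero_or_pos c with h0 | h0
  · subst h0; left; simpa [startConf] using h
  · right
    rcases Nat.even_or_odd' (c - 1) with ⟨j, hj | hj⟩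
    · obtain rfl : c = 2 * j + 1 := by omega
      rw [startConf_odd] at h
      obtain ⟨z, hz, rfl⟩ := Finset.mem_image.mp h
      refine ⟨j, z, rfl, ?_, Or.inl ⟨rfl, hz⟩⟩
      split_ifs at hz <;> simp at hz <;> omega
    · obtain rfl : c = 2 * j + 2 := by omega
      rw [startConf_even] at h
      obtain ⟨z, hz, rfl⟩ := Finset.mem_image.mp h
      refine ⟨j, z, rfl, ?_, Or.inr ⟨rfl, hz⟩⟩
      split_ifs at hz <;> simp at hz <;> omega

theorem startConf_uniq {n c d : ℕ} {x : ℤ} (hc : x ∈ startConf n c) (hd : x ∈ startConf n d) : c = d := by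
  rcases startConf_mem hc with ⟨rfl, rfl⟩ | ⟨j, z, hx, hz, h⟩
  · rcases startConf_mem hd with ⟨rfl, _⟩ | ⟨j, z, hx, hz, h⟩
    · rfl
    · have : z = 0 := by simpa using hx.symm
      omega
  · rcases startConf_mem hd with ⟨rfl, rfl⟩ | ⟨j', z', hx', hz', h'⟩
    · have : z = 0 := by simpa using hx.symm
      omega
    · obtain ⟨rfl, rfl⟩ := pow_odd_inj hz hz' (hx.symm.trans hx')
      split_ifs at h h' <;> simp at h h' <;> omega

/-- Partition of an integer set. -/
def Part (K : ℕ) (X : Finset ℤ) (C : ℕ → Finset ℤ) : Prop :=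
  (∀ c < K, ∀ d < K, ∀ x, x ∈ C c → x ∈ C d → c = d) ∧ ∀ x, x ∈ X ↔ ∃ c < K, x ∈ C c

theorem Part.step {K : ℕ} {X : Finset ℤ} {C C' : ℕ → Finset ℤ} (h : Part K X C)
    (hs : Step K C C') : Part K X C' := by
  obtain ⟨a, b, x, ha, hb, hab, hx, e1, e2, e3, _⟩ := hs
  have key : ∀ c < K, ∀ y, y ∈ C' c ↔ (y = x ∧ c = b) ∨ (y ≠ x ∧ y ∈ C c) := by
    intro c hc y
    by_cases h1 : c = a
    · subst h1; rw [e1, Finset.mem_erase]; tauto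
    by_cases h2 : c = b
    · subst h2; rw [e2, Finset.mem_insert]; tauto
    rw [e3 c h1 h2]
    have : y = x → y ∉ C c := by
      rintro rfl hy
      exact h1 (h.1 c hc a ha _ hy hx)
    tauto
  constructor
  · intro c hc d hd y h1 h2
    rw [key c hc] at h1
    rw [key d hd] at h2
    rcases h1 with ⟨h1, h1'⟩ | ⟨h1, h1'⟩ <;> rcases h2 with ⟨h2, h2'⟩ | ⟨h2, h2'⟩
    · omega
    · exact absurd h1 h2
    · exact absurd h2 h1
    · exact h.1 c hc d hd y h1' h2'
  · intro y
    rw [h.2]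
    constructor
    · rintro ⟨c, hc, hy⟩
      by_cases hyx : y = x
      · exact ⟨b, hb, (key b hb y).2 (Or.inl ⟨hyx, rfl⟩)⟩
      · exact ⟨c, hc, (key c hc y).2 (Or.inr ⟨hyx, hy⟩)⟩
    · rintro ⟨c, hc, hy⟩
      rcases (key c hc y).1 hy with ⟨h1, _⟩ | ⟨_, h1⟩
      · subst h1; exact ⟨a, ha, hx⟩
      · exact ⟨c, hc, h1⟩

/-- Cast to the reals. -/
noncomputable def toR (T : Finset ℤ) : Finset ℝ := T.image (fun z : ℤ => (z : ℝ))

theorem cast_inj : Function.Injective (fun z : ℤ => (z : ℝ)) := Int.cast_injective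

theorem pot1_toR (T : Finset ℤ) : pot1 (toR T) = ((potZ T : ℚ) : ℝ) := by
  have hcard : (toR T).card = T.card := Finset.card_image_of_injective _ cast_inj
  have hsum : ∀ f : ℝ → ℝ, ∑ x ∈ toR T, f x = ∑ z ∈ T, f (z : ℝ) := fun f =>
    Finset.sum_image (fun _ _ _ _ h => cast_inj h)
  unfold pot1 potZ
  have hcm : cm1 (toR T) = (T.card : ℝ)⁻¹ * ∑ z ∈ T, (z : ℝ) := by
    unfold cm1; rw [hcard, hsum]
  rw [hcm, hsum]
  push_cast
  rcases T.eq_empty_or_nonempty with h | h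
  · subst h; simp
  · have hc : (T.card : ℝ) ≠ 0 := by
      have := h.card_pos
      positivity
    simp only [sub_sq, Finset.sum_add_distrib, Finset.sum_sub_distrib, Finset.sum_const,
      nsmul_eq_mul, ← Finset.sum_mul, ← Finset.mul_sum]
    field_simp
    ring

theorem Part.real {K : ℕ} {X : Finset ℤ} {C : ℕ → Finset ℤ} (h : Part K X C) :
    IsPartitionOf (toR X) (fun i : Fin K => toR (C i)) := by
  constructor
  · intro i j hij
    rw [Finset.disjoint_left]
    intro x h1 h2
    obtain ⟨z, hz, rfl⟩ := Finset.mem_image.mp h1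
    obtain ⟨w, hw, e⟩ := Finset.mem_image.mp h2
    obtain rfl : w = z := cast_inj e
    exact hij (Fin.ext (h.1 _ i.2 _ j.2 _ hz hw))
  · ext x
    simp only [Set.mem_iUnion, Finset.mem_coe, toR, Finset.mem_image]
    constructor
    · rintro ⟨i, z, hz, rfl⟩
      exact ⟨z, (h.2 z).2 ⟨i, i.2, hz⟩, rfl⟩
    · rintro ⟨z, hz, rfl⟩
      obtain ⟨c, hc, hz⟩ := (h.2 z).1 hz
      exact ⟨⟨c, hc⟩, z, hz, rfl⟩

theorem Step.real {K : ℕ} {C C' : ℕ → Finset ℤ} (h : Step K C C') :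
    IsSinglePointMove (fun i : Fin K => toR (C i)) (fun i : Fin K => toR (C' i)) ∧
      (∑ i : Fin K, pot1 (toR (C' i))) < ∑ i : Fin K, pot1 (toR (C i)) := by
  obtain ⟨a, b, x, ha, hb, hab, hx, e1, e2, e3, hlt⟩ := h
  have hne : (⟨a, ha⟩ : Fin K) ≠ ⟨b, hb⟩ := fun h => hab (Fin.ext_iff.mp h)
  constructor
  · refine ⟨⟨a, ha⟩, ⟨b, hb⟩, (x : ℝ), hne, Finset.mem_image_of_mem _ hx, ?_, ?_, ?_⟩
    · simp only [toR, e1]; exact Finset.image_erase cast_inj _ _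
    · simp only [toR, e2]; exact Finset.image_insert _ _ _
    · intro l h1 h2
      simp only
      rw [e3 l (fun h => h1 (Fin.ext h)) (fun h => h2 (Fin.ext h))]
  · simp only [pot1_toR]
    rw [← Finset.add_sum_erase _ _ (Finset.mem_univ (⟨a, ha⟩ : Fin K)),
      ← Finset.add_sum_erase _ _ (Finset.mem_erase.2 ⟨hne.symm, Finset.mem_univ (⟨b, hb⟩ : Fin K)⟩),
      ← Finset.add_sum_erase Finset.univ (fun i : Fin K => ((potZ (C i) : ℚ) : ℝ))
        (Finset.mem_univ (⟨a, ha⟩ : Fin K)),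
      ← Finset.add_sum_erase (Finset.univ.erase (⟨a, ha⟩ : Fin K))
        (fun i : Fin K => ((potZ (C i) : ℚ) : ℝ))
        (Finset.mem_erase.2 ⟨hne.symm, Finset.mem_univ (⟨b, hb⟩ : Fin K)⟩)]
    have hrest : ∑ i ∈ (Finset.univ.erase (⟨a, ha⟩ : Fin K)).erase ⟨b, hb⟩,
        ((potZ (C' i) : ℚ) : ℝ) = ∑ i ∈ (Finset.univ.erase (⟨a, ha⟩ : Fin K)).erase ⟨b, hb⟩,
        ((potZ (C i) : ℚ) : ℝ) := by
      refine Finset.sum_congr rfl fun i hi => ?_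
      simp only [Finset.mem_erase, Finset.mem_univ, and_true] at hi
      rw [e3 i (fun h => hi.2 (Fin.ext h)) (fun h => hi.1 (Fin.ext h))]
    have hlt' : ((potZ (C' a) : ℚ) : ℝ) + (potZ (C' b) : ℚ) < (potZ (C a) : ℚ) + (potZ (C b) : ℚ) := by
      exact_mod_cast hlt
    rw [hrest]
    simp only
    linarith

theorem mainBound (n : ℕ) :
    ∃ (X : Finset ℝ), X.card = 4 * (n + 1) + 1 ∧
      ∃ (N : ℕ), 2 ^ (n + 1) ≤ N ∧
        ∃ seq : ℕ → Fin (2 * (n + 1) + 1) → Finset ℝ,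
          (∀ t ≤ N, IsPartitionOf X (seq t)) ∧
          (∀ i : Fin (2 * (n + 1) + 1), (seq 0 i).Nonempty) ∧
          (∀ t < N, IsSinglePointMove (seq t) (seq (t + 1)) ∧
            (∑ i : Fin (2 * (n + 1) + 1), pot1 (seq (t + 1) i))
              < ∑ i : Fin (2 * (n + 1) + 1), pot1 (seq t i)) := by
  obtain ⟨N, C', hN, hR, -⟩ := run (2 * (n + 1) + 1) n (by omega) (startConf n) (by simp [startConf])
    (by rw [startConf_odd, if_pos rfl]) (by rw [startConf_even, if_pos rfl])
    (by intro j hj; rw [startConf_odd, startConf_even, if_neg hj.ne, if_neg hj.ne]; exact ⟨rfl, rfl⟩)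
  obtain ⟨f, f0, -, hf⟩ := hR.seq
  set X : Finset ℤ := (Finset.range (2 * (n + 1) + 1)).biUnion (startConf n) with hX
  have hP : ∀ t ≤ N, Part (2 * (n + 1) + 1) X (f t) := by
    intro t
    induction t with
    | zero =>
      intro _
      rw [f0]
      exact ⟨fun c _ d _ x h1 h2 => startConf_uniq h1 h2, fun x => by simp [hX]⟩
    | succ t ih =>
      intro ht
      exact (ih (by omega)).step (hf t (by omega))
  refine ⟨toR X, ?_, N, hN, fun t i => toR (f t i), fun t ht => (hP t ht).real, ?_,
    fun t ht => (hf t ht).real⟩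
  · rw [toR, Finset.card_image_of_injective _ cast_inj, hX, Finset.card_biUnion, startConf_card]
    intro c _ d _ hcd
    rw [Function.onFun, Finset.disjoint_left]
    intro x h1 h2
    exact hcd (startConf_uniq h1 h2)
  · intro i
    simp only [f0]
    apply Finset.Nonempty.image
    rcases Nat.eq_zero_or_pos (i : ℕ) with h0 | h0
    · simp [startConf, h0]
    · rcases Nat.even_or_odd' ((i : ℕ) - 1) with ⟨j, hj | hj⟩
      · rw [show (i : ℕ) = 2 * j + 1 by omega, startConf_odd]
        apply Finset.Nonempty.image
        split_ifs <;> simp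
      · rw [show (i : ℕ) = 2 * j + 2 by omega, startConf_even]
        apply Finset.Nonempty.image
        split_ifs <;> simp

end HW

/-- For every `m ≥ 2` there is an instance of `k`-means on the line with
`n = 4m − 3` points and `k = 2m − 1` clusters, an initial partition into `k` nonempty
clusters, and an improving sequence of at least `2^(m−1)` single-point reassignments, each of
which strictly decreases the `k`-means potential `Φ`. Hence the Hartigan--Wong method can take
`2^(Ω(n))` iterations on the line. -/
theorem hartigan_wong_exponential_lower_bound :
    ∀ m : ℕ, 2 ≤ m →
      ∃ (X : Finset ℝ), X.card = 4 * m - 3 ∧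
        ∃ (N : ℕ), 2 ^ (m - 1) ≤ N ∧
          ∃ seq : ℕ → Fin (2 * m - 1) → Finset ℝ,
            (∀ t ≤ N, IsPartitionOf X (seq t)) ∧
            (∀ i : Fin (2 * m - 1), (seq 0 i).Nonempty) ∧
            (∀ t < N, IsSinglePointMove (seq t) (seq (t + 1)) ∧
              (∑ i : Fin (2 * m - 1), pot1 (seq (t + 1) i))
                < ∑ i : Fin (2 * m - 1), pot1 (seq t i)) := by
  intro m hm
  obtain ⟨n, rfl⟩ : ∃ n, m = n + 2 := ⟨m - 2, by omega⟩
  have e1 : 4 * (n + 2) - 3 = 4 * (n + 1) + 1 := by omega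
  have e2 : 2 * (n + 2) - 1 = 2 * (n + 1) + 1 := by omega
  have e3 : n + 2 - 1 = n + 1 := by omega
  rw [e1, e2, e3]
  exact HW.mainBound n
end

section
/- Let n, k, d ∈ ℕ with 4kd ≤ n, and fix a set Y of n points in [0,1]^d. Perturb each point of Y independently by a d-dimensional Gaussian random vector with mean 0 and standard deviation σ ≤ 1, obtaining a random point set X. Define T(X) to be the maximum length of any sequence of partitions of X into k clusters in which consecutive partitions differ by reassigning a single point and each reassignment strictly decreases the k-means potential Φ. Then the expectation of T(X) is at most O(k^(12kd+5) · d^12 · n^(12.5 + 1/d) · ln^4.5(nkd) / σ^4) = k^(12kd) · poly(n, k, d, 1/σ). -/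
open MeasureTheory ProbabilityTheory

noncomputable section

/-- The identification of `Fin d → ℝ` with `EuclideanSpace ℝ (Fin d)`. -/
def toEuc {d : ℕ} (x : Fin d → ℝ) : EuclideanSpace ℝ (Fin d) :=
  (WithLp.equiv 2 (Fin d → ℝ)).symm x

/-- The indices of the points assigned to cluster `i` by the labeling `cl`. -/
def clusterIdx {n k : ℕ} (cl : Fin n → Fin k) (i : Fin k) : Finset (Fin n) :=
  Finset.univ.filter fun j => cl j = i

/-- The center of mass of cluster `i` of the point set `X` under the labeling `cl`. -/
def clusterCtr {n k d : ℕ} (X : Fin n → EuclideanSpace ℝ (Fin d)) (cl : Fin n → Fin k)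
    (i : Fin k) : EuclideanSpace ℝ (Fin d) :=
  ((clusterIdx cl i).card : ℝ)⁻¹ • ∑ j ∈ clusterIdx cl i, X j

/-- The `k`-means potential `Φ` of the point set `X` partitioned according to `cl`. -/
def kmeansPot {n k d : ℕ} (X : Fin n → EuclideanSpace ℝ (Fin d)) (cl : Fin n → Fin k) : ℝ :=
  ∑ i : Fin k, ∑ j ∈ clusterIdx cl i, ‖X j - clusterCtr X cl i‖ ^ 2

/-- `cl'` is obtained from `cl` by reassigning a single point to a different cluster. -/
def SingleMove {n k : ℕ} (cl cl' : Fin n → Fin k) : Prop :=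
  ∃ j : Fin n, cl' j ≠ cl j ∧ ∀ j' : Fin n, j' ≠ j → cl' j' = cl j'

/-- `T(X)`: the maximum length of a sequence of partitions of `X` into `k` clusters in which
consecutive partitions differ by reassigning a single point and each reassignment strictly
decreases the `k`-means potential `Φ`. -/
def maxImprovingSeqLen (n k d : ℕ) (X : Fin n → EuclideanSpace ℝ (Fin d)) : ℕ :=
  sSup {L : ℕ | ∃ seq : ℕ → Fin n → Fin k,
    ∀ t < L, SingleMove (seq t) (seq (t + 1)) ∧
      kmeansPot X (seq (t + 1)) < kmeansPot X (seq t)}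

/-- The distribution of `n` points, the `i`-th obtained by perturbing `Y i ∈ [0,1]^d` by an
independent `d`-dimensional Gaussian of mean `0` and standard deviation `σ`. -/
def perturbedPoints (n d : ℕ) (Y : Fin n → Fin d → ℝ) (σ : ℝ) :
    Measure (Fin n → Fin d → ℝ) :=
  Measure.pi fun i => Measure.pi fun j => gaussianReal (Y i j) ((σ ^ 2).toNNReal)

end


/-! ### Product measures: sequential conditioning -/

theorem hw_step {ι : Type*} [Fintype ι] [DecidableEq ι] {α : ι → Type*}
    [∀ i, MeasurableSpace (α i)] (μ : ∀ i, Measure (α i)) [∀ i, IsProbabilityMeasure (μ i)]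
    (a : ι) (B E : Set (∀ i, α i)) (hB : MeasurableSet B) (hE : MeasurableSet E)
    (hinv : ∀ ω x, Function.update ω a x ∈ B ↔ ω ∈ B) (q : ENNReal)
    (hq : ∀ ω, μ a {x | Function.update ω a x ∈ E} ≤ q) :
    Measure.pi μ (B ∩ E) ≤ Measure.pi μ B * q := by
  have h1 : Measure.pi μ (B ∩ E) = ∫⁻ ω, (B ∩ E).indicator 1 ω ∂(Measure.pi μ) := by
    rw [lintegral_indicator_one (hB.inter hE)]
  have h2 : Measure.pi μ B * q = ∫⁻ ω, B.indicator (fun _ => q) ω ∂(Measure.pi μ) := by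
    rw [lintegral_indicator_const hB, mul_comm]
  rw [h1, h2]
  refine lintegral_le_of_lmarginal_le {a}
    (measurable_one.indicator (hB.inter hE)) (measurable_const.indicator hB) ?_
  intro ω
  rw [lmarginal_singleton, lmarginal_singleton]
  simp only
  by_cases hω : ω ∈ B
  · have e1 : ∀ x, (B ∩ E).indicator (1 : (∀ i, α i) → ENNReal) (Function.update ω a x)
        = {x | Function.update ω a x ∈ E}.indicator 1 x := by
      intro x
      have := (hinv ω x).2 hω
      by_cases hx : Function.update ω a x ∈ E <;> simp [Set.indicator, this, hx]
    have e2 : ∀ x, B.indicator (fun _ => q) (Function.update ω a x) = q := by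
      intro x
      have := (hinv ω x).2 hω
      simp [this]
    simp only [e1, e2]
    have hm : MeasurableSet {x | Function.update ω a x ∈ E} := hE.preimage (measurable_update ω)
    rw [lintegral_indicator_one hm]
    simpa using hq ω
  · have e1 : ∀ x, (B ∩ E).indicator (1 : (∀ i, α i) → ENNReal) (Function.update ω a x) = 0 := by
      intro x
      have := (hinv ω x).not.2 hω
      simp [Set.indicator, this]
    simp [e1]

theorem hw_seq {ι : Type*} [Fintype ι] [DecidableEq ι] {α : ι → Type*}
    [∀ i, MeasurableSpace (α i)] (μ : ∀ i, Measure (α i)) [∀ i, IsProbabilityMeasure (μ i)]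
    (m : ℕ) : ∀ (a : Fin m → ι) (E : Fin m → Set (∀ i, α i)) (_ : ∀ j, MeasurableSet (E j))
    (_ : ∀ j l, j < l → ∀ ω x, Function.update ω (a l) x ∈ E j ↔ ω ∈ E j) (q : Fin m → ENNReal)
    (_ : ∀ j ω, μ (a j) {x | Function.update ω (a j) x ∈ E j} ≤ q j),
    Measure.pi μ (⋂ j, E j) ≤ ∏ j, q j := by
  induction m with
  | zero => intro a E hE hinv q hq; simp
  | succ m ih =>
    intro a E hE hinv q hq
    have e : (⋂ j, E j) = (⋂ j : Fin m, E j.castSucc) ∩ E (Fin.last m) := by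
      ext ω
      simp [Fin.forall_fin_succ']
    rw [e, Fin.prod_univ_castSucc]
    refine (hw_step μ (a (Fin.last m)) _ _ (MeasurableSet.iInter fun j => hE _) (hE _) ?_ _
      (hq _)).trans ?_
    · intro ω x
      simp only [Set.mem_iInter]
      exact forall_congr' fun j => hinv _ _ (Fin.castSucc_lt_last j) ω x
    · gcongr
      exact ih (fun j => a j.castSucc) (fun j => E j.castSucc) (fun j => hE _)
        (fun j l h ω x => hinv _ _ (by simpa using h) ω x) (fun j => q j.castSucc)
        (fun j ω => hq _ _)

theorem hw_one {ι : Type*} [Fintype ι] [DecidableEq ι] {α : ι → Type*}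
    [∀ i, MeasurableSpace (α i)] (μ : ∀ i, Measure (α i)) [∀ i, IsProbabilityMeasure (μ i)]
    (a : ι) (E : Set (∀ i, α i)) (hE : MeasurableSet E) (q : ENNReal)
    (hq : ∀ ω, μ a {x | Function.update ω a x ∈ E} ≤ q) :
    Measure.pi μ E ≤ q := by
  have := hw_step μ a Set.univ E MeasurableSet.univ hE (by simp) q hq
  simpa using this

/-! ### Gaussian estimates -/

theorem hw_gauss_le (μ σ : ℝ) (hσ : 0 < σ) (A : Set ℝ) :
    gaussianReal μ ((σ ^ 2).toNNReal) A ≤ ENNReal.ofReal (1 / (2 * σ)) * volume A := by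
  have hv : (σ ^ 2).toNNReal ≠ 0 := by simpa using hσ.ne'
  rw [gaussianReal_apply _ hv]
  calc ∫⁻ x in A, gaussianPDF μ ((σ ^ 2).toNNReal) x
      ≤ ∫⁻ x in A, ENNReal.ofReal (1 / (2 * σ)) := by
        refine lintegral_mono fun x => ?_
        rw [gaussianPDF]
        apply ENNReal.ofReal_le_ofReal
        rw [gaussianPDFReal]
        have h1 : Real.exp (-(x - μ) ^ 2 / (2 * ((σ ^ 2).toNNReal : ℝ))) ≤ 1 := by
          apply Real.exp_le_one_iff.2
          apply div_nonpos_of_nonpos_of_nonneg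
          · nlinarith [sq_nonneg (x - μ)]
          · positivity
        have h2 : 2 * σ ≤ √(2 * Real.pi * ((σ ^ 2).toNNReal : ℝ)) := by
          apply Real.le_sqrt_of_sq_le
          rw [Real.coe_toNNReal _ (by positivity)]
          nlinarith [Real.pi_gt_three, sq_pos_of_pos hσ]
        calc _ ≤ (√(2 * Real.pi * ((σ ^ 2).toNNReal : ℝ)))⁻¹ * 1 := by gcongr
          _ ≤ (2 * σ)⁻¹ * 1 := by gcongr
          _ = _ := by simp
    _ = _ := by simp

theorem hw_quad (μ σ : ℝ) (hσ : 0 < σ) (κ β γ ε N : ℝ) (hN : 0 < N) (hκ : 1 / N ≤ κ)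
    (hε : 0 ≤ ε) :
    gaussianReal μ ((σ ^ 2).toNNReal) {y | |κ * y ^ 2 + β * y + γ| ≤ 2 * ε}
      ≤ ENNReal.ofReal (2 * √(ε * N) / σ) := by
  have hκ0 : 0 < κ := lt_of_lt_of_le (by positivity) hκ
  set p : ℝ := -β / (2 * κ) with hp
  set s : ℝ := β ^ 2 / (4 * κ) - γ with hs
  have hid : ∀ y, κ * y ^ 2 + β * y + γ = κ * (y - p) ^ 2 - s := by
    intro y; rw [hp, hs]; field_simp; ring
  set b := √((s + 2 * ε) / κ) with hb
  set a := √((s - 2 * ε) / κ) with ha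
  have hab : b - a ≤ 2 * √(ε * N) := by
    have h3 : (s + 2 * ε) / κ ≤ (s - 2 * ε) / κ + 4 * (ε * N) := by
      have : ε / κ ≤ ε * N := by
        rw [div_le_iff₀ hκ0]
        have : 1 ≤ N * κ := by rw [div_le_iff₀ hN] at hκ; linarith
        nlinarith
      have e : (s + 2 * ε) / κ = (s - 2 * ε) / κ + 4 * (ε / κ) := by field_simp; ring
      linarith
    have h4 : b ≤ a + √(4 * (ε * N)) := by
      rw [hb]
      apply Real.sqrt_le_iff.2
      refine ⟨by positivity, ?_⟩
      have h5 : (s - 2 * ε) / κ ≤ a ^ 2 := by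
        rcases le_total 0 ((s - 2 * ε) / κ) with h | h
        · rw [ha, Real.sq_sqrt h]
        · exact h.trans (sq_nonneg _)
      have h6 := Real.sq_sqrt (show 0 ≤ 4 * (ε * N) by positivity)
      have h7 : 0 ≤ a * √(4 * (ε * N)) := by positivity
      nlinarith
    have h8 : √(4 * (ε * N)) = 2 * √(ε * N) := by
      rw [Real.sqrt_mul (by norm_num), show (4 : ℝ) = 2 ^ 2 by norm_num, Real.sqrt_sq (by norm_num)]
    linarith
  have hsub : {y | |κ * y ^ 2 + β * y + γ| ≤ 2 * ε} ⊆
      Set.Icc (p - b) (p - a) ∪ Set.Icc (p + a) (p + b) := by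
    intro y hy
    simp only [Set.mem_ofPred_eq, hid, abs_le] at hy
    have h1 : (s - 2 * ε) / κ ≤ (y - p) ^ 2 := by rw [div_le_iff₀ hκ0]; linarith
    have h2 : (y - p) ^ 2 ≤ (s + 2 * ε) / κ := by rw [le_div_iff₀ hκ0]; linarith
    have h3 : a ≤ |y - p| := by
      rw [ha, ← Real.sqrt_sq_eq_abs]; exact Real.sqrt_le_sqrt h1
    have h4 : |y - p| ≤ b := by
      rw [hb, ← Real.sqrt_sq_eq_abs]; exact Real.sqrt_le_sqrt h2
    rcases le_total 0 (y - p) with h | h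
    · rw [abs_of_nonneg h] at h3 h4
      right; constructor <;> linarith
    · rw [abs_of_nonpos h] at h3 h4
      left; constructor <;> linarith
  refine (measure_mono hsub).trans ((hw_gauss_le μ σ hσ _).trans ?_)
  have hvol : volume (Set.Icc (p - b) (p - a) ∪ Set.Icc (p + a) (p + b))
      ≤ ENNReal.ofReal (4 * √(ε * N)) := by
    refine (measure_union_le _ _).trans ?_
    rw [Real.volume_Icc, Real.volume_Icc]
    calc _ ≤ ENNReal.ofReal (2 * √(ε * N)) + ENNReal.ofReal (2 * √(ε * N)) := by
          gcongr <;> linarith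
      _ = _ := by rw [← ENNReal.ofReal_add (by positivity) (by positivity)]; congr 1; ring
  calc _ ≤ ENNReal.ofReal (1 / (2 * σ)) * ENNReal.ofReal (4 * √(ε * N)) := by gcongr
    _ = _ := by
      rw [← ENNReal.ofReal_mul (by positivity)]; congr 1; field_simp; ring

theorem hw_tail (μ σ : ℝ) (hσ : 0 < σ) (hσ1 : σ ≤ 1) (hμ : μ ∈ Set.Icc (0 : ℝ) 1) (s : ℝ)
    (hs : 0 ≤ s) :
    gaussianReal μ ((σ ^ 2).toNNReal) {y | 1 + s < |y|}
      ≤ ENNReal.ofReal (2 * Real.exp (-s ^ 2 / 2)) := by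
  have hsub : {y | 1 + s < |y|} ⊆ {y : ℝ | μ + s ≤ y} ∪ {y : ℝ | y ≤ μ - s} := by
    intro y hy
    simp only [Set.mem_ofPred_eq, lt_abs] at hy
    obtain ⟨h0, h1⟩ := hμ
    rcases hy with h | h
    · left; simp only [Set.mem_ofPred_eq]; linarith
    · right; simp only [Set.mem_ofPred_eq]; linarith
  refine (measure_mono hsub).trans ((measure_union_le _ _).trans ?_)
  have hvar : (((σ ^ 2).toNNReal : NNReal) : ℝ) ≤ 1 := by
    rw [Real.coe_toNNReal _ (by positivity)]; nlinarith
  have hb : ∀ t : ℝ, t ^ 2 = s ^ 2 → -t * (μ + t) + (μ * t + ((σ ^ 2).toNNReal : ℝ) * t ^ 2 / 2)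
      ≤ -s ^ 2 / 2 := by
    intro t ht
    nlinarith [sq_nonneg s]
  have h1 := measure_ge_le_exp_mul_mgf (μ := gaussianReal μ ((σ ^ 2).toNNReal)) (X := fun x => x)
    (t := s) (μ + s) hs (integrable_exp_mul_gaussianReal s)
  have h2 := measure_le_le_exp_mul_mgf (μ := gaussianReal μ ((σ ^ 2).toNNReal)) (X := fun x => x)
    (t := -s) (μ - s) (by linarith) (integrable_exp_mul_gaussianReal (-s))
  rw [mgf_fun_id_gaussianReal, ← Real.exp_add] at h1 h2
  have h1' := h1.trans (Real.exp_le_exp.2 (hb s rfl))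
  have h2' := h2.trans (Real.exp_le_exp.2 (by simpa [sub_eq_add_neg] using hb (-s) (by ring)))
  have key : ∀ S : Set ℝ, (gaussianReal μ ((σ ^ 2).toNNReal)).real S ≤ Real.exp (-s ^ 2 / 2) →
      gaussianReal μ ((σ ^ 2).toNNReal) S ≤ ENNReal.ofReal (Real.exp (-s ^ 2 / 2)) := by
    intro S hS
    rw [← ENNReal.ofReal_toReal (measure_ne_top (gaussianReal μ ((σ ^ 2).toNNReal)) S)]
    exact ENNReal.ofReal_le_ofReal hS
  rw [two_mul, ENNReal.ofReal_add (by positivity) (by positivity)]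
  exact add_le_add (key _ h1') (key _ h2')

noncomputable section

/-! ### The potential in coordinates -/

/-- indicator of equality -/
def hwInd {k : ℕ} (i i' : Fin k) : ℝ := if i = i' then 1 else 0

/-- sum of a scalar function over a cluster -/
def hwS {n k : ℕ} (f : Fin n → ℝ) (cl : Fin n → Fin k) (i : Fin k) : ℝ :=
  ∑ j, hwInd (cl j) i * f j

/-- the size of a cluster, as a real number -/
def hwM {n k : ℕ} (cl : Fin n → Fin k) (i : Fin k) : ℝ := hwS (fun _ => 1) cl i

/-- the potential in coordinates -/
def hwPot {n k d : ℕ} (ω : Fin n → Fin d → ℝ) (cl : Fin n → Fin k) : ℝ :=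
  ∑ j, ∑ c, ω j c ^ 2 - ∑ i, (hwM cl i)⁻¹ * ∑ c, hwS (fun j => ω j c) cl i ^ 2

/-- the gain of a move -/
def hwG {d : ℕ} (mi mb : ℝ) (s sb x : Fin d → ℝ) : ℝ :=
  (mi - 1)⁻¹ * ∑ c, (s c - x c) ^ 2 + (mb + 1)⁻¹ * ∑ c, (sb c + x c) ^ 2
    - mi⁻¹ * ∑ c, s c ^ 2 - mb⁻¹ * ∑ c, sb c ^ 2

theorem hwS_eq {n k : ℕ} (f : Fin n → ℝ) (cl : Fin n → Fin k) (i : Fin k) :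
    hwS f cl i = ∑ j ∈ clusterIdx cl i, f j := by
  simp [hwS, hwInd, clusterIdx, Finset.sum_filter]

theorem hwM_eq {n k : ℕ} (cl : Fin n → Fin k) (i : Fin k) :
    hwM cl i = ((clusterIdx cl i).card : ℝ) := by
  simp [hwM, hwS_eq]

theorem hwPot_eq {n k d : ℕ} (ω : Fin n → Fin d → ℝ) (cl : Fin n → Fin k) :
    kmeansPot (fun i => toEuc (ω i)) cl = hwPot ω cl := by
  have h0 : ∑ j, ∑ c, ω j c ^ 2 = ∑ i : Fin k, ∑ j ∈ clusterIdx cl i, ∑ c, ω j c ^ 2 := by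
    simp only [clusterIdx]
    exact (Finset.sum_fiberwise _ _ _).symm
  rw [hwPot, h0, ← Finset.sum_sub_distrib, kmeansPot]
  refine Finset.sum_congr rfl fun i _ => ?_
  simp only [hwM_eq, hwS_eq]
  set C := clusterIdx cl i with hC
  have h1 : ∀ j, ‖toEuc (ω j) - clusterCtr (fun i => toEuc (ω i)) cl i‖ ^ 2
      = ∑ c, (ω j c - (C.card : ℝ)⁻¹ * ∑ j ∈ C, ω j c) ^ 2 := by
    intro j
    rw [EuclideanSpace.norm_sq_eq]
    refine Finset.sum_congr rfl fun c _ => ?_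
    rw [Real.norm_eq_abs, sq_abs]
    simp [clusterCtr, toEuc, ← hC]
  simp only [h1]
  rw [Finset.sum_comm, Finset.sum_comm (s := C), Finset.mul_sum, ← Finset.sum_sub_distrib]
  refine Finset.sum_congr rfl fun c _ => ?_
  rcases C.eq_empty_or_nonempty with h | h
  · simp [h]
  · have hc : (C.card : ℝ) ≠ 0 := by exact_mod_cast h.card_pos.ne'
    simp only [sub_sq]
    rw [Finset.sum_add_distrib, Finset.sum_sub_distrib, ← Finset.sum_mul, ← Finset.mul_sum]
    simp only [Finset.sum_const, nsmul_eq_mul]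
    field_simp
    ring

theorem hwS_move {n k : ℕ} (f : Fin n → ℝ) (cl cl' : Fin n → Fin k) (j : Fin n)
    (h : ∀ j', j' ≠ j → cl' j' = cl j') (i : Fin k) :
    hwS f cl' i = hwS f cl i + (hwInd (cl' j) i - hwInd (cl j) i) * f j := by
  have : hwS f cl' i - hwS f cl i = (hwInd (cl' j) i - hwInd (cl j) i) * f j := by
    rw [hwS, hwS, ← Finset.sum_sub_distrib, Finset.sum_eq_single j]
    · ring
    · intro b _ hb; rw [h b hb]; ring
    · simp
  linarith

theorem hwS_corr {n k m : ℕ} (f : Fin n → ℝ) (cl cl' : Fin n → Fin k) (a : Fin m ↪ Fin n)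
    (h : ∀ p, (∀ l, a l ≠ p) → cl' p = cl p) (i : Fin k) :
    hwS f cl' i = hwS f cl i + ∑ l, (hwInd (cl' (a l)) i - hwInd (cl (a l)) i) * f (a l) := by
  have : hwS f cl' i - hwS f cl i
      = ∑ l, (hwInd (cl' (a l)) i - hwInd (cl (a l)) i) * f (a l) := by
    rw [hwS, hwS, ← Finset.sum_sub_distrib]
    rw [← Finset.sum_map Finset.univ a
      (fun p => (hwInd (cl' p) i - hwInd (cl p) i) * f p)]
    symm
    rw [Finset.sum_subset (Finset.subset_univ _)]
    · exact Finset.sum_congr rfl fun p _ => by ring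
    · intro p _ hp
      rw [h p (by simpa using hp)]; ring
  linarith

theorem hwPot_gain {n k d : ℕ} (ω : Fin n → Fin d → ℝ) (cl cl' : Fin n → Fin k) (j : Fin n)
    (hne : cl' j ≠ cl j) (h : ∀ j', j' ≠ j → cl' j' = cl j') :
    hwPot ω cl - hwPot ω cl' = hwG (hwM cl (cl j)) (hwM cl (cl' j))
      (fun c => hwS (fun p => ω p c) cl (cl j)) (fun c => hwS (fun p => ω p c) cl (cl' j))
      (ω j) := by
  have e : hwPot ω cl - hwPot ω cl' = ∑ i, ((hwM cl' i)⁻¹ * ∑ c, hwS (fun j => ω j c) cl' i ^ 2 -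
      (hwM cl i)⁻¹ * ∑ c, hwS (fun j => ω j c) cl i ^ 2) := by
    rw [hwPot, hwPot, Finset.sum_sub_distrib]; ring
  rw [e, Fintype.sum_eq_add (cl j) (cl' j) hne.symm]
  · simp only [hwM, hwS_move _ cl cl' j h]
    simp only [hwInd, hne, hne.symm, if_true, if_false, hwG]
    ring_nf
  · intro i ⟨h1, h2⟩
    simp only [hwM, hwS_move _ cl cl' j h]
    simp [hwInd, h1.symm, h2.symm]

theorem hwPot_nonneg {n k d : ℕ} (ω : Fin n → Fin d → ℝ) (cl : Fin n → Fin k) :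
    0 ≤ hwPot ω cl := by
  rw [← hwPot_eq, kmeansPot]; positivity

theorem hwM_nonneg {n k : ℕ} (cl : Fin n → Fin k) (i : Fin k) : 0 ≤ hwM cl i := by
  rw [hwM_eq]; positivity

theorem hwPot_le {n k d : ℕ} (ω : Fin n → Fin d → ℝ) (cl : Fin n → Fin k) (R : ℝ)
    (hR : ∀ j c, |ω j c| ≤ R) : hwPot ω cl ≤ n * d * R ^ 2 := by
  have h1 : 0 ≤ ∑ i, (hwM cl i)⁻¹ * ∑ c, hwS (fun j => ω j c) cl i ^ 2 :=
    Finset.sum_nonneg fun i _ => mul_nonneg (inv_nonneg.2 (hwM_nonneg _ _))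
      (Finset.sum_nonneg fun c _ => sq_nonneg _)
  have h2 : ∑ j, ∑ c, ω j c ^ 2 ≤ ∑ j : Fin n, ∑ c : Fin d, R ^ 2 :=
    Finset.sum_le_sum fun j _ => Finset.sum_le_sum fun c _ => by
      rw [← sq_abs]; exact pow_le_pow_left₀ (abs_nonneg _) (hR j c) 2
  simp only [Finset.sum_const, Finset.card_univ, Fintype.card_fin, nsmul_eq_mul] at h2
  rw [hwPot]; linarith

theorem hwInd_nonneg {k : ℕ} (i i' : Fin k) : 0 ≤ hwInd i i' := by
  rw [hwInd]; split_ifs <;> norm_num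

theorem hwS_abs {n k : ℕ} (f : Fin n → ℝ) (cl : Fin n → Fin k) (i : Fin k) (R : ℝ)
    (hf : ∀ j, |f j| ≤ R) : |hwS f cl i| ≤ hwM cl i * R := by
  rw [hwS, hwM, hwS, Finset.sum_mul]
  refine (Finset.abs_sum_le_sum_abs _ _).trans (Finset.sum_le_sum fun j _ => ?_)
  rw [abs_mul, abs_of_nonneg (hwInd_nonneg _ _), mul_one]
  exact mul_le_mul_of_nonneg_left (hf j) (hwInd_nonneg _ _)

theorem hwM_le {n k : ℕ} (cl : Fin n → Fin k) (i : Fin k) : hwM cl i ≤ n := by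
  rw [hwM_eq]
  exact_mod_cast (Finset.card_le_univ _).trans (by simp)

theorem hwM_add_one_le {n k : ℕ} (cl : Fin n → Fin k) (i : Fin k) (j : Fin n) (h : cl j ≠ i) :
    hwM cl i + 1 ≤ n := by
  rw [hwM_eq]
  have : (clusterIdx cl i).card < (Finset.univ : Finset (Fin n)).card := by
    apply Finset.card_lt_card
    rw [Finset.ssubset_univ_iff]
    intro hh
    have : j ∈ clusterIdx cl i := by rw [hh]; simp
    simp [clusterIdx] at this
    exact h this
  simp at this
  exact_mod_cast this

theorem hwM_one_le {n k : ℕ} (cl : Fin n → Fin k) (j : Fin n) : 1 ≤ hwM cl (cl j) := by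
  rw [hwM_eq]
  have : 0 < (clusterIdx cl (cl j)).card := Finset.card_pos.2 ⟨j, by simp [clusterIdx]⟩
  exact_mod_cast this

theorem hwS_sub_abs {n k : ℕ} (f : Fin n → ℝ) (cl : Fin n → Fin k) (j : Fin n) (R : ℝ)
    (hf : ∀ j, |f j| ≤ R) : |hwS f cl (cl j) - f j| ≤ (hwM cl (cl j) - 1) * R := by
  have h1 : ∀ g : Fin n → ℝ, hwS g cl (cl j) - g j
      = ∑ p ∈ Finset.univ.erase j, hwInd (cl p) (cl j) * g p := by
    intro g
    rw [hwS, ← Finset.add_sum_erase _ _ (Finset.mem_univ j)]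
    simp [hwInd]
  rw [h1 f, hwM, h1 (fun _ => 1), Finset.sum_mul]
  refine (Finset.abs_sum_le_sum_abs _ _).trans (Finset.sum_le_sum fun j _ => ?_)
  rw [abs_mul, abs_of_nonneg (hwInd_nonneg _ _), mul_one]
  exact mul_le_mul_of_nonneg_left (hf j) (hwInd_nonneg _ _)

theorem hw_perturb {d : ℕ} (M R δ : ℝ) (hM : M = 0 ∨ 1 ≤ M) (hR : 0 ≤ R) (hδ : δ ≤ R)
    (u v : Fin d → ℝ) (hu : ∀ c, |u c| ≤ M * R)
    (huv : ∀ c, |u c - v c| ≤ δ) :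
    |M⁻¹ * ∑ c, u c ^ 2 - M⁻¹ * ∑ c, v c ^ 2| ≤ d * (3 * δ * R) := by
  rw [← mul_sub, ← Finset.sum_sub_distrib, Finset.mul_sum]
  refine (Finset.abs_sum_le_sum_abs _ _).trans ?_
  have : (d : ℝ) * (3 * δ * R) = ∑ c : Fin d, (3 * δ * R) := by simp
  rw [this]
  refine Finset.sum_le_sum fun c _ => ?_
  have hδ0 : 0 ≤ δ := (abs_nonneg _).trans (huv c)
  rcases hM with h | h
  · rw [h]; simp; positivity
  · have h1 : u c ^ 2 - v c ^ 2 = (u c - v c) * (2 * u c - (u c - v c)) := by ring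
    have h2 : |2 * u c - (u c - v c)| ≤ 2 * (M * R) + δ := by
      refine (abs_sub _ _).trans ?_
      rw [abs_mul, abs_two]
      linarith [hu c, huv c]
    rw [abs_mul, h1, abs_mul, abs_of_nonneg (by positivity : 0 ≤ M⁻¹), inv_mul_le_iff₀ (by linarith)]
    calc |u c - v c| * |2 * u c - (u c - v c)| ≤ δ * (2 * (M * R) + δ) := by
          gcongr; exact huv c
      _ ≤ δ * (2 * (M * R) + M * R) := by
          gcongr
          nlinarith
      _ = _ := by ring

theorem hwG_perturb {d : ℕ} (mi mb R δ : ℝ) (hi : mi - 1 = 0 ∨ 1 ≤ mi - 1) (hi' : 1 ≤ mi)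
    (hb : mb = 0 ∨ 1 ≤ mb) (hR : 0 ≤ R)
    (hδ : δ ≤ R) (s sb t tb x : Fin d → ℝ) (hx : ∀ c, |x c| ≤ R)
    (h1 : ∀ c, |s c| ≤ mi * R) (h2 : ∀ c, |s c - x c| ≤ (mi - 1) * R) (h3 : ∀ c, |sb c| ≤ mb * R)
    (hst : ∀ c, |s c - t c| ≤ δ) (hstb : ∀ c, |sb c - tb c| ≤ δ) :
    |hwG mi mb s sb x - hwG mi mb t tb x| ≤ 12 * d * δ * R := by
  have e1 := hw_perturb (mi - 1) R δ hi hR hδ (fun c => s c - x c) (fun c => t c - x c) h2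
    (fun c => by simpa using hst c)
  have e2 := hw_perturb (mb + 1) R δ (by right; rcases hb with h | h <;> linarith) hR hδ
    (fun c => sb c + x c) (fun c => tb c + x c)
    (fun c => (abs_add_le _ _).trans (by linarith [h3 c, hx c]))
    (fun c => by simpa using hstb c)
  have e3 := hw_perturb mi R δ (Or.inr hi') hR hδ s t h1 hst
  have e4 := hw_perturb mb R δ hb hR hδ sb tb h3 hstb
  rw [abs_le] at *
  unfold hwG
  constructor <;> linarith [e1.1, e1.2, e2.1, e2.2, e3.1, e3.2, e4.1, e4.2]

/-! ### The events -/

/-- correction of the cluster sums caused by the active points -/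
def hwCorr {k m : ℕ} (p0 c : Fin m → Fin k) (f : Fin m → ℝ) (i : Fin k) : ℝ :=
  ∑ l, (hwInd (c l) i - hwInd (p0 l) i) * f l

/-- elementary event: the `j`-th active point has a small gain at its first move -/
def hwEv {n k d m : ℕ} (a : Fin m ↪ Fin n) (p0 : Fin m → Fin k) (sz : Fin k → ℝ)
    (sh : Fin k → Fin d → ℝ) (ε : ℝ) (j : Fin m) (c : Fin m → Fin k) (b : Fin k) :
    Set (Fin n → Fin d → ℝ) :=
  {ω | (1 ≤ sz (p0 j) + hwCorr p0 c (fun _ => 1) (p0 j) ∧ 0 ≤ sz b + hwCorr p0 c (fun _ => 1) b ∧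
      sz b + hwCorr p0 c (fun _ => 1) b + 1 ≤ n) ∧
    |hwG (sz (p0 j) + hwCorr p0 c (fun _ => 1) (p0 j)) (sz b + hwCorr p0 c (fun _ => 1) b)
      (fun x => sh (p0 j) x + hwCorr p0 c (fun l => ω (a l) x) (p0 j))
      (fun x => sh b x + hwCorr p0 c (fun l => ω (a l) x) b) (ω (a j))| ≤ 2 * ε}

/-- positions of the active points at the first move of the `j`-th one -/
def hwExt {k m : ℕ} (p0 : Fin m → Fin k) (j : Fin m) (g : Fin (j : ℕ) → Fin k) : Fin m → Fin k :=
  fun l => if h : (l : ℕ) < (j : ℕ) then g ⟨l, h⟩ else p0 l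

theorem hwExt_of_le {k m : ℕ} (p0 : Fin m → Fin k) (j : Fin m) (g : Fin (j : ℕ) → Fin k)
    (l : Fin m) (h : j ≤ l) : hwExt p0 j g l = p0 l := by
  have : ¬ ((l : ℕ) < (j : ℕ)) := by simpa using h
  simp [hwExt, this]

theorem hwCorr_update {n k d m : ℕ} (a : Fin m ↪ Fin n) (p0 c : Fin m → Fin k) (j : Fin m)
    (hc : c j = p0 j) (ω : Fin n → Fin d → ℝ) (v : Fin d → ℝ) (x : Fin d) (i : Fin k) :
    hwCorr p0 c (fun l => Function.update ω (a j) v (a l) x) i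
      = hwCorr p0 c (fun l => ω (a l) x) i := by
  unfold hwCorr
  refine Finset.sum_congr rfl fun l _ => ?_
  by_cases h : l = j
  · subst h; rw [hc]; ring
  · simp only []
    rw [Function.update_of_ne (fun h' => h (a.injective h'))]

theorem hwG_continuous {d : ℕ} (mi mb : ℝ) {X : Type*} [TopologicalSpace X]
    (s sb x : X → Fin d → ℝ) (hs : Continuous s) (hsb : Continuous sb) (hx : Continuous x) :
    Continuous fun ω => hwG mi mb (s ω) (sb ω) (x ω) := by
  unfold hwG
  fun_prop

theorem hwEv_measurable {n k d m : ℕ} (a : Fin m ↪ Fin n) (p0 : Fin m → Fin k) (sz : Fin k → ℝ)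
    (sh : Fin k → Fin d → ℝ) (ε : ℝ) (j : Fin m) (c : Fin m → Fin k) (b : Fin k) :
    MeasurableSet (hwEv (n := n) a p0 sz sh ε j c b) := by
  apply IsClosed.measurableSet
  unfold hwEv
  apply IsClosed.inter
  · exact isClosed_const
  · refine isClosed_le (Continuous.abs (hwG_continuous _ _ _ _ _ ?_ ?_ ?_)) continuous_const
    · unfold hwCorr; fun_prop
    · unfold hwCorr; fun_prop
    · fun_prop

theorem hwG_quad {d : ℕ} (mi mb : ℝ) (s sb v : Fin d → ℝ) (c0 : Fin d) (y : ℝ) :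
    hwG mi mb s sb (Function.update v c0 y) =
      ((mi - 1)⁻¹ + (mb + 1)⁻¹) * y ^ 2
        + (2 * ((mb + 1)⁻¹ * sb c0) - 2 * ((mi - 1)⁻¹ * s c0)) * y
        + hwG mi mb s sb (Function.update v c0 0) := by
  have key : ∀ (F : Fin d → ℝ → ℝ) (y : ℝ), ∑ c, F c (Function.update v c0 y c)
      = F c0 y + ∑ c ∈ Finset.univ.erase c0, F c (v c) := by
    intro F y
    rw [← Finset.add_sum_erase _ _ (Finset.mem_univ c0), Function.update_self]
    congr 1
    refine Finset.sum_congr rfl fun c hc => ?_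
    rw [Function.update_of_ne (Finset.ne_of_mem_erase hc)]
  unfold hwG
  rw [key (fun c t => (s c - t) ^ 2) y, key (fun c t => (s c - t) ^ 2) 0,
    key (fun c t => (sb c + t) ^ 2) y, key (fun c t => (sb c + t) ^ 2) 0]
  ring

theorem hwEv_prob {n k d m : ℕ} (hd : 0 < d) (Y : Fin n → Fin d → ℝ) (σ : ℝ) (hσ : 0 < σ)
    (a : Fin m ↪ Fin n) (p0 : Fin m → Fin k) (sz : Fin k → ℝ)
    (sh : Fin k → Fin d → ℝ) (ε : ℝ) (hε : 0 ≤ ε) (j : Fin m) (c : Fin m → Fin k)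
    (hc : c j = p0 j) (b : Fin k)
    (ω : Fin n → Fin d → ℝ) :
    (Measure.pi fun t => gaussianReal (Y (a j) t) ((σ ^ 2).toNNReal))
      {v | Function.update ω (a j) v ∈ hwEv a p0 sz sh ε j c b}
      ≤ ENNReal.ofReal (2 * √(ε * n) / σ) := by
  simp only [hwEv, Set.mem_ofPred_eq, hwCorr_update a p0 c j hc, Function.update_self]
  set mi := sz (p0 j) + hwCorr p0 c (fun _ => 1) (p0 j)
  set mb := sz b + hwCorr p0 c (fun _ => 1) b
  set s : Fin d → ℝ := fun x => sh (p0 j) x + hwCorr p0 c (fun l => ω (a l) x) (p0 j)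
  set sb : Fin d → ℝ := fun x => sh b x + hwCorr p0 c (fun l => ω (a l) x) b
  by_cases hcond : 1 ≤ mi ∧ 0 ≤ mb ∧ mb + 1 ≤ n
  · simp only [hcond, true_and, and_self]
    obtain ⟨h1, h2, h3⟩ := hcond
    refine hw_one _ ⟨0, hd⟩ _ ?_ _ ?_
    · apply IsClosed.measurableSet
      exact isClosed_le (Continuous.abs (hwG_continuous _ _ _ _ _ continuous_const
        continuous_const continuous_id)) continuous_const
    · intro v
      have hset : {y : ℝ | Function.update v ⟨0, hd⟩ y ∈ {v | |hwG mi mb s sb v| ≤ 2 * ε}}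
          = {y | |((mi - 1)⁻¹ + (mb + 1)⁻¹) * y ^ 2
            + (2 * ((mb + 1)⁻¹ * sb ⟨0, hd⟩) - 2 * ((mi - 1)⁻¹ * s ⟨0, hd⟩)) * y
            + hwG mi mb s sb (Function.update v ⟨0, hd⟩ 0)| ≤ 2 * ε} := by
        ext y
        rw [Set.mem_ofPred_eq, Set.mem_ofPred_eq, Set.mem_ofPred_eq, hwG_quad]
      rw [hset]
      refine hw_quad _ σ hσ _ _ _ ε n (by linarith) ?_ hε
      have e1 : 0 ≤ (mi - 1)⁻¹ := inv_nonneg.2 (by linarith)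
      have e2 : 1 / (n : ℝ) ≤ (mb + 1)⁻¹ := by
        rw [one_div]; exact inv_anti₀ (by linarith) h3
      linarith
  · simp [hcond]

/-- covering event for fixed combinatorial data -/
def hwData {n k d m : ℕ} (a : Fin m ↪ Fin n) (p0 : Fin m → Fin k) (sz : Fin k → ℝ)
    (sh : Fin k → Fin d → ℝ) (ε : ℝ) : Set (Fin n → Fin d → ℝ) :=
  ⋂ j : Fin m, ⋃ g : Fin (j : ℕ) → Fin k, ⋃ b : Fin k, hwEv a p0 sz sh ε j (hwExt p0 j g) b

theorem hwData_measurable {n k d m : ℕ} (a : Fin m ↪ Fin n) (p0 : Fin m → Fin k) (sz : Fin k → ℝ)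
    (sh : Fin k → Fin d → ℝ) (ε : ℝ) : MeasurableSet (hwData (n := n) a p0 sz sh ε) :=
  MeasurableSet.iInter fun _ => MeasurableSet.iUnion fun _ => MeasurableSet.iUnion fun _ =>
    hwEv_measurable _ _ _ _ _ _ _ _

theorem hwData_prob {n k d m : ℕ} (hd : 0 < d) (Y : Fin n → Fin d → ℝ) (σ : ℝ) (hσ : 0 < σ)
    (a : Fin m ↪ Fin n) (p0 : Fin m → Fin k) (sz : Fin k → ℝ)
    (sh : Fin k → Fin d → ℝ) (ε : ℝ) (hε : 0 ≤ ε) :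
    perturbedPoints n d Y σ (hwData a p0 sz sh ε)
      ≤ ∏ j : Fin m, ((k : ENNReal) ^ ((j : ℕ) + 1) * ENNReal.ofReal (2 * √(ε * n) / σ)) := by
  unfold perturbedPoints hwData
  refine hw_seq _ m a _ ?_ ?_ _ ?_
  · intro j
    exact MeasurableSet.iUnion fun _ => MeasurableSet.iUnion fun _ =>
      hwEv_measurable _ _ _ _ _ _ _ _
  · intro j l hjl ω x
    simp only [Set.mem_iUnion]
    refine exists_congr fun g => exists_congr fun b => ?_
    have hne : a j ≠ a l := fun h => hjl.ne (a.injective h)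
    simp only [hwEv, Set.mem_ofPred_eq,
      hwCorr_update a p0 (hwExt p0 j g) l (hwExt_of_le p0 j g l hjl.le),
      Function.update_of_ne hne]
  · intro j ω
    have e : {x | Function.update ω (a j) x ∈
        ⋃ g : Fin (j : ℕ) → Fin k, ⋃ b : Fin k, hwEv a p0 sz sh ε j (hwExt p0 j g) b}
        = ⋃ g : Fin (j : ℕ) → Fin k, ⋃ b : Fin k,
          {x | Function.update ω (a j) x ∈ hwEv a p0 sz sh ε j (hwExt p0 j g) b} := by
      ext x; simp
    rw [e]
    refine (measure_iUnion_fintype_le _ _).trans ?_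
    calc _ ≤ ∑ g : Fin (j : ℕ) → Fin k, ∑ b : Fin k, ENNReal.ofReal (2 * √(ε * n) / σ) := by
          refine Finset.sum_le_sum fun g _ => (measure_iUnion_fintype_le _ _).trans ?_
          exact Finset.sum_le_sum fun b _ =>
            hwEv_prob hd Y σ hσ a p0 sz sh ε hε j _ (hwExt_of_le p0 j g j le_rfl) b ω
      _ = _ := by
          simp only [Finset.sum_const, Finset.card_univ, Fintype.card_fin, nsmul_eq_mul,
            Fintype.card_fun, pow_succ, mul_assoc]
          push_cast
          ring

/-- the full covering event -/
def hwCover (n k d m M : ℕ) (δ ε : ℝ) : Set (Fin n → Fin d → ℝ) :=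
  ⋃ a : Fin m ↪ Fin n, ⋃ p0 : Fin m → Fin k, ⋃ N : Fin k → Fin (n + 1),
    ⋃ z : Fin k → Fin d → Finset.Icc (-(M : ℤ)) (M : ℤ),
      hwData a p0 (fun i => ((N i : ℕ) : ℝ)) (fun i c => δ * ((z i c : ℤ) : ℝ)) ε

theorem hwCover_measurable (n k d m M : ℕ) (δ ε : ℝ) :
    MeasurableSet (hwCover n k d m M δ ε) :=
  MeasurableSet.iUnion fun _ => MeasurableSet.iUnion fun _ => MeasurableSet.iUnion fun _ =>
    MeasurableSet.iUnion fun _ => hwData_measurable _ _ _ _ _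

theorem hwCover_prob (n k d m M : ℕ) (hd : 0 < d) (Y : Fin n → Fin d → ℝ) (σ : ℝ) (hσ : 0 < σ)
    (δ ε : ℝ) (hε : 0 ≤ ε) :
    perturbedPoints n d Y σ (hwCover n k d m M δ ε)
      ≤ (n : ENNReal) ^ m * ((k : ENNReal) ^ m * (((n : ENNReal) + 1) ^ k *
        ((2 * (M : ENNReal) + 1) ^ (k * d) *
        ∏ j : Fin m, ((k : ENNReal) ^ ((j : ℕ) + 1) * ENNReal.ofReal (2 * √(ε * n) / σ))))) := by
  unfold hwCover
  set q := ∏ j : Fin m, ((k : ENNReal) ^ ((j : ℕ) + 1) * ENNReal.ofReal (2 * √(ε * n) / σ))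
  refine (measure_iUnion_fintype_le _ _).trans ?_
  calc _ ≤ ∑ a : Fin m ↪ Fin n, ∑ p0 : Fin m → Fin k, ∑ N : Fin k → Fin (n + 1),
        ∑ z : Fin k → Fin d → Finset.Icc (-(M : ℤ)) (M : ℤ), q := by
        refine Finset.sum_le_sum fun a _ => (measure_iUnion_fintype_le _ _).trans ?_
        refine Finset.sum_le_sum fun p0 _ => (measure_iUnion_fintype_le _ _).trans ?_
        refine Finset.sum_le_sum fun N _ => (measure_iUnion_fintype_le _ _).trans ?_
        exact Finset.sum_le_sum fun z _ => hwData_prob hd Y σ hσ a p0 _ _ ε hε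
    _ ≤ _ := by
        have hcard : Fintype.card (Finset.Icc (-(M : ℤ)) (M : ℤ)) = 2 * M + 1 := by
          rw [Fintype.card_coe, Int.card_Icc]; omega
        have hemb : ((Fintype.card (Fin m ↪ Fin n) : ℕ) : ENNReal) ≤ (n : ENNReal) ^ m := by
          rw [Fintype.card_embedding_eq]
          simp only [Fintype.card_fin]
          exact_mod_cast Nat.descFactorial_le_pow n m
        simp only [Finset.sum_const, Finset.card_univ, nsmul_eq_mul, Fintype.card_fun, hcard]
        simp only [Fintype.card_fin, ← pow_mul]
        push_cast
        rw [mul_comm d k]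
        gcongr

/-! ### Combinatorics of improving sequences -/

theorem hw_strict {n k : ℕ} (P : (Fin n → Fin k) → ℝ) (seq : ℕ → Fin n → Fin k) (L : ℕ)
    (h : ∀ t < L, P (seq (t + 1)) < P (seq t)) :
    ∀ s t, s < t → t ≤ L → P (seq t) < P (seq s) := by
  intro s t hst
  induction t, hst using Nat.le_induction with
  | base => intro hL; exact h s hL
  | succ t hst ih => intro hL; exact (h t hL).trans (ih (by omega))

theorem hw_len_le {n k : ℕ} (P : (Fin n → Fin k) → ℝ) (seq : ℕ → Fin n → Fin k) (L : ℕ)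
    (h : ∀ t < L, P (seq (t + 1)) < P (seq t)) : L ≤ k ^ n := by
  have hs := hw_strict P seq L h
  have hinj : Function.Injective (fun t : Fin (L + 1) => seq t) := by
    intro s t hst
    by_contra hne
    rcases lt_or_gt_of_ne (fun h => hne (Fin.ext h) : (s : ℕ) ≠ t) with h' | h'
    · have := hs s t h' (by omega)
      simp only at hst
      rw [hst] at this; exact lt_irrefl _ this
    · have := hs t s h' (by omega)
      simp only at hst
      rw [hst] at this; exact lt_irrefl _ this
  have := Fintype.card_le_of_injective _ hinj
  simp at this
  omega

theorem hw_first {n k m : ℕ} (hk : 0 < k) (P : (Fin n → Fin k) → ℝ) (seq : ℕ → Fin n → Fin k)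
    (hmv : ∀ t < k ^ m, SingleMove (seq t) (seq (t + 1)))
    (hP : ∀ t < k ^ m, P (seq (t + 1)) < P (seq t)) :
    ∃ (a : Fin m ↪ Fin n) (τ : Fin m → ℕ), (∀ j, τ j < k ^ m) ∧
      (∀ j, seq (τ j + 1) (a j) ≠ seq (τ j) (a j) ∧
        ∀ p, p ≠ a j → seq (τ j + 1) p = seq (τ j) p) ∧
      (∀ j p, (∀ l < j, a l ≠ p) → seq (τ j) p = seq 0 p) := by
  classical
  have hs := hw_strict P seq _ hP
  have hW : 0 < k ^ m := by positivity
  set W := k ^ m with hWdef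
  have hn : Nonempty (Fin n) := ⟨(hmv 0 hW).choose⟩
  have hmv' : ∀ t, ∃ j, t < W → seq (t + 1) j ≠ seq t j ∧
      ∀ p, p ≠ j → seq (t + 1) p = seq t p := by
    intro t
    by_cases h : t < W
    · obtain ⟨j, hj⟩ := hmv t h
      exact ⟨j, fun _ => hj⟩
    · exact ⟨hn.some, fun h' => absurd h' h⟩
  choose mv hmv2 using hmv'
  set V : Finset (Fin n) := (Finset.range W).image mv with hV
  set F : Finset ℕ := (Finset.range W).filter fun t => ∀ s < t, mv s ≠ mv t with hF
  -- a point not moved before `t` keeps its label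
  have hstay : ∀ p t, t ≤ W → (∀ s < t, mv s ≠ p) → seq t p = seq 0 p := by
    intro p t
    induction t with
    | zero => intros; rfl
    | succ t ih =>
      intro ht hne
      rw [(hmv2 t (by omega)).2 p (hne t (by omega)).symm]
      exact ih (by omega) (fun s hs => hne s (by omega))
  -- first move times
  have hfirst : ∀ s < W, ∃ s' ∈ F, s' ≤ s ∧ mv s' = mv s := by
    intro s hs
    have hex : ∃ r, mv r = mv s := ⟨s, rfl⟩
    refine ⟨Nat.find hex, ?_, Nat.find_min' hex rfl, Nat.find_spec hex⟩
    rw [hF, Finset.mem_filter, Finset.mem_range]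
    refine ⟨lt_of_le_of_lt (Nat.find_min' hex rfl) hs, fun r hr => ?_⟩
    rw [Nat.find_spec hex]
    exact Nat.find_min hex hr
  have hVF : V.card ≤ F.card := by
    refine (Finset.card_le_card ?_).trans (Finset.card_image_le (s := F) (f := mv))
    intro v hv
    rw [hV, Finset.mem_image] at hv
    obtain ⟨s, hs, rfl⟩ := hv
    obtain ⟨s', h1, _, h3⟩ := hfirst s (by simpa using hs)
    rw [← h3]; exact Finset.mem_image_of_mem _ h1
  have hmV : m ≤ V.card := by
    by_contra hlt
    have hinj : Function.Injective (fun (t : Fin (W + 1)) (v : V) => seq t v) := by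
      have haux : ∀ s t : ℕ, s ≤ W → t ≤ W → (fun v : V => seq s v) = (fun v : V => seq t v) →
          seq s = seq t := by
        intro s t hs ht h
        funext p
        by_cases hp : p ∈ V
        · exact congrFun h ⟨p, hp⟩
        · have hp' : ∀ r < W, mv r ≠ p := by
            intro r hr h; apply hp; rw [hV, Finset.mem_image]; exact ⟨r, by simpa using hr, h⟩
          rw [hstay p s hs (fun r hr => hp' r (by omega)),
            hstay p t ht (fun r hr => hp' r (by omega))]
      intro s t hst
      have h1 := haux s t (by omega) (by omega) hst
      by_contra hne
      rcases lt_or_gt_of_ne (fun h => hne (Fin.ext h) : (s : ℕ) ≠ t) with h' | h'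
      · have := hs s t h' (by omega)
        rw [h1] at this; exact lt_irrefl _ this
      · have := hs t s h' (by omega)
        rw [h1] at this; exact lt_irrefl _ this
    have := Fintype.card_le_of_injective _ hinj
    simp only [Fintype.card_fin, Fintype.card_fun, Fintype.card_coe] at this
    have h2 : k ^ V.card ≤ k ^ m := Nat.pow_le_pow_right hk (by omega)
    omega
  have hFmem : ∀ t ∈ F, t < W ∧ ∀ s < t, mv s ≠ mv t := by
    intro t ht
    rw [hF, Finset.mem_filter, Finset.mem_range] at ht
    exact ht
  have hmF : m ≤ F.card := hmV.trans hVF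
  set τ0 := F.orderEmbOfFin rfl with hτ0
  have hτF : ∀ i, τ0 i ∈ F := fun i => Finset.orderEmbOfFin_mem F rfl i
  have hτF' : ∀ i, τ0 i < W ∧ ∀ s < τ0 i, mv s ≠ mv (τ0 i) := by
    intro i
    exact hFmem _ (hτF i)
  have hainj : Function.Injective (fun i => mv (τ0 i)) := by
    intro i i' h
    simp only at h
    rcases lt_trichotomy (τ0 i) (τ0 i') with h' | h' | h'
    · exact absurd h ((hτF' i').2 _ h')
    · exact τ0.injective h'
    · exact absurd h.symm ((hτF' i).2 _ h')
  refine ⟨⟨fun l => mv (τ0 (Fin.castLE hmF l)), fun l l' h => ?_⟩,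
    fun l => τ0 (Fin.castLE hmF l), fun j => (hτF' _).1, fun j => hmv2 _ (hτF' _).1, ?_⟩
  · exact Fin.castLE_injective hmF (hainj h)
  · intro j p hp
    refine hstay p _ (hτF' _).1.le ?_
    rintro s hs rfl
    obtain ⟨s', h1, h2, h3⟩ := hfirst s (hs.trans (hτF' _).1)
    have : s' ∈ Set.range τ0 := by
      rw [hτ0, Finset.range_orderEmbOfFin]; exact h1
    obtain ⟨i, rfl⟩ := this
    have hi : i < Fin.castLE hmF j := τ0.lt_iff_lt.1 (lt_of_le_of_lt h2 hs)
    have him : (i : ℕ) < j := by simpa [Fin.lt_def] using hi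
    refine hp ⟨i, by omega⟩ him ?_
    exact h3

theorem hwM_int {n k : ℕ} (cl : Fin n → Fin k) (i : Fin k) : hwM cl i = 0 ∨ 1 ≤ hwM cl i := by
  rw [hwM_eq]
  rcases Nat.eq_zero_or_pos (clusterIdx cl i).card with h | h
  · left; exact_mod_cast h
  · right; exact_mod_cast h

theorem hwM_int' {n k : ℕ} (cl : Fin n → Fin k) (j : Fin n) :
    hwM cl (cl j) - 1 = 0 ∨ 1 ≤ hwM cl (cl j) - 1 := by
  have h1 := hwM_one_le cl j
  rw [hwM_eq] at *
  have h1' : 1 ≤ (clusterIdx cl (cl j)).card := by exact_mod_cast h1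
  rcases h1'.eq_or_lt with h | h
  · left; rw [← h]; simp
  · right
    have : (2 : ℝ) ≤ (clusterIdx cl (cl j)).card := by exact_mod_cast h
    linarith

theorem hw_window {n k d m M : ℕ} (hk : 0 < k) (ω : Fin n → Fin d → ℝ) (R δ ε : ℝ)
    (hR : ∀ j c, |ω j c| ≤ R) (hR0 : 0 ≤ R) (hδ0 : 0 < δ) (hδR : δ ≤ R)
    (hδε : 12 * d * δ * R ≤ ε)
    (hM : n * R / δ ≤ M) (seq : ℕ → Fin n → Fin k)
    (hmv : ∀ t < k ^ m, SingleMove (seq t) (seq (t + 1)))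
    (hP : ∀ t < k ^ m, hwPot ω (seq (t + 1)) < hwPot ω (seq t))
    (hdrop : hwPot ω (seq 0) - hwPot ω (seq (k ^ m)) ≤ ε) :
    ω ∈ hwCover n k d m M δ ε := by
  obtain ⟨a, τ, hτ, hmove, hstay⟩ := hw_first hk (hwPot ω) seq hmv hP
  have hs := hw_strict (hwPot ω) seq _ hP
  have hle : ∀ s t, s ≤ t → t ≤ k ^ m → hwPot ω (seq t) ≤ hwPot ω (seq s) := by
    intro s t hst ht
    rcases hst.eq_or_lt with h | h
    · rw [h]
    · exact (hs s t h ht).le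
  have hSb : ∀ i c, |hwS (fun p => ω p c) (seq 0) i / δ| ≤ M := by
    intro i c
    rw [abs_div, abs_of_pos hδ0]
    refine le_trans ?_ hM
    gcongr
    refine (hwS_abs _ _ _ R fun j => hR j c).trans ?_
    gcongr
    exact hwM_le _ _
  have hz : ∀ i c, ⌊hwS (fun p => ω p c) (seq 0) i / δ⌋ ∈ Finset.Icc (-(M : ℤ)) (M : ℤ) := by
    intro i c
    have := abs_le.1 (hSb i c)
    rw [Finset.mem_Icc]
    constructor
    · apply Int.le_floor.2; push_cast; exact this.1
    · have h2 := (Int.floor_le (hwS (fun p => ω p c) (seq 0) i / δ)).trans this.2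
      exact_mod_cast h2
  have hcard : ∀ i, (clusterIdx (seq 0) i).card < n + 1 := by
    intro i
    have := Finset.card_le_univ (clusterIdx (seq 0) i)
    simp at this; omega
  unfold hwCover
  simp only [Set.mem_iUnion]
  refine ⟨a, fun l => seq 0 (a l), fun i => ⟨_, hcard i⟩, fun i c => ⟨_, hz i c⟩, ?_⟩
  unfold hwData
  simp only [Set.mem_iInter, Set.mem_iUnion]
  intro j
  have hj0 : seq (τ j) (a j) = seq 0 (a j) := hstay j (a j) fun l hl h => hl.ne (a.injective h)
  refine ⟨fun l => seq (τ j) (a ⟨l, by omega⟩), seq (τ j + 1) (a j), ?_⟩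
  have hext : hwExt (fun l => seq 0 (a l)) j (fun l => seq (τ j) (a ⟨l, by omega⟩))
      = fun l => seq (τ j) (a l) := by
    funext l
    unfold hwExt
    split_ifs with h
    · rfl
    · exact (hstay j (a l) fun l' hl' h' => h (by rw [a.injective h'] at hl'; exact hl')).symm
  rw [hext]
  have hcorr : ∀ (f : Fin n → ℝ) i, hwS f (seq (τ j)) i = hwS f (seq 0) i +
      hwCorr (fun l => seq 0 (a l)) (fun l => seq (τ j) (a l)) (fun l => f (a l)) i := by
    intro f i
    exact hwS_corr f (seq 0) (seq (τ j)) a (fun p hp => hstay j p fun l _ => hp l) i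
  have hcorrM : ∀ i, ((clusterIdx (seq 0) i).card : ℝ) +
      hwCorr (fun l => seq 0 (a l)) (fun l => seq (τ j) (a l)) (fun _ => 1) i
      = hwM (seq (τ j)) i := by
    intro i
    rw [← hwM_eq]
    exact (hcorr (fun _ => 1) i).symm
  unfold hwEv
  simp only [Set.mem_ofPred_eq, hcorrM]
  obtain ⟨hm1, hm2⟩ := hmove j
  rw [← hj0]
  refine ⟨⟨hwM_one_le _ _, hwM_nonneg _ _, hwM_add_one_le _ _ (a j) hm1.symm⟩, ?_⟩
  have hgain := hwPot_gain ω (seq (τ j)) (seq (τ j + 1)) (a j) hm1 hm2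
  have hg1 : 0 ≤ hwPot ω (seq (τ j)) - hwPot ω (seq (τ j + 1)) := by
    linarith [hP (τ j) (hτ j)]
  have hg2 : hwPot ω (seq (τ j)) - hwPot ω (seq (τ j + 1)) ≤ ε := by
    linarith [hle 0 (τ j) (Nat.zero_le _) (hτ j).le, hle (τ j + 1) (k ^ m) (hτ j) le_rfl]
  have herr : ∀ i c, |hwS (fun p => ω p c) (seq (τ j)) i -
      (δ * (⌊hwS (fun p => ω p c) (seq 0) i / δ⌋ : ℝ) +
      hwCorr (fun l => seq 0 (a l)) (fun l => seq (τ j) (a l)) (fun l => ω (a l) c) i)| ≤ δ := by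
    intro i c
    rw [hcorr]
    set u := hwS (fun p => ω p c) (seq 0) i
    have e1 := Int.floor_le (u / δ)
    have e2 := Int.lt_floor_add_one (u / δ)
    rw [le_div_iff₀ hδ0] at e1
    rw [div_lt_iff₀ hδ0] at e2
    rw [abs_le]
    constructor <;> linarith
  have hpert := hwG_perturb (hwM (seq (τ j)) (seq (τ j) (a j))) (hwM (seq (τ j)) (seq (τ j + 1) (a j)))
    R δ (hwM_int' _ _) (hwM_one_le _ _) (hwM_int _ _) hR0 hδR _ _ _ _ (ω (a j)) (hR (a j))
    (fun c => hwS_abs (fun p => ω p c) (seq (τ j)) (seq (τ j) (a j)) R fun p => hR p c)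
    (fun c => hwS_sub_abs (fun p => ω p c) (seq (τ j)) (a j) R fun p => hR p c)
    (fun c => hwS_abs (fun p => ω p c) (seq (τ j)) (seq (τ j + 1) (a j)) R fun p => hR p c)
    (fun c => herr (seq (τ j) (a j)) c) (fun c => herr (seq (τ j + 1) (a j)) c)
  rw [← hgain] at hpert
  rw [abs_le] at hpert ⊢
  constructor <;> linarith [hpert.1, hpert.2]

/-! ### Assembly -/

theorem hwT_le_pow (n k d : ℕ) (ω : Fin n → Fin d → ℝ) :
    maxImprovingSeqLen n k d (fun i => toEuc (ω i)) ≤ k ^ n := by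
  refine csSup_le' ?_
  rintro L ⟨seq, h⟩
  exact hw_len_le _ seq L fun t ht => (h t ht).2

theorem hwT_one (n d : ℕ) (ω : Fin n → Fin d → ℝ) :
    maxImprovingSeqLen n 1 d (fun i => toEuc (ω i)) = 0 := by
  refine Nat.le_zero.1 (csSup_le' ?_)
  rintro L ⟨seq, h⟩
  by_contra hL
  obtain ⟨⟨j, hj, _⟩, _⟩ := h 0 (by omega)
  exact hj (Subsingleton.elim _ _)

theorem hwT_window {n k d m M : ℕ} (hk : 0 < k) (ω : Fin n → Fin d → ℝ) (R δ ε : ℝ)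
    (hR : ∀ j c, |ω j c| ≤ R) (hR0 : 0 ≤ R) (hδ0 : 0 < δ) (hδR : δ ≤ R) (hε : 0 < ε)
    (hδε : 12 * d * δ * R ≤ ε)
    (hM : n * R / δ ≤ M) (hω : ω ∉ hwCover n k d m M δ ε) :
    ((maxImprovingSeqLen n k d (fun i => toEuc (ω i)) : ℕ) : ℝ)
      ≤ (k : ℝ) ^ m * (1 + n * d * R ^ 2 / ε) := by
  have hpos : 0 ≤ (k : ℝ) ^ m * (1 + n * d * R ^ 2 / ε) := by positivity
  have hWpos : 0 < k ^ m := by positivity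
  refine (Nat.cast_le.2 (csSup_le' ?_)).trans (Nat.floor_le hpos)
  rintro L ⟨seq, h⟩
  simp only [hwPot_eq] at h
  apply Nat.le_floor
  have hind : ∀ i : ℕ, i * k ^ m ≤ L → hwPot ω (seq (i * k ^ m)) ≤ hwPot ω (seq 0) - i * ε := by
    intro i
    induction i with
    | zero => intro _; simp
    | succ i ih =>
      intro hi
      have e : (i + 1) * k ^ m = i * k ^ m + k ^ m := by ring
      rw [e] at hi
      have h1 := ih (by omega)
      by_contra hcon
      refine hω (hw_window hk ω R δ ε hR hR0 hδ0 hδR hδε hM (fun t => seq (i * k ^ m + t))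
        (fun t ht => (h (i * k ^ m + t) (by omega)).1)
        (fun t ht => (h (i * k ^ m + t) (by omega)).2) ?_)
      simp only [add_zero]
      rw [e] at hcon
      push_cast at hcon
      linarith
  have h1 := hind (L / k ^ m) (Nat.div_mul_le_self L (k ^ m))
  have h2 := hwPot_nonneg ω (seq (L / k ^ m * k ^ m))
  have h3 := hwPot_le ω (seq 0) R hR
  have h4 : ((L / k ^ m : ℕ) : ℝ) ≤ n * d * R ^ 2 / ε := by
    rw [le_div_iff₀ hε]; linarith
  have h5 : L ≤ k ^ m * (1 + L / k ^ m) := by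
    have := Nat.lt_mul_div_succ L hWpos
    rw [Nat.add_comm]; exact this.le
  calc (L : ℝ) ≤ ((k ^ m * (1 + L / k ^ m) : ℕ) : ℝ) := by exact_mod_cast h5
    _ = (k : ℝ) ^ m * (1 + ((L / k ^ m : ℕ) : ℝ)) := by push_cast; ring
    _ ≤ _ := by gcongr

theorem hw_sum_gauss (D : ℕ) : ∑ j : Fin (4 * D), ((j : ℕ) + 1) = D * (8 * D + 2) := by
  rw [Fin.sum_univ_eq_sum_range (fun j => j + 1) (4 * D)]
  have : ∀ N : ℕ, 2 * ∑ j ∈ Finset.range N, (j + 1) = N * (N + 1) := by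
    intro N
    induction N with
    | zero => simp
    | succ N ih => rw [Finset.sum_range_succ, mul_add, ih]; ring
  have h := this (4 * D)
  nlinarith

theorem hwCover_real (n k d M : ℕ) (hn : 0 < n) (hk : 0 < k) (hd : 0 < d)
    (Y : Fin n → Fin d → ℝ) (σ : ℝ) (hσ : 0 < σ)
    (R ε : ℝ) (hε : 0 < ε) (hε1 : ε ≤ 1) (hR : 1 ≤ R)
    (hM : (M : ℝ) ≤ n * R / (ε / (12 * d * R)) + 1) :
    perturbedPoints n d Y σ (hwCover n k d (4 * (k * d)) M (ε / (12 * d * R)) ε)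
      ≤ ENNReal.ofReal ((1920 * n ^ 7 * (n : ℝ) ^ (1 / (d : ℝ)) * d * R ^ 2 * k ^ (8 * (k * d) + 6)
        / σ ^ 4 * ε) ^ (k * d)) := by
  refine (hwCover_prob n k d _ M hd Y σ hσ _ ε hε.le).trans ?_
  set q := 2 * √(ε * n) / σ with hq
  have hq0 : 0 ≤ q := by positivity
  have hconv : (n : ENNReal) ^ (4 * (k * d)) * ((k : ENNReal) ^ (4 * (k * d)) *
      (((n : ENNReal) + 1) ^ k * ((2 * (M : ENNReal) + 1) ^ (k * d) *
        ∏ j : Fin (4 * (k * d)), ((k : ENNReal) ^ ((j : ℕ) + 1) * ENNReal.ofReal q))))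
      = ENNReal.ofReal ((n : ℝ) ^ (4 * (k * d)) * ((k : ℝ) ^ (4 * (k * d)) *
      (((n : ℝ) + 1) ^ k * ((2 * (M : ℝ) + 1) ^ (k * d) *
        ∏ j : Fin (4 * (k * d)), ((k : ℝ) ^ ((j : ℕ) + 1) * q))))) := by
    rw [ENNReal.ofReal_mul (by positivity), ENNReal.ofReal_mul (by positivity),
      ENNReal.ofReal_mul (by positivity), ENNReal.ofReal_mul (by positivity),
      ENNReal.ofReal_prod_of_nonneg (fun j _ => by positivity)]
    congr 1
    · rw [ENNReal.ofReal_pow (by positivity), ENNReal.ofReal_natCast]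
    congr 1
    · rw [ENNReal.ofReal_pow (by positivity), ENNReal.ofReal_natCast]
    congr 1
    · rw [ENNReal.ofReal_pow (by positivity), ENNReal.ofReal_add (by positivity) (by positivity),
        ENNReal.ofReal_natCast, ENNReal.ofReal_one]
    congr 1
    · rw [ENNReal.ofReal_pow (by positivity), ENNReal.ofReal_add (by positivity) (by positivity),
        ENNReal.ofReal_mul (by positivity),
        ENNReal.ofReal_natCast, ENNReal.ofReal_one, ENNReal.ofReal_ofNat]
    refine Finset.prod_congr rfl fun j _ => ?_
    rw [ENNReal.ofReal_mul (by positivity), ENNReal.ofReal_pow (by positivity),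
      ENNReal.ofReal_natCast]
  rw [hconv]
  apply ENNReal.ofReal_le_ofReal
  have hn1 : (1 : ℝ) ≤ n := by exact_mod_cast hn
  have hd1 : (1 : ℝ) ≤ d := by exact_mod_cast hd
  set ρ := (n : ℝ) ^ (1 / (d : ℝ)) with hρ
  have hρ0 : 0 ≤ ρ := by positivity
  have hρd : ρ ^ d = n := by
    rw [hρ, one_div]; exact Real.rpow_inv_natCast_pow (by positivity) hd.ne'
  have h1 : ((n : ℝ) + 1) ^ k ≤ (2 * ρ) ^ (k * d) := by
    rw [mul_comm k d, pow_mul]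
    gcongr
    rw [mul_pow, hρd]
    have : (2 : ℝ) ≤ 2 ^ d := by
      calc (2 : ℝ) = 2 ^ 1 := by norm_num
        _ ≤ 2 ^ d := pow_le_pow_right₀ (by norm_num) hd
    nlinarith
  have h2 : 2 * (M : ℝ) + 1 ≤ 60 * n * d * R ^ 2 / ε := by
    have e : n * R / (ε / (12 * d * R)) = 12 * n * d * R ^ 2 / ε := by field_simp
    have e2 : (60 : ℝ) * n * d * R ^ 2 / ε = 5 * (12 * n * d * R ^ 2 / ε) := by ring
    have e3 : 1 ≤ 12 * n * d * R ^ 2 / ε := by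
      rw [le_div_iff₀ hε]
      have : 1 ≤ (n : ℝ) * d := one_le_mul_of_one_le_of_one_le hn1 hd1
      have : 1 ≤ (n : ℝ) * d * R ^ 2 := one_le_mul_of_one_le_of_one_le this (one_le_pow₀ hR)
      linarith
    rw [e] at hM
    rw [e2]; linarith
  have h3 : ∏ j : Fin (4 * (k * d)), ((k : ℝ) ^ ((j : ℕ) + 1) * q)
      = ((k : ℝ) ^ (8 * (k * d) + 2)) ^ (k * d) * (q ^ 4) ^ (k * d) := by
    rw [Finset.prod_mul_distrib, Finset.prod_pow_eq_pow_sum, hw_sum_gauss, Finset.prod_const,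
      Finset.card_univ, Fintype.card_fin, pow_mul q, mul_comm (k * d), pow_mul]
  have h4 : q ^ 4 = 16 * ε ^ 2 * n ^ 2 / σ ^ 4 := by
    rw [hq, div_pow, mul_pow, show √(ε * n) ^ 4 = (√(ε * n) ^ 2) ^ 2 by ring,
      Real.sq_sqrt (by positivity)]
    ring
  rw [h3, h4, pow_mul (n : ℝ), pow_mul (k : ℝ) 4]
  calc _ ≤ ((n : ℝ) ^ 4) ^ (k * d) * (((k : ℝ) ^ 4) ^ (k * d) * ((2 * ρ) ^ (k * d) *
        ((60 * n * d * R ^ 2 / ε) ^ (k * d) *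
        (((k : ℝ) ^ (8 * (k * d) + 2)) ^ (k * d) * (16 * ε ^ 2 * n ^ 2 / σ ^ 4) ^ (k * d))))) := by
        gcongr
    _ = _ := by
        rw [← mul_pow, ← mul_pow, ← mul_pow, ← mul_pow, ← mul_pow]
        congr 1
        field_simp
        ring

instance hw_prob (n d : ℕ) (Y : Fin n → Fin d → ℝ) (σ : ℝ) :
    IsProbabilityMeasure (perturbedPoints n d Y σ) := by
  unfold perturbedPoints; infer_instance

/-- the event that some coordinate is large -/
def hwBad (n d : ℕ) (R : ℝ) : Set (Fin n → Fin d → ℝ) :=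
  ⋃ j : Fin n, ⋃ c : Fin d, {ω | R < |ω j c|}

theorem hwBad_measurable (n d : ℕ) (R : ℝ) : MeasurableSet (hwBad n d R) :=
  MeasurableSet.iUnion fun _ => MeasurableSet.iUnion fun _ =>
    measurableSet_lt measurable_const (by fun_prop)

theorem hwBad_prob (n d : ℕ) (Y : Fin n → Fin d → ℝ) (hY : ∀ i j, Y i j ∈ Set.Icc (0 : ℝ) 1)
    (σ : ℝ) (hσ : 0 < σ) (hσ1 : σ ≤ 1) (s : ℝ) (hs : 0 ≤ s) :
    perturbedPoints n d Y σ (hwBad n d (1 + s))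
      ≤ ENNReal.ofReal (n * d * (2 * Real.exp (-s ^ 2 / 2))) := by
  unfold hwBad
  refine (measure_iUnion_fintype_le _ _).trans ?_
  calc _ ≤ ∑ j : Fin n, ∑ c : Fin d, ENNReal.ofReal (2 * Real.exp (-s ^ 2 / 2)) := by
        refine Finset.sum_le_sum fun j _ => (measure_iUnion_fintype_le _ _).trans ?_
        refine Finset.sum_le_sum fun c _ => ?_
        unfold perturbedPoints
        refine hw_one _ j _ (measurableSet_lt measurable_const (by fun_prop)) _ fun ω => ?_
        simp only [Set.mem_ofPred_eq, Function.update_self]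
        refine hw_one _ c _ (measurableSet_lt measurable_const (by fun_prop)) _ fun v => ?_
        simp only [Set.mem_ofPred_eq, Function.update_self]
        exact hw_tail _ σ hσ hσ1 (hY j c) s hs
    _ = _ := by
        simp only [Finset.sum_const, Finset.card_univ, Fintype.card_fin, nsmul_eq_mul]
        have he : 0 ≤ 2 * Real.exp (-s ^ 2 / 2) := by positivity
        generalize 2 * Real.exp (-s ^ 2 / 2) = e at he
        rw [ENNReal.ofReal_mul (by positivity), ENNReal.ofReal_mul (by positivity),
          ENNReal.ofReal_natCast, ENNReal.ofReal_natCast, mul_assoc]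

/-- abstract summation over dyadic scales -/
theorem hw_dyadic {Ω : Type*} [MeasurableSpace Ω] (μ : Measure Ω) [IsProbabilityMeasure μ]
    (T : Ω → ℕ) (B : Set Ω) (hB : MeasurableSet B) (E : ℕ → Set Ω)
    (hE : ∀ l, MeasurableSet (E l)) (K : ℕ) (W Z : ℝ) (hW : 0 ≤ W) (hZ : 0 < Z)
    (hTK : ∀ ω, T ω ≤ K) (hKB : (K : ENNReal) * μ B ≤ 1)
    (hT : ∀ ω, ω ∉ B → ∀ l, ω ∉ E l → (T ω : ℝ) ≤ W + Z * 2 ^ l)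
    (hPE : ∀ l, μ (E l) ≤ ENNReal.ofReal ((1 / 4) ^ l)) :
    ∫⁻ ω, (T ω : ENNReal) ∂μ ≤ ENNReal.ofReal (1 + W + 5 * Z) := by
  have hpt : ∀ ω, (T ω : ENNReal) ≤ B.indicator (fun _ => (K : ENNReal)) ω +
      (ENNReal.ofReal (W + Z) + ∑' l, (E l).indicator (fun _ => ENNReal.ofReal (Z * 2 ^ (l + 1))) ω) := by
    intro ω
    by_cases hB : ω ∈ B
    · rw [Set.indicator_of_mem hB]
      exact le_add_right (by exact_mod_cast hTK ω)
    · refine le_add_left ?_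
      have hcast : (T ω : ENNReal) = ENNReal.ofReal (T ω : ℝ) := by simp
      have hmemle : ∀ l, ω ∈ E l → ENNReal.ofReal (Z * 2 ^ (l + 1)) ≤
          ∑' l, (E l).indicator (fun _ => ENNReal.ofReal (Z * 2 ^ (l + 1))) ω := by
        intro l hl
        refine le_trans ?_ (ENNReal.le_tsum l)
        rw [Set.indicator_of_mem hl]
      classical
      by_cases hex : ∃ l, ω ∉ E l
      · have hsp := Nat.find_spec hex
        rcases hl : Nat.find hex with _ | l
        · rw [hl] at hsp
          refine le_add_right ?_
          rw [hcast]
          apply ENNReal.ofReal_le_ofReal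
          simpa using hT ω hB 0 hsp
        · rw [hl] at hsp
          have hin : ω ∈ E l := by
            by_contra hc
            have := Nat.find_min' hex hc
            omega
          calc (T ω : ENNReal) ≤ ENNReal.ofReal ((W + Z) + Z * 2 ^ (l + 1)) := by
                rw [hcast]
                apply ENNReal.ofReal_le_ofReal
                linarith [hT ω hB _ hsp]
            _ = ENNReal.ofReal (W + Z) + ENNReal.ofReal (Z * 2 ^ (l + 1)) :=
                ENNReal.ofReal_add (by positivity) (by positivity)
            _ ≤ _ := by gcongr; exact hmemle l hin
      · push Not at hex
        refine le_add_left ?_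
        obtain ⟨l, hl⟩ := pow_unbounded_of_one_lt ((T ω : ℝ) / Z) (by norm_num : (1 : ℝ) < 2)
        refine le_trans ?_ (hmemle l (hex l))
        rw [hcast]
        apply ENNReal.ofReal_le_ofReal
        rw [div_lt_iff₀ hZ] at hl
        have : (0 : ℝ) < 2 ^ l := by positivity
        rw [pow_succ]
        nlinarith
  refine (lintegral_mono hpt).trans ?_
  rw [lintegral_add_left (measurable_const.indicator hB), lintegral_indicator_const hB,
    lintegral_add_left measurable_const, lintegral_const, measure_univ, mul_one,
    lintegral_tsum (fun l => (measurable_const.indicator (hE l)).aemeasurable)]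
  have hts : ∑' l, ∫⁻ ω, (E l).indicator (fun _ => ENNReal.ofReal (Z * 2 ^ (l + 1))) ω ∂μ
      ≤ ENNReal.ofReal (4 * Z) := by
    have hsum : HasSum (fun l : ℕ => 2 * Z * (1 / 2 : ℝ) ^ l) (2 * Z * 2) :=
      hasSum_geometric_two.mul_left _
    calc _ ≤ ∑' l : ℕ, ENNReal.ofReal (2 * Z * (1 / 2 : ℝ) ^ l) := by
          refine ENNReal.tsum_le_tsum fun l => ?_
          rw [lintegral_indicator_const (hE l)]
          calc _ ≤ ENNReal.ofReal (Z * 2 ^ (l + 1)) * ENNReal.ofReal ((1 / 4) ^ l) := by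
                gcongr; exact hPE l
            _ = _ := by
                rw [← ENNReal.ofReal_mul (by positivity)]
                congr 1
                rw [show (1 / 4 : ℝ) = (1 / 2) * (1 / 2) by norm_num, mul_pow, pow_succ]
                have : (2 : ℝ) ^ l * (1 / 2) ^ l = 1 := by rw [← mul_pow]; norm_num
                linear_combination (2 * Z * (1 / 2 : ℝ) ^ l) * this
      _ = ENNReal.ofReal (2 * Z * 2) := by
          rw [← ENNReal.ofReal_tsum_of_nonneg (fun l => by positivity) hsum.summable, hsum.tsum_eq]
      _ = _ := by congr 1; ring
  calc _ ≤ (1 : ENNReal) + (ENNReal.ofReal (W + Z) + ENNReal.ofReal (4 * Z)) := by gcongr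
    _ = _ := by
        rw [← ENNReal.ofReal_add (by positivity) (by positivity), ← ENNReal.ofReal_one,
          ← ENNReal.ofReal_add (by positivity) (by positivity)]
        congr 1; ring

end

theorem hw_fail (n k d : ℕ) (hn : 0 < n) (hk : 2 ≤ k) (hd : 0 < d) (L : ℝ)
    (hL : L = Real.log ((n : ℝ) * k * d)) (s : ℝ) (hs : s ^ 2 = 4 * (n * L)) :
    (k : ℝ) ^ n * (n * d * (2 * Real.exp (-s ^ 2 / 2))) ≤ 1 := by
  have hn1 : (1 : ℝ) ≤ n := by exact_mod_cast hn
  have hd1 : (1 : ℝ) ≤ d := by exact_mod_cast hd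
  have hk2 : (2 : ℝ) ≤ k := by exact_mod_cast hk
  have hnd : 1 ≤ (n : ℝ) * d := one_le_mul_of_one_le_of_one_le hn1 hd1
  set x := (n : ℝ) * k * d with hx
  have hx1 : (k : ℝ) ≤ x := by rw [hx]; nlinarith
  have hx2 : 2 * ((n : ℝ) * d) ≤ x := by rw [hx]; nlinarith
  have hx0 : 0 < x := by linarith
  have he : Real.exp (-s ^ 2 / 2) = (x ^ (2 * n))⁻¹ := by
    rw [show -s ^ 2 / 2 = -(((2 * n : ℕ) : ℝ) * L) by push_cast; linarith, Real.exp_neg,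
      Real.exp_nat_mul, hL, Real.exp_log hx0]
  rw [he, show (k : ℝ) ^ n * (n * d * (2 * (x ^ (2 * n))⁻¹))
    = ((k : ℝ) ^ n * (2 * ((n : ℝ) * d))) / x ^ (2 * n) by ring, div_le_one (by positivity)]
  calc (k : ℝ) ^ n * (2 * ((n : ℝ) * d)) ≤ x ^ n * x ^ 1 := by
        rw [pow_one]; gcongr
    _ ≤ x ^ n * x ^ n := by
        gcongr
        · linarith
        · exact hn
    _ = x ^ (2 * n) := by rw [← pow_add]; congr 1; ring

theorem hw_final_bound (n k d : ℕ) (hk : 2 ≤ k) (hd : 0 < d) (hn : 4 * k * d ≤ n)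
    (L : ℝ) (hL : L = Real.log ((n : ℝ) * k * d)) (σ : ℝ) (hσ : 0 < σ)
    (R Z A : ℝ) (hR : R = 1 + 2 * √(n * L))
    (hA : A = 1920 * n ^ 7 * (n : ℝ) ^ (1 / (d : ℝ)) * d * R ^ 2 * k ^ (8 * (k * d) + 6) / σ ^ 4)
    (hZ : Z = (k : ℝ) ^ (4 * (k * d)) * (n * d * R ^ 2) * A) :
    7 * Z ≤ 2000000 * (k : ℝ) ^ (12 * k * d + 5) * (d : ℝ) ^ 12
                    * (n : ℝ) ^ ((12.5 : ℝ) + 1 / (d : ℝ))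
                    * Real.log ((n : ℝ) * k * d) ^ ((4.5 : ℝ)) / σ ^ 4 := by
  have hkn : k ≤ n := by nlinarith
  have hn8 : 8 ≤ n := by nlinarith
  have hn1 : (1 : ℝ) ≤ n := by exact_mod_cast (by omega : 1 ≤ n)
  have hd1 : (1 : ℝ) ≤ d := by exact_mod_cast hd
  have hk2 : (2 : ℝ) ≤ k := by exact_mod_cast hk
  have hkn' : (k : ℝ) ≤ n := by exact_mod_cast hkn
  have hL1 : 1 ≤ L := by
    rw [hL, Real.le_log_iff_exp_le (by positivity)]
    have h1 : (8 : ℝ) ≤ n := by exact_mod_cast hn8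
    have h2 : (8 : ℝ) ≤ n * k * d := by
      have : 1 ≤ (k : ℝ) * d := by nlinarith
      nlinarith
    linarith [Real.exp_one_lt_d9]
  rw [← hL]
  have hnL : 1 ≤ (n : ℝ) * L := one_le_mul_of_one_le_of_one_le hn1 hL1
  have hsq := Real.sq_sqrt (show 0 ≤ (n : ℝ) * L by positivity)
  have hR2 : R ^ 2 ≤ 9 * (n * L) := by
    have h1 : 1 ≤ √(n * L) := Real.one_le_sqrt.2 hnL
    have h0 : 0 ≤ R := by rw [hR]; positivity
    have h2 : R ≤ 3 * √(n * L) := by rw [hR]; linarith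
    calc R ^ 2 ≤ (3 * √(n * L)) ^ 2 := by gcongr
      _ = 9 * (n * L) := by rw [mul_pow, hsq]; norm_num
  set ρ := (n : ℝ) ^ (1 / (d : ℝ)) with hρ
  have hρ0 : 0 ≤ ρ := by positivity
  have hpow : (n : ℝ) ^ ((12.5 : ℝ) + 1 / (d : ℝ)) = (n : ℝ) ^ (12.5 : ℝ) * ρ := by
    rw [Real.rpow_add (by linarith)]
  have hn11 : (n : ℝ) ^ 11 ≤ (n : ℝ) ^ (12.5 : ℝ) := by
    rw [← Real.rpow_natCast]
    exact Real.rpow_le_rpow_of_exponent_le hn1 (by norm_num)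
  have hL2 : L ^ 2 ≤ L ^ (4.5 : ℝ) := by
    rw [← Real.rpow_natCast]
    exact Real.rpow_le_rpow_of_exponent_le hL1 (by norm_num)
  have hd2 : (d : ℝ) ^ 2 ≤ (d : ℝ) ^ 12 := pow_le_pow_right₀ hd1 (by norm_num)
  have hZ' : 7 * Z = 13440 * ((k : ℝ) ^ (12 * k * d + 5) * k) * (n ^ 8 * ρ) * d ^ 2 * (R ^ 2) ^ 2
      / σ ^ 4 := by
    have e : (k : ℝ) ^ (12 * k * d + 5) * k
        = (k : ℝ) ^ (4 * (k * d)) * (k : ℝ) ^ (8 * (k * d) + 6) := by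
      rw [← pow_succ, ← pow_add]; congr 1; ring
    rw [e, hZ, hA]; ring
  rw [hZ', hpow]
  calc _ ≤ 13440 * ((k : ℝ) ^ (12 * k * d + 5) * n) * (n ^ 8 * ρ) * d ^ 2 * (9 * (n * L)) ^ 2
      / σ ^ 4 := by gcongr
    _ = 1088640 * (k : ℝ) ^ (12 * k * d + 5) * d ^ 2 * (n ^ 11 * ρ) * L ^ 2 / σ ^ 4 := by ring
    _ ≤ 2000000 * (k : ℝ) ^ (12 * k * d + 5) * d ^ 12 * ((n : ℝ) ^ (12.5 : ℝ) * ρ)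
        * L ^ (4.5 : ℝ) / σ ^ 4 := by
        gcongr
        norm_num

/-- Let `4kd ≤ n`, let `Y` be `n` points in `[0,1]^d`, and let `X` be
obtained by independent Gaussian perturbations of mean `0` and standard deviation `σ ≤ 1`.
Then `E[T(X)] = O(k^(12kd+5) · d^12 · n^(12.5+1/d) · ln^{4.5}(nkd) / σ⁴)`, where `T(X)` is
the maximum length of an improving sequence of single-point reassignments; in particular this
bounds the expected running time of the Hartigan--Wong method under any pivot rule. -/
theorem hartigan_wong_smoothed_complexity :
    ∃ c : ℝ, 0 < c ∧
      ∀ (n k d : ℕ), 0 < k → 0 < d → 4 * k * d ≤ n →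
        ∀ (Y : Fin n → Fin d → ℝ), (∀ i j, Y i j ∈ Set.Icc (0 : ℝ) 1) →
          ∀ σ : ℝ, 0 < σ → σ ≤ 1 →
            ∫⁻ ω, (maxImprovingSeqLen n k d (fun i => toEuc (ω i)) : ENNReal)
                ∂(perturbedPoints n d Y σ)
              ≤ ENNReal.ofReal
                  (c * (k : ℝ) ^ (12 * k * d + 5) * (d : ℝ) ^ 12
                    * (n : ℝ) ^ ((12.5 : ℝ) + 1 / (d : ℝ))
                    * Real.log ((n : ℝ) * k * d) ^ ((4.5 : ℝ)) / σ ^ 4) := by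
  refine ⟨2000000, by norm_num, ?_⟩
  intro n k d hk hd hn Y hY σ hσ hσ1
  rcases Nat.lt_or_ge 1 k with hk2 | hk2
  swap
  · have : k = 1 := by omega
    subst this
    simp [hwT_one]
  obtain ⟨L, hL⟩ : ∃ L, L = Real.log ((n : ℝ) * k * d) := ⟨_, rfl⟩
  obtain ⟨R, hR⟩ : ∃ R, R = 1 + 2 * √(n * L) := ⟨_, rfl⟩
  obtain ⟨A, hA⟩ : ∃ A, A = 1920 * n ^ 7 * (n : ℝ) ^ (1 / (d : ℝ)) * d * R ^ 2
    * k ^ (8 * (k * d) + 6) / σ ^ 4 := ⟨_, rfl⟩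
  obtain ⟨Z, hZ⟩ : ∃ Z, Z = (k : ℝ) ^ (4 * (k * d)) * (n * d * R ^ 2) * A := ⟨_, rfl⟩
  have hfin := hw_final_bound n k d hk2 hd hn L hL σ hσ R Z A hR hA hZ
  refine le_trans ?_ (ENNReal.ofReal_le_ofReal hfin)
  have hn0 : 0 < n := lt_of_lt_of_le (by positivity) hn
  have hn1 : (1 : ℝ) ≤ n := by exact_mod_cast hn0
  have hd1 : (1 : ℝ) ≤ d := by exact_mod_cast hd
  have hk1 : (1 : ℝ) ≤ k := by exact_mod_cast hk
  have hL0 : 0 ≤ L := by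
    rw [hL]
    apply Real.log_nonneg
    exact one_le_mul_of_one_le_of_one_le (one_le_mul_of_one_le_of_one_le hn1 hk1) hd1
  have hR1 : 1 ≤ R := by rw [hR]; linarith [Real.sqrt_nonneg (n * L)]
  have hΦ1 : 1 ≤ (n : ℝ) * d * R ^ 2 :=
    one_le_mul_of_one_le_of_one_le (one_le_mul_of_one_le_of_one_le hn1 hd1) (one_le_pow₀ hR1)
  have hA1 : 1 ≤ A := by
    rw [hA, le_div_iff₀ (by positivity), one_mul]
    refine (pow_le_one₀ hσ.le hσ1).trans ?_
    have h1 : 1 ≤ (n : ℝ) ^ (1 / (d : ℝ)) := Real.one_le_rpow hn1 (by positivity)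
    have h7 : 1 ≤ (1920 : ℝ) * n ^ 7 :=
      one_le_mul_of_one_le_of_one_le (by norm_num) (one_le_pow₀ hn1)
    exact one_le_mul_of_one_le_of_one_le (one_le_mul_of_one_le_of_one_le
      (one_le_mul_of_one_le_of_one_le (one_le_mul_of_one_le_of_one_le h7 h1) hd1)
      (one_le_pow₀ hR1)) (one_le_pow₀ hk1)
  have hA0 : 0 < A := by linarith
  have hW1 : 1 ≤ (k : ℝ) ^ (4 * (k * d)) := one_le_pow₀ hk1
  have hWZ : (k : ℝ) ^ (4 * (k * d)) ≤ Z := by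
    rw [hZ, mul_assoc]
    exact le_mul_of_one_le_right (by positivity) (one_le_mul_of_one_le_of_one_le hΦ1 hA1)
  have hZ0 : 0 < Z := by linarith
  set ε : ℕ → ℝ := fun l => (1 / 2) ^ l / A with hε
  have hε0 : ∀ l, 0 < ε l := fun l => by simp only [hε]; positivity
  have hε1 : ∀ l, ε l ≤ 1 := fun l => by
    simp only [hε]
    rw [div_le_one hA0]
    exact (pow_le_one₀ (by norm_num) (by norm_num)).trans hA1
  set δ : ℕ → ℝ := fun l => ε l / (12 * d * R) with hδ
  have hdy := hw_dyadic (perturbedPoints n d Y σ)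
    (fun ω => maxImprovingSeqLen n k d (fun i => toEuc (ω i)))
    (hwBad n d R) (hwBad_measurable n d R)
    (fun l => hwCover n k d (4 * (k * d)) ⌈n * R / δ l⌉₊ (δ l) (ε l))
    (fun l => hwCover_measurable _ _ _ _ _ _ _) (k ^ n) ((k : ℝ) ^ (4 * (k * d))) Z
    (by positivity) hZ0 (fun ω => hwT_le_pow n k d ω) ?_ ?_ ?_
  · refine hdy.trans (ENNReal.ofReal_le_ofReal ?_)
    linarith
  · rw [hR]
    refine (mul_le_mul_right (hwBad_prob n d Y hY σ hσ hσ1 _ (by positivity)) _).trans ?_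
    have hf := hw_fail n k d hn0 hk2 hd L hL (2 * √(n * L))
      (by rw [mul_pow, Real.sq_sqrt (by positivity)]; norm_num)
    rw [← ENNReal.ofReal_natCast, ← ENNReal.ofReal_mul (by positivity), ← ENNReal.ofReal_one]
    apply ENNReal.ofReal_le_ofReal
    rw [Nat.cast_pow]
    exact hf
  · intro ω hω l hl
    have hωR : ∀ j c, |ω j c| ≤ R := by
      intro j c
      by_contra hc
      exact hω (Set.mem_iUnion.2 ⟨j, Set.mem_iUnion.2 ⟨c, not_le.1 hc⟩⟩)
    have h12 : (1 : ℝ) ≤ 12 * d * R := by nlinarith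
    have hδ0 : 0 < δ l := div_pos (hε0 l) (by linarith)
    have hδR : δ l ≤ R := by
      refine le_trans ?_ hR1
      simp only [hδ]
      rw [div_le_one (by linarith)]
      exact (hε1 l).trans h12
    refine (hwT_window hk ω R (δ l) (ε l) hωR (by linarith) hδ0 hδR (hε0 l) ?_ (Nat.le_ceil _)
      hl).trans ?_
    · apply le_of_eq
      simp only [hδ]
      field_simp
    · apply le_of_eq
      simp only [hε]
      have h2 : (1 / 2 : ℝ) ^ l * 2 ^ l = 1 := by rw [← mul_pow]; norm_num
      have h3 : (n : ℝ) * d * R ^ 2 / ((1 / 2) ^ l / A) = n * d * R ^ 2 * A * 2 ^ l := by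
        rw [div_eq_iff (by positivity)]
        have : n * d * R ^ 2 * A * 2 ^ l * ((1 / 2) ^ l / A)
          = n * d * R ^ 2 * (A / A) * ((1 / 2 : ℝ) ^ l * 2 ^ l) := by ring
        rw [this, h2, div_self hA0.ne']; ring
      rw [h3, hZ]; ring
  · intro l
    refine (hwCover_real n k d _ hn0 hk hd Y σ hσ R (ε l) (hε0 l) (hε1 l) hR1 ?_).trans ?_
    · exact (Nat.ceil_lt_add_one (by
        have := hε0 l
        simp only [hδ]; positivity)).le
    · apply ENNReal.ofReal_le_ofReal
      rw [← hA]
      have e : A * ε l = (1 / 2) ^ l := by simp only [hε]; field_simp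
      rw [e]
      have hkd : 2 ≤ k * d := by nlinarith
      calc (((1 : ℝ) / 2) ^ l) ^ (k * d) ≤ ((1 / 2) ^ l) ^ 2 :=
            pow_le_pow_of_le_one (by positivity) (pow_le_one₀ (by norm_num) (by norm_num)) hkd
        _ = (1 / 4) ^ l := by rw [← pow_mul, mul_comm, pow_mul]; norm_num
end

section
/- Let S and T be two disjoint nonempty finite sets of points in ℝ^d with |S| > 1, and let x ∈ S. Then Φ(S \ {x}) + Φ(T ∪ {x}) − Φ(T) − Φ(S) = (|T|/(|T| + 1)) · ‖cm(T) − x‖² − (|S|/(|S| − 1)) · ‖cm(S) − x‖². -/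
/-- The center of mass of a finite set of points in `ℝ^d`. -/
noncomputable def centerOfMass {d : ℕ} (S : Finset (EuclideanSpace ℝ (Fin d))) :
    EuclideanSpace ℝ (Fin d) :=
  (S.card : ℝ)⁻¹ • ∑ x ∈ S, x

/-- The `k`-means potential of a single cluster: `Φ(S) = Σ_{x ∈ S} ‖x − cm(S)‖²`
(with `Φ(∅) = 0`). -/
noncomputable def clusterPot {d : ℕ} (S : Finset (EuclideanSpace ℝ (Fin d))) : ℝ :=
  ∑ x ∈ S, ‖x - centerOfMass S‖ ^ 2

noncomputable instance {d : ℕ} : DecidableEq (EuclideanSpace ℝ (Fin d)) := Classical.decEq _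

theorem clusterPot_eq_aux {d : ℕ} (S : Finset (EuclideanSpace ℝ (Fin d))) (hS : S.Nonempty) :
    clusterPot S = ∑ y ∈ S, ‖y‖ ^ 2 - (S.card : ℝ)⁻¹ * ‖∑ y ∈ S, y‖ ^ 2 := by
  have hn : (S.card : ℝ) ≠ 0 := by exact_mod_cast hS.card_pos.ne'
  unfold clusterPot centerOfMass
  simp only [norm_sub_sq_real, Finset.sum_add_distrib, Finset.sum_sub_distrib,
    ← Finset.mul_sum, ← sum_inner, Finset.sum_const, nsmul_eq_mul, norm_smul, inner_smul_right,
    real_inner_self_eq_norm_sq, norm_inv, mul_pow, Real.norm_natCast]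
  field_simp
  ring

theorem clusterPot_insert_aux {d : ℕ} (T : Finset (EuclideanSpace ℝ (Fin d)))
    (hT : T.Nonempty) (x : EuclideanSpace ℝ (Fin d)) (hx : x ∉ T) :
    clusterPot (insert x T) - clusterPot T
      = (T.card : ℝ) / ((T.card : ℝ) + 1) * ‖centerOfMass T - x‖ ^ 2 := by
  have hn : (T.card : ℝ) ≠ 0 := by exact_mod_cast hT.card_pos.ne'
  have hn1 : (T.card : ℝ) + 1 ≠ 0 := by positivity
  rw [clusterPot_eq_aux _ hT, clusterPot_eq_aux _ (Finset.insert_nonempty x T),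
    Finset.sum_insert hx, Finset.sum_insert hx, Finset.card_insert_of_notMem hx]
  unfold centerOfMass
  rw [norm_sub_sq_real, norm_add_sq_real, norm_smul, real_inner_smul_left, norm_inv,
    Real.norm_natCast, real_inner_comm x]
  push_cast
  field_simp
  ring

theorem centerOfMass_insert_aux {d : ℕ} (T : Finset (EuclideanSpace ℝ (Fin d)))
    (hT : T.Nonempty) (x : EuclideanSpace ℝ (Fin d)) (hx : x ∉ T) :
    centerOfMass (insert x T) - x
      = ((T.card : ℝ) / ((T.card : ℝ) + 1)) • (centerOfMass T - x) := by
  have hn : (T.card : ℝ) ≠ 0 := by exact_mod_cast hT.card_pos.ne'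
  have hn1 : (T.card : ℝ) + 1 ≠ 0 := by positivity
  unfold centerOfMass
  rw [Finset.sum_insert hx, Finset.card_insert_of_notMem hx]
  push_cast
  match_scalars <;> field_simp <;> ring

/-- For disjoint nonempty finite sets `S, T ⊆ ℝ^d` with `|S| > 1` and `x ∈ S`,
`Φ(S \ {x}) + Φ(T ∪ {x}) − Φ(T) − Φ(S)
  = (|T|/(|T|+1))·‖cm(T) − x‖² − (|S|/(|S|−1))·‖cm(S) − x‖²`. -/
theorem move_potential {d : ℕ} (S T : Finset (EuclideanSpace ℝ (Fin d)))
    (hST : Disjoint S T) (hS : S.Nonempty) (hT : T.Nonempty) (hScard : 1 < S.card)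
    (x : EuclideanSpace ℝ (Fin d)) (hx : x ∈ S) :
    clusterPot (S.erase x) + clusterPot (insert x T) - clusterPot T - clusterPot S
      = (T.card : ℝ) / ((T.card : ℝ) + 1) * ‖centerOfMass T - x‖ ^ 2
        - (S.card : ℝ) / ((S.card : ℝ) - 1) * ‖centerOfMass S - x‖ ^ 2 := by
  have hxT : x ∉ T := Finset.disjoint_left.mp hST hx
  have hA : (S.erase x).Nonempty := by
    rw [← Finset.card_pos, Finset.card_erase_of_mem hx]; omega
  have hxA : x ∉ S.erase x := Finset.notMem_erase x S
  have h1 := clusterPot_insert_aux T hT x hxT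
  have h2 := clusterPot_insert_aux _ hA x hxA
  have h3 := centerOfMass_insert_aux _ hA x hxA
  have hc : (S.card : ℝ) = ((S.erase x).card : ℝ) + 1 := by
    exact_mod_cast (Finset.card_erase_add_one hx).symm
  have hn : ((S.erase x).card : ℝ) ≠ 0 := by exact_mod_cast hA.card_pos.ne'
  have hn1 : ((S.erase x).card : ℝ) + 1 ≠ 0 := by positivity
  rw [Finset.insert_erase hx] at h2 h3
  have h4 : (S.card : ℝ) / ((S.card : ℝ) - 1) * ‖centerOfMass S - x‖ ^ 2
      = clusterPot S - clusterPot (S.erase x) := by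
    rw [h2, h3, hc, norm_smul, mul_pow, Real.norm_eq_abs, sq_abs, add_sub_cancel_right]
    field_simp
  rw [h4, ← h1]
  ring
end

section
/- Consider a sequence of iterations of the Hartigan–Wong method in which only points from a set A of active points move, and let cluster i have configuration C_i^t before iteration t, with center c_i(t) = cm(C_i^t). Suppose an approximate center c_i'(0) satisfies ‖c_i'(0) − c_i(0)‖ ≤ ε, and the approximate centers are updated between iterations by the rule c_i'(t₂) = (|C_i^{t₁}|/|C_i^{t₂}|)·c_i'(t₁) + (1/|C_i^{t₂}|)·(Σ_{x∈S₊} x − Σ_{x∈S₋} x), where S₊ and S₋ are the points gained and lost by cluster i between t₁ and t₂. Then at every iteration t_j at which a new active point first moves (j ∈ [|A|]), the approximation satisfies ‖c_i'(t_j) − c_i(t_j)‖ ≤ 2|A|·ε. -/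
/-- Consider a sequence of Hartigan--Wong iterations in which only points of
the (nonempty) active set `A` move: the configuration `Cfg t` of cluster `i` before iteration
`t` is never empty and changes in each iteration by gaining or losing at most one point of `A`.
If an approximate center `c'` satisfies `‖c' 0 − cm(Cfg 0)‖ ≤ ε` and is updated between
iterations by the rule
`c' (t+1) = (|Cfg t|/|Cfg (t+1)|)·c' t + (1/|Cfg (t+1)|)·(Σ_{x∈S₊} x − Σ_{x∈S₋} x)`
(where `S₊ = Cfg (t+1) \ Cfg t` are the gained and `S₋ = Cfg t \ Cfg (t+1)` the lost points),
then at every iteration `t` (in particular at each iteration at which a new active point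
first moves) we have `‖c' t − cm(Cfg t)‖ ≤ 2|A|·ε`. -/
theorem approximate_center_tracking {d : ℕ} (A : Finset (EuclideanSpace ℝ (Fin d)))
    (hA : A.Nonempty) (ε : ℝ) (hε : 0 ≤ ε)
    (Cfg : ℕ → Finset (EuclideanSpace ℝ (Fin d)))
    (hne : ∀ t, (Cfg t).Nonempty)
    (hstep_card : ∀ t, ((Cfg (t + 1) \ Cfg t) ∪ (Cfg t \ Cfg (t + 1))).card ≤ 1)
    (hstep_active : ∀ t, (Cfg (t + 1) \ Cfg t) ∪ (Cfg t \ Cfg (t + 1)) ⊆ A)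
    (c' : ℕ → EuclideanSpace ℝ (Fin d))
    (hupd : ∀ t, c' (t + 1)
      = (((Cfg t).card : ℝ) / ((Cfg (t + 1)).card : ℝ)) • c' t
          + (((Cfg (t + 1)).card : ℝ)⁻¹)
              • ((∑ x ∈ Cfg (t + 1) \ Cfg t, x) - ∑ x ∈ Cfg t \ Cfg (t + 1), x))
    (h0 : ‖c' 0 - centerOfMass (Cfg 0)‖ ≤ ε) :
    ∀ t, ‖c' t - centerOfMass (Cfg t)‖ ≤ 2 * A.card * ε := by
  have pos : ∀ t, (0 : ℝ) < (Cfg t).card := fun t => by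
    exact_mod_cast (hne t).card_pos
  have hcm : ∀ t, ((Cfg t).card : ℝ) • centerOfMass (Cfg t) = ∑ x ∈ Cfg t, x := fun t => by
    unfold centerOfMass
    rw [smul_smul, mul_inv_cancel₀ (pos t).ne', one_smul]
  have hinv : ∀ t, ((Cfg t).card : ℝ) • (c' t - centerOfMass (Cfg t))
      = ((Cfg 0).card : ℝ) • (c' 0 - centerOfMass (Cfg 0)) := by
    intro t
    induction t with
    | zero => rfl
    | succ t ih =>
      rw [← ih, smul_sub, smul_sub, hcm, hcm, hupd t, smul_add, smul_smul, smul_smul,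
        mul_inv_cancel₀ (pos (t + 1)).ne', one_smul, mul_div_cancel₀ _ (pos (t + 1)).ne']
      have h1 := Finset.sum_sdiff_sub_sum_sdiff (s₂ := Cfg (t + 1)) (s₁ := Cfg t)
        (f := fun x : EuclideanSpace ℝ (Fin d) => x)
      rw [h1]
      abel
  have hsub : ∀ t, Cfg 0 ⊆ Cfg t ∪ A := by
    intro t
    induction t with
    | zero => exact Finset.subset_union_left
    | succ t ih =>
      intro x hx
      have h1 := ih hx
      rw [Finset.mem_union] at h1 ⊢
      rcases h1 with h1 | h1
      · by_cases h2 : x ∈ Cfg (t + 1)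
        · exact Or.inl h2
        · exact Or.inr (hstep_active t
            (Finset.mem_union_right _ (Finset.mem_sdiff.mpr ⟨h1, h2⟩)))
      · exact Or.inr h1
  intro t
  have hcard : ((Cfg 0).card : ℝ) ≤ (Cfg t).card + A.card := by
    exact_mod_cast (Finset.card_le_card (hsub t)).trans (Finset.card_union_le _ _)
  have hA1 : (1 : ℝ) ≤ A.card := by exact_mod_cast hA.card_pos
  have hC1 : (1 : ℝ) ≤ (Cfg t).card := by exact_mod_cast (hne t).card_pos
  have hn := congrArg norm (hinv t)
  rw [norm_smul, norm_smul, Real.norm_natCast, Real.norm_natCast] at hn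
  have h2 : ((Cfg 0).card : ℝ) ≤ (Cfg t).card * (2 * A.card) := by nlinarith
  refine le_of_mul_le_mul_left ?_ (pos t)
  calc _ = _ := hn
    _ ≤ ((Cfg t).card * (2 * A.card)) * ε := by gcongr
    _ = _ := by ring
end

section
/- Let Y be a one-dimensional Gaussian random variable with arbitrary mean and standard deviation σ ≤ 1. Then there is an absolute constant c > 0 such that for every interval I ⊆ ℝ of length ε ≤ 1, the probability that Y² ∈ I is at most c · √ε/σ. -/
open MeasureTheory ProbabilityTheory

/-- Let `Y` be a one-dimensional Gaussian random variable with arbitrary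
mean and standard deviation `σ ≤ 1`. There is an absolute constant `c > 0` such that for every
interval `I` of length `ε ≤ 1`, `ℙ(Y² ∈ I) ≤ c·√ε/σ`. -/
theorem squared_gaussian_interval :
    ∃ c : ℝ, 0 < c ∧
      ∀ (μ σ : ℝ), 0 < σ → σ ≤ 1 →
        ∀ ε : ℝ, 0 ≤ ε → ε ≤ 1 →
          ∀ t : ℝ,
            gaussianReal μ ((σ ^ 2).toNNReal) {y : ℝ | y ^ 2 ∈ Set.Icc t (t + ε)}
              ≤ ENNReal.ofReal (c * Real.sqrt ε / σ) := by
  refine ⟨2, by norm_num, ?_⟩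
  intro μ σ hσ _ ε hε _ t
  have hv : (σ ^ 2).toNNReal ≠ 0 := by
    have : 0 < (σ ^ 2).toNNReal := Real.toNNReal_pos.2 (by positivity)
    exact this.ne'
  have hsub : {y : ℝ | y ^ 2 ∈ Set.Icc t (t + ε)} ⊆
      Set.Icc (√t) (√t + √ε) ∪ Set.Icc (-(√t + √ε)) (-√t) := by
    intro y hy
    obtain ⟨h1, h2⟩ := hy
    have hlo : √t ≤ |y| := by
      rw [← Real.sqrt_sq_eq_abs]
      exact Real.sqrt_le_sqrt h1
    have ht : t ≤ √t ^ 2 := by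
      rcases le_total 0 t with h | h
      · rw [Real.sq_sqrt h]
      · exact h.trans (sq_nonneg _)
    have hhi : |y| ≤ √t + √ε := by
      apply abs_le_of_sq_le_sq _ (by positivity)
      nlinarith [Real.sq_sqrt hε, mul_nonneg (Real.sqrt_nonneg t) (Real.sqrt_nonneg ε)]
    rcases le_total 0 y with h | h
    · rw [abs_of_nonneg h] at hlo hhi
      exact Or.inl ⟨hlo, hhi⟩
    · rw [abs_of_nonpos h] at hlo hhi
      exact Or.inr ⟨by linarith, by linarith⟩
  have hpdf : ∀ x, gaussianPDF μ (σ ^ 2).toNNReal x ≤ ENNReal.ofReal (1 / σ) := by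
    intro x
    rw [gaussianPDF]
    apply ENNReal.ofReal_le_ofReal
    rw [gaussianPDFReal, Real.coe_toNNReal _ (sq_nonneg σ)]
    have h1 : σ ≤ √(2 * Real.pi * σ ^ 2) := by
      apply Real.le_sqrt_of_sq_le
      nlinarith [Real.pi_gt_three, sq_nonneg σ]
    have h2 : Real.exp (-(x - μ) ^ 2 / (2 * σ ^ 2)) ≤ 1 := by
      apply Real.exp_le_one_iff.2
      apply div_nonpos_of_nonpos_of_nonneg
      · nlinarith [sq_nonneg (x - μ)]
      · positivity
    have h3 : (√(2 * Real.pi * σ ^ 2))⁻¹ ≤ 1 / σ := by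
      rw [one_div]
      exact inv_anti₀ hσ h1
    calc _ ≤ (√(2 * Real.pi * σ ^ 2))⁻¹ * 1 := by gcongr
      _ ≤ _ := by rw [mul_one]; exact h3
  have hvol : volume (Set.Icc (√t) (√t + √ε) ∪ Set.Icc (-(√t + √ε)) (-√t))
      ≤ ENNReal.ofReal (2 * √ε) := by
    refine (measure_union_le _ _).trans ?_
    rw [Real.volume_Icc, Real.volume_Icc,
      ← ENNReal.ofReal_add (by simp) (by simp)]
    apply ENNReal.ofReal_le_ofReal
    linarith
  refine (measure_mono hsub).trans ?_
  rw [gaussianReal_apply μ hv]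
  calc _ ≤ ∫⁻ _ in (Set.Icc (√t) (√t + √ε) ∪ Set.Icc (-(√t + √ε)) (-√t)),
        ENNReal.ofReal (1 / σ) := lintegral_mono hpdf
    _ = ENNReal.ofReal (1 / σ) *
        volume (Set.Icc (√t) (√t + √ε) ∪ Set.Icc (-(√t + √ε)) (-√t)) := by
      rw [setLIntegral_const]
    _ ≤ ENNReal.ofReal (1 / σ) * ENNReal.ofReal (2 * √ε) := by gcongr
    _ = _ := by
      rw [← ENNReal.ofReal_mul (by positivity)]
      congr 1
      ring
end

section
/- Fix an active set A of points, starting sizes |C_i| for each of the k clusters (i ∈ [k]), and an order π : A → [|A|] in which the points of A first move. Let the random point set X consist of n points obtained by independent Gaussian perturbations (mean 0, standard deviation σ ≤ 1) of fixed points in [0,1]^d, conditioned on X ⊆ [−D/2, D/2]^d with D = √(2n ln(nkd)). Let Δ be the minimum, over all configurations of X \ A, of the total potential improvement of any sequence of Hartigan–Wong iterations in which exactly the points of A move, with the given initial cluster sizes and first-move order π. Then for every ε ≤ 1, the probability that Δ ≤ ε is at most (2D/ε)^{kd} · (c · k^{|A|} · d^{3/4} · D · n · |A| · √ε / σ)^{|A|}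 for some absolute constant c > 0. -/
open MeasureTheory ProbabilityTheory

noncomputable section

/-- `D = √(2n·ln(nkd))`. -/
def cubeD (n k d : ℕ) : ℝ := Real.sqrt (2 * n * Real.log ((n : ℝ) * k * d))

end


/-- The sum of `v` over the cluster `i`. -/
noncomputable def wsum {n k : ℕ} (cl : Fin n → Fin k) (i : Fin k) (v : Fin n → ℝ) : ℝ :=
  ∑ j, if cl j = i then v j else 0

/-- The gain of one move, in one coordinate. -/
noncomputable def gainC (p q s t x : ℝ) : ℝ :=
  (s - x) ^ 2 / (p - 1) - s ^ 2 / p + (t + x) ^ 2 / (q + 1) - t ^ 2 / q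

theorem wsum_eq {n k : ℕ} (cl : Fin n → Fin k) (i : Fin k) (v : Fin n → ℝ) :
    wsum cl i v = ∑ j ∈ clusterIdx cl i, v j := by
  simp [wsum, clusterIdx, Finset.sum_filter]

theorem wsum_one {n k : ℕ} (cl : Fin n → Fin k) (i : Fin k) :
    wsum cl i (fun _ => 1) = ((clusterIdx cl i).card : ℝ) := by
  rw [wsum_eq]; simp

theorem scalar_var {ι : Type*} (C : Finset ι) (x : ι → ℝ) :
    ∑ j ∈ C, (x j - (C.card : ℝ)⁻¹ * ∑ l ∈ C, x l) ^ 2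
      = ∑ j ∈ C, x j ^ 2 - (∑ j ∈ C, x j) ^ 2 / C.card := by
  rcases C.eq_empty_or_nonempty with rfl | h
  · simp
  have hc : (C.card : ℝ) ≠ 0 := by exact_mod_cast h.card_pos.ne'
  set S := ∑ j ∈ C, x j with hS
  have : ∀ j, (x j - (C.card : ℝ)⁻¹ * S) ^ 2
      = x j ^ 2 - 2 * ((C.card : ℝ)⁻¹ * S) * x j + ((C.card : ℝ)⁻¹ * S) ^ 2 := fun j => by ring
  simp only [this, Finset.sum_add_distrib, Finset.sum_sub_distrib, ← Finset.mul_sum, ← hS,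
    Finset.sum_const, nsmul_eq_mul]
  field_simp
  ring

theorem pot_eq {n k d : ℕ} (ω : Fin n → Fin d → ℝ) (cl : Fin n → Fin k) :
    kmeansPot (fun i => toEuc (ω i)) cl = ∑ j, ∑ r, ω j r ^ 2
      - ∑ i, ∑ r, wsum cl i (fun j => ω j r) ^ 2 / wsum cl i (fun _ => 1) := by
  have h1 : ∀ i, ∑ j ∈ clusterIdx cl i, ‖toEuc (ω j) - clusterCtr (fun i => toEuc (ω i)) cl i‖ ^ 2
      = ∑ j ∈ clusterIdx cl i, ∑ r, ω j r ^ 2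
        - ∑ r, wsum cl i (fun j => ω j r) ^ 2 / wsum cl i (fun _ => 1) := by
    intro i
    simp only [EuclideanSpace.real_norm_sq_eq]
    rw [Finset.sum_comm, Finset.sum_comm (f := fun j r => ω j r ^ 2), ← Finset.sum_sub_distrib]
    refine Finset.sum_congr rfl fun r _ => ?_
    rw [wsum_one, wsum_eq, ← scalar_var]
    refine Finset.sum_congr rfl fun j _ => ?_
    simp [clusterCtr, toEuc]
  unfold kmeansPot
  simp only [h1, Finset.sum_sub_distrib]
  congr 1
  have := Finset.sum_fiberwise (s := (Finset.univ : Finset (Fin n))) (g := cl)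
    (f := fun j => ∑ r, ω j r ^ 2)
  simpa [clusterIdx] using this

theorem wsum_move {n k : ℕ} (cl cl' : Fin n → Fin k) (b : Fin n) (hb : cl' b ≠ cl b)
    (h : ∀ j, j ≠ b → cl' j = cl j) (i : Fin k) (v : Fin n → ℝ) :
    wsum cl' i v = wsum cl i v - (if cl b = i then v b else 0) + (if cl' b = i then v b else 0) := by
  unfold wsum
  rw [← Finset.add_sum_erase _ _ (Finset.mem_univ b),
    ← Finset.add_sum_erase _ (fun j => if cl j = i then v j else 0) (Finset.mem_univ b)]
  have : ∑ x ∈ Finset.univ.erase b, (if cl' x = i then v x else 0)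
      = ∑ x ∈ Finset.univ.erase b, (if cl x = i then v x else 0) :=
    Finset.sum_congr rfl fun j hj => by rw [h j (Finset.ne_of_mem_erase hj)]
  rw [this]; ring

theorem gain_eq {n k d : ℕ} (ω : Fin n → Fin d → ℝ) (cl cl' : Fin n → Fin k) (b : Fin n)
    (hb : cl' b ≠ cl b) (h : ∀ j, j ≠ b → cl' j = cl j) :
    kmeansPot (fun i => toEuc (ω i)) cl - kmeansPot (fun i => toEuc (ω i)) cl'
      = ∑ r, gainC (wsum cl (cl b) fun _ => 1) (wsum cl (cl' b) fun _ => 1)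
          (wsum cl (cl b) fun j => ω j r) (wsum cl (cl' b) fun j => ω j r) (ω b r) := by
  rw [pot_eq, pot_eq]
  have e : ∀ a b c : ℝ, a - b - (a - c) = c - b := fun a b c => by ring
  rw [e, ← Finset.sum_sub_distrib]
  have hz : ∀ i, i ∉ ({cl b, cl' b} : Finset (Fin k)) →
      ∑ r, wsum cl' i (fun j => ω j r) ^ 2 / wsum cl' i (fun _ => 1)
        - ∑ r, wsum cl i (fun j => ω j r) ^ 2 / wsum cl i (fun _ => 1) = 0 := by
    intro i hi
    simp only [Finset.mem_insert, Finset.mem_singleton, not_or] at hi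
    simp [wsum_move cl cl' b hb h i, Ne.symm hi.1, Ne.symm hi.2]
  rw [← Finset.sum_subset (Finset.subset_univ ({cl b, cl' b} : Finset (Fin k)))
    (fun i _ hi => hz i hi), Finset.sum_pair hb.symm, ← Finset.sum_sub_distrib,
    ← Finset.sum_sub_distrib, ← Finset.sum_add_distrib]
  refine Finset.sum_congr rfl fun r _ => ?_
  simp [wsum_move cl cl' b hb h, hb, hb.symm, gainC]
  ring

theorem sq_div_err (u u' w D e : ℝ) (hw : w = 0 ∨ 1 ≤ w) (hD : 0 ≤ D) (he : 0 ≤ e)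
    (hu : |u| ≤ w * (D / 2)) (huu : |u - u'| ≤ e) : |u ^ 2 / w - u' ^ 2 / w| ≤ e * (D + e) := by
  rcases hw with rfl | hw
  · simp; positivity
  have h1 : u ^ 2 / w - u' ^ 2 / w = (u - u') * (2 * u - (u - u')) / w := by
    field_simp; ring
  rw [h1, abs_div, abs_mul, abs_of_pos (by linarith : (0:ℝ) < w), div_le_iff₀ (by linarith)]
  have h2 : |2 * u - (u - u')| ≤ w * D + e := by
    calc |2 * u - (u - u')| ≤ |2 * u| + |u - u'| := abs_sub _ _
      _ ≤ _ := by rw [abs_mul, abs_two]; linarith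
  calc |u - u'| * |2 * u - (u - u')| ≤ e * (w * D + e) := by gcongr
    _ ≤ e * (D + e) * w := by nlinarith [mul_nonneg he he, mul_nonneg (mul_nonneg he he) (sub_nonneg.2 hw)]

theorem gainC_err (p q s t x s' t' D e : ℝ) (hp : 2 ≤ p) (hq : q = 0 ∨ 1 ≤ q)
    (hD : 0 ≤ D) (he : 0 ≤ e) (h1 : |s - x| ≤ (p - 1) * (D / 2)) (h2 : |s| ≤ p * (D / 2))
    (h3 : |t + x| ≤ (q + 1) * (D / 2)) (h4 : |t| ≤ q * (D / 2)) (hs : |s - s'| ≤ e)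
    (ht : |t - t'| ≤ e) : |gainC p q s t x - gainC p q s' t' x| ≤ 4 * (e * (D + e)) := by
  have a1 := sq_div_err (s - x) (s' - x) (p - 1) D e (Or.inr (by linarith)) hD he h1
    (by rw [show s - x - (s' - x) = s - s' by ring]; exact hs)
  have a2 := sq_div_err s s' p D e (Or.inr (by linarith)) hD he h2 hs
  have a3 := sq_div_err (t + x) (t' + x) (q + 1) D e
    (Or.inr (by rcases hq with h | h <;> linarith)) hD he h3
    (by rw [show t + x - (t' + x) = t - t' by ring]; exact ht)
  have a4 := sq_div_err t t' q D e hq hD he h4 ht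
  rw [abs_le] at *
  unfold gainC
  constructor <;> linarith [a1.1, a1.2, a2.1, a2.2, a3.1, a3.2, a4.1, a4.2]

theorem wsum_abs_le {n k : ℕ} (cl : Fin n → Fin k) (i : Fin k) (v : Fin n → ℝ) (R : ℝ)
    (hv : ∀ j, |v j| ≤ R) : |wsum cl i v| ≤ wsum cl i (fun _ => 1) * R := by
  rw [wsum_one, wsum_eq, ← nsmul_eq_mul]
  exact (Finset.abs_sum_le_sum_abs _ _).trans (Finset.sum_le_card_nsmul _ _ _ fun j _ => hv j)

theorem wsum_le_n {n k : ℕ} (cl : Fin n → Fin k) (i : Fin k) : wsum cl i (fun _ => 1) ≤ n := by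
  rw [wsum_one]
  exact_mod_cast (Finset.card_le_univ _).trans (by simp)

theorem wsum_nonneg {n k : ℕ} (cl : Fin n → Fin k) (i : Fin k) : 0 ≤ wsum cl i (fun _ => 1) := by
  rw [wsum_one]; positivity

theorem wsum_zero_or {n k : ℕ} (cl : Fin n → Fin k) (i : Fin k) :
    wsum cl i (fun _ => 1) = 0 ∨ 1 ≤ wsum cl i (fun _ => 1) := by
  rw [wsum_one]
  rcases Nat.eq_zero_or_pos (clusterIdx cl i).card with h | h
  · left; simp [h]
  · right; exact_mod_cast h

/-- An improving move leaves a cluster with at least two points. -/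
theorem two_le_of_gain {n k d : ℕ} (ω : Fin n → Fin d → ℝ) (cl cl' : Fin n → Fin k) (b : Fin n)
    (hb : cl' b ≠ cl b) (h : ∀ j, j ≠ b → cl' j = cl j)
    (hg : kmeansPot (fun i => toEuc (ω i)) cl' < kmeansPot (fun i => toEuc (ω i)) cl) :
    2 ≤ wsum cl (cl b) fun _ => 1 := by
  by_contra hlt
  have hmem : b ∈ clusterIdx cl (cl b) := by simp [clusterIdx]
  have hc : (clusterIdx cl (cl b)).card = 1 := by
    rw [wsum_one] at hlt
    have : (clusterIdx cl (cl b)).card < 2 := by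
      by_contra h2; exact hlt (by exact_mod_cast not_lt.1 h2)
    have := Finset.card_pos.2 ⟨b, hmem⟩
    omega
  obtain ⟨x, hx⟩ := Finset.card_eq_one.1 hc
  have hxb : x = b := by rw [hx, Finset.mem_singleton] at hmem; exact hmem.symm
  have hs : ∀ v : Fin n → ℝ, wsum cl (cl b) v = v b := by
    intro v; rw [wsum_eq, hx, hxb]; simp
  have := gain_eq ω cl cl' b hb h
  have hle : ∑ r, gainC (wsum cl (cl b) fun _ => 1) (wsum cl (cl' b) fun _ => 1)
          (wsum cl (cl b) fun j => ω j r) (wsum cl (cl' b) fun j => ω j r) (ω b r) ≤ 0 := by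
    refine Finset.sum_nonpos fun r _ => ?_
    rw [hs, hs]
    unfold gainC
    set x := ω b r
    set t := wsum cl (cl' b) fun j => ω j r with ht
    rcases wsum_zero_or cl (cl' b) with hq | hq
    · have ht0 : t = 0 := by
        have : clusterIdx cl (cl' b) = ∅ := by
          rw [wsum_one] at hq; exact Finset.card_eq_zero.1 (by exact_mod_cast hq)
        rw [ht, wsum_eq, this]; simp
      rw [hq, ht0]; simp
    · set q := wsum cl (cl' b) fun _ => 1
      have : (t + x) ^ 2 / (q + 1) - t ^ 2 / q - x ^ 2 = - (t - q * x) ^ 2 / (q * (q + 1)) := by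
        have : q ≠ 0 := by linarith
        have : q + 1 ≠ 0 := by linarith
        field_simp; ring
      have h2 : 0 ≤ (t - q * x) ^ 2 / (q * (q + 1)) := by positivity
      rw [neg_div] at this
      simp
      linarith
  linarith

theorem pi_inter_le {ι : Type*} [Fintype ι] [DecidableEq ι] {α : ι → Type*}
    [∀ i, MeasurableSpace (α i)] (μ : ∀ i, Measure (α i)) [∀ i, IsProbabilityMeasure (μ i)]
    (π : ι → ℕ) (δ : ENNReal) (B : ι → Set (∀ i, α i)) (A : Finset ι)
    (hinj : Set.InjOn π (A : Set ι))
    (hB : ∀ b ∈ A, MeasurableSet (B b))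
    (hdep : ∀ b ∈ A, ∀ c ∈ A, π b < π c → ∀ ω x, Function.update ω c x ∈ B b ↔ ω ∈ B b)
    (hδ : ∀ b ∈ A, ∀ ω, μ b {x | Function.update ω b x ∈ B b} ≤ δ) :
    Measure.pi μ (⋂ b ∈ A, B b) ≤ δ ^ A.card := by
  induction A using Finset.induction_on_max_value π with
  | empty => simp
  | insert a s has hmax ih =>
    have ih' := ih (hinj.mono (by simp)) (fun b hb => hB b (by simp [hb]))
      (fun b hb c hc => hdep b (by simp [hb]) c (by simp [hc])) (fun b hb => hδ b (by simp [hb]))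
    have hEm : MeasurableSet (⋂ b ∈ s, B b) :=
      Finset.measurableSet_biInter _ (fun b hb => hB b (by simp [hb]))
    have hlt : ∀ b ∈ s, π b < π a := by
      intro b hb
      refine lt_of_le_of_ne (hmax b hb) (fun h => ?_)
      have := hinj (by simp [hb]) (by simp) h
      exact has (this ▸ hb)
    have hE : ∀ ω x, Function.update ω a x ∈ (⋂ b ∈ s, B b) ↔ ω ∈ (⋂ b ∈ s, B b) := by
      intro ω x
      simp only [Set.mem_iInter]
      exact forall₂_congr fun b hb => hdep b (by simp [hb]) a (by simp) (hlt b hb) ω x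
    set E := ⋂ b ∈ s, B b with hEdef
    have hBa := hB a (by simp)
    rw [Finset.set_biInter_insert, Finset.card_insert_of_notMem has, pow_succ, mul_comm]
    calc Measure.pi μ (B a ∩ E) = ∫⁻ ω, (B a ∩ E).indicator 1 ω ∂Measure.pi μ := by
          rw [lintegral_indicator_one (hBa.inter hEm)]
      _ ≤ ∫⁻ ω, δ * E.indicator 1 ω ∂Measure.pi μ := by
          refine lintegral_le_of_lmarginal_le {a} (measurable_one.indicator (hBa.inter hEm))
            ((measurable_one.indicator hEm).const_mul _) ?_
          intro ω
          rw [lmarginal_singleton, lmarginal_singleton]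
          by_cases hω : ω ∈ E
          · have h1 : ∀ x, E.indicator (1 : (∀ i, α i) → ENNReal) (Function.update ω a x) = 1 := by
              intro x
              rw [Set.indicator_of_mem ((hE ω x).2 hω)]; rfl
            simp only [h1, mul_one, lintegral_const, measure_univ]
            refine le_trans ?_ (hδ a (by simp) ω)
            rw [← lintegral_indicator_one]
            · refine lintegral_mono fun x => ?_
              simp only [Set.indicator]
              split_ifs with h2 h3 <;> simp_all
            · exact (measurable_update ω) hBa
          · have h1 : ∀ x, (B a ∩ E).indicator (1 : (∀ i, α i) → ENNReal) (Function.update ω a x) = 0 := by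
              intro x
              rw [Set.indicator_of_notMem]
              intro h
              exact hω ((hE ω x).1 h.2)
            simp [h1]
      _ = δ * Measure.pi μ E := by
          rw [lintegral_const_mul _ (measurable_one.indicator hEm), lintegral_indicator_one hEm]
      _ ≤ δ * δ ^ s.card := by gcongr

theorem cond_pi_eq {ι : Type*} [Fintype ι] {α : ι → Type*}
    [∀ i, MeasurableSpace (α i)] (μ : ∀ i, Measure (α i)) [∀ i, IsProbabilityMeasure (μ i)]
    (B : ∀ i, Set (α i)) (hB : ∀ i, MeasurableSet (B i)) (h0 : ∀ i, μ i (B i) ≠ 0) :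
    ProbabilityTheory.cond (Measure.pi μ) (Set.univ.pi B)
      = Measure.pi fun i => ProbabilityTheory.cond (μ i) (B i) := by
  have : ∀ i, IsProbabilityMeasure (ProbabilityTheory.cond (μ i) (B i)) :=
    fun i => cond_isProbabilityMeasure (h0 i)
  refine (Measure.pi_eq fun s hs => ?_).symm
  rw [cond_apply (MeasurableSet.univ_pi hB), ← Set.pi_inter_distrib, Measure.pi_pi, Measure.pi_pi]
  simp only [cond_apply (hB _)]
  rw [Finset.prod_mul_distrib, ENNReal.prod_inv_distrib]
  intro i _ j _ _
  exact Or.inl (h0 i)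

theorem gauss_cond_le (y σ R : ℝ) (hσ : 0 < σ) (hσ1 : σ ≤ 1) (hy : y ∈ Set.Icc (0:ℝ) 1)
    (hR : 1 ≤ R) (T : Set ℝ) :
    gaussianReal y ((σ ^ 2).toNNReal) (Set.Icc (-R) R) ≠ 0 ∧
    ProbabilityTheory.cond (gaussianReal y ((σ ^ 2).toNNReal)) (Set.Icc (-R) R) T
      ≤ ENNReal.ofReal (2 / σ) * volume T := by
  have hv : (σ ^ 2).toNNReal ≠ 0 := by
    simp only [ne_eq, Real.toNNReal_eq_zero, not_le]; positivity
  have hvc : (((σ ^ 2).toNNReal : NNReal) : ℝ) = σ ^ 2 := Real.coe_toNNReal _ (by positivity)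
  set a : ℝ := (√(2 * Real.pi * σ ^ 2))⁻¹ with ha
  have hapos : 0 < a := by positivity
  have hlow : ENNReal.ofReal (a / 2 * σ) ≤
      gaussianReal y ((σ ^ 2).toNNReal) (Set.Icc (-R) R) := by
    calc ENNReal.ofReal (a / 2 * σ)
        = ∫⁻ x in Set.Icc (y - σ) y, ENNReal.ofReal (a / 2) := by
          rw [setLIntegral_const, Real.volume_Icc, ← ENNReal.ofReal_mul (by positivity)]
          congr 2; ring
      _ ≤ ∫⁻ x in Set.Icc (y - σ) y, gaussianPDF y ((σ ^ 2).toNNReal) x := by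
          refine setLIntegral_mono (measurable_gaussianPDF _ _) fun x hx => ?_
          rw [gaussianPDF]
          refine ENNReal.ofReal_le_ofReal ?_
          rw [gaussianPDFReal, hvc, ← ha, div_eq_mul_inv]
          refine mul_le_mul_of_nonneg_left ?_ hapos.le
          have : (x - y) ^ 2 ≤ σ ^ 2 := by
            have h1 := hx.1; have h2 := hx.2
            nlinarith
          have h3 : -(1/2 : ℝ) ≤ -(x - y) ^ 2 / (2 * σ ^ 2) := by
            rw [le_div_iff₀ (by positivity)]; linarith
          have h4 := Real.add_one_le_exp (-(x - y) ^ 2 / (2 * σ ^ 2))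
          norm_num
          linarith
      _ = gaussianReal y ((σ ^ 2).toNNReal) (Set.Icc (y - σ) y) := by
          rw [gaussianReal_apply _ hv]
      _ ≤ _ := by
          refine measure_mono (Set.Icc_subset_Icc ?_ ?_)
          · linarith [hy.1]
          · linarith [hy.2]
  have hup : gaussianReal y ((σ ^ 2).toNNReal) (Set.Icc (-R) R ∩ T) ≤ ENNReal.ofReal a * volume T := by
    refine (measure_mono Set.inter_subset_right).trans ?_
    rw [gaussianReal_apply _ hv, ← setLIntegral_const]
    refine setLIntegral_mono measurable_const fun x hx => ?_
    rw [gaussianPDF]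
    refine ENNReal.ofReal_le_ofReal ?_
    rw [gaussianPDFReal, hvc, ← ha]
    refine mul_le_of_le_one_right hapos.le ?_
    rw [Real.exp_le_one_iff]
    have : 0 ≤ (x - y) ^ 2 / (2 * σ ^ 2) := by positivity
    rw [neg_div]; linarith
  have hpos : 0 < ENNReal.ofReal (a / 2 * σ) := by
    rw [ENNReal.ofReal_pos]; positivity
  refine ⟨(hpos.trans_le hlow).ne', ?_⟩
  rw [cond_apply measurableSet_Icc]
  calc _ ≤ (ENNReal.ofReal (a / 2 * σ))⁻¹ * (ENNReal.ofReal a * volume T) := by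
        gcongr
    _ = _ := by
        rw [← mul_assoc, ← ENNReal.ofReal_inv_of_pos (by positivity), ← ENNReal.ofReal_mul (by positivity)]
        congr 2
        field_simp

/-- sublevel strip of a quadratic. -/
theorem quad_vol (a β γ lo l v : ℝ) (ha : 0 < a) (hl : l ≤ a * v ^ 2) (hv : 0 ≤ v) :
    volume {s : ℝ | lo ≤ a * s ^ 2 + β * s + γ ∧ a * s ^ 2 + β * s + γ ≤ lo + l}
      ≤ ENNReal.ofReal (2 * v) := by
  set T := {s : ℝ | lo ≤ a * s ^ 2 + β * s + γ ∧ a * s ^ 2 + β * s + γ ≤ lo + l} with hT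
  set s0 := -β / (2 * a) with hs0
  have hβ : β = - (2 * a * s0) := by rw [hs0]; field_simp
  have key : ∀ s ∈ T, ∀ t ∈ T, (s - s0) ^ 2 - (t - s0) ^ 2 ≤ v ^ 2 := by
    intro s hs t ht
    have h1 := hs.2; have h2 := ht.1
    rw [hβ] at h1 h2
    have : a * ((s - s0) ^ 2 - (t - s0) ^ 2) ≤ a * v ^ 2 := by nlinarith
    exact le_of_mul_le_mul_left this ha
  have hd : ∀ U : Set ℝ, (∀ s ∈ U, ∀ t ∈ U, |s - t| ≤ v) → volume U ≤ ENNReal.ofReal v := by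
    intro U hU
    refine (Real.volume_le_diam U).trans ?_
    refine Metric.ediam_le fun s hs t ht => ?_
    rw [edist_dist, Real.dist_eq]
    exact ENNReal.ofReal_le_ofReal (hU s hs t ht)
  have hsub : T ⊆ (T ∩ Set.Ici s0) ∪ (T ∩ Set.Iic s0) := by
    intro s hs
    rcases le_total s0 s with h | h
    · exact Or.inl ⟨hs, h⟩
    · exact Or.inr ⟨hs, h⟩
  calc volume T ≤ volume (T ∩ Set.Ici s0) + volume (T ∩ Set.Iic s0) :=
        (measure_mono hsub).trans (measure_union_le _ _)
    _ ≤ ENNReal.ofReal v + ENNReal.ofReal v := by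
        gcongr
        · refine hd _ fun s hs t ht => ?_
          have h1 := key s hs.1 t ht.1
          have h2 := key t ht.1 s hs.1
          have h3 : s0 ≤ s := hs.2
          have h4 : s0 ≤ t := ht.2
          have h5 : (s - t) ^ 2 ≤ v ^ 2 := by
            rcases le_total s t with h | h <;> nlinarith
          exact abs_le.2 (abs_le_of_sq_le_sq' h5 hv)
        · refine hd _ fun s hs t ht => ?_
          have h1 := key s hs.1 t ht.1
          have h2 := key t ht.1 s hs.1
          have h3 : s ≤ s0 := hs.2
          have h4 : t ≤ s0 := ht.2
          have h5 : (s - t) ^ 2 ≤ v ^ 2 := by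
            rcases le_total s t with h | h <;> nlinarith
          exact abs_le.2 (abs_le_of_sq_le_sq' h5 hv)
    _ = _ := by rw [← ENNReal.ofReal_add hv hv]; congr 1; ring


/-- Value of a cluster sum after correcting the starting value `β` by the points of `A` that
moved before `b`. -/
noncomputable def asum {n k : ℕ} (A : Finset (Fin n)) (π : Fin n → ℕ) (lab src : A → Fin k)
    (b : Fin n) (i : Fin k) (β : ℝ) (v : Fin n → ℝ) : ℝ :=
  β + ∑ a : A, if π a < π b then
    (if lab a = i then v a else 0) - (if src a = i then v a else 0) else 0

theorem asum_congr {n k : ℕ} (A : Finset (Fin n)) (π : Fin n → ℕ) (lab src : A → Fin k)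
    (b : Fin n) (i : Fin k) (β : ℝ) (v w : Fin n → ℝ) (h : ∀ a, π a < π b → v a = w a) :
    asum A π lab src b i β v = asum A π lab src b i β w := by
  unfold asum
  congr 1
  refine Finset.sum_congr rfl fun a _ => ?_
  split_ifs with h1 <;> simp_all

theorem asum_sub {n k : ℕ} (A : Finset (Fin n)) (π : Fin n → ℕ) (lab src : A → Fin k)
    (b : Fin n) (i : Fin k) (β β' : ℝ) (v : Fin n → ℝ) :
    asum A π lab src b i β v - asum A π lab src b i β' v = β - β' := by
  unfold asum; ring

theorem wsum_asum {n k : ℕ} (A : Finset (Fin n)) (π : Fin n → ℕ) (lab src : A → Fin k)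
    (b : Fin n) (cl cl0 : Fin n → Fin k) (hlab : ∀ a : A, π a < π b → lab a = cl a)
    (hsrc : ∀ a : A, src a = cl0 a) (hout : ∀ j, ¬ (j ∈ A ∧ π j < π b) → cl j = cl0 j)
    (i : Fin k) (v : Fin n → ℝ) :
    wsum cl i v = asum A π lab src b i (wsum cl0 i v) v := by
  have h1 : ∑ a : A, (if π a < π b then
      (if lab a = i then v a else 0) - (if src a = i then v a else 0) else 0)
      = ∑ a ∈ A, ((if cl a = i then v a else 0) - (if cl0 a = i then v a else 0)) := by
    rw [← Finset.sum_coe_sort A]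
    refine Finset.sum_congr rfl fun a _ => ?_
    by_cases h : π a < π b
    · rw [if_pos h, hlab a h, hsrc a]
    · rw [if_neg h, hout a (fun h' => h h'.2), sub_self]
  have h2 : ∑ a ∈ A, ((if cl a = i then v a else 0) - (if cl0 a = i then v a else 0))
      = ∑ a, ((if cl a = i then v a else 0) - (if cl0 a = i then v a else 0)) := by
    refine Finset.sum_subset (Finset.subset_univ _) fun j _ hj => ?_
    rw [hout j (fun h => hj h.1), sub_self]
  unfold asum
  rw [h1, h2, Finset.sum_sub_distrib]
  unfold wsum
  ring

/-- The event that the first move of `b` has small approximate gain. -/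
def evB {n k d : ℕ} (A : Finset (Fin n)) (π : Fin n → ℕ) (sz : Fin k → ℕ)
    (g : Fin k → Fin d → ℝ) (lab src : A → Fin k) (b : Fin n) (i j : Fin k) (lo l : ℝ) :
    Set (Fin n → Fin d → ℝ) :=
  {ω | (2 ≤ asum A π lab src b i (sz i) (fun _ => 1) ∧
      asum A π lab src b i (sz i) (fun _ => 1) ≤ n ∧
      0 ≤ asum A π lab src b j (sz j) (fun _ => 1) ∧
      asum A π lab src b j (sz j) (fun _ => 1) + 1 ≤ n) ∧
    lo ≤ ∑ r, gainC (asum A π lab src b i (sz i) (fun _ => 1))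
        (asum A π lab src b j (sz j) (fun _ => 1))
        (asum A π lab src b i (sz i * g i r) (fun a => ω a r))
        (asum A π lab src b j (sz j * g j r) (fun a => ω a r)) (ω b r) ∧
    ∑ r, gainC (asum A π lab src b i (sz i) (fun _ => 1))
        (asum A π lab src b j (sz j) (fun _ => 1))
        (asum A π lab src b i (sz i * g i r) (fun a => ω a r))
        (asum A π lab src b j (sz j * g j r) (fun a => ω a r)) (ω b r) ≤ lo + l}

theorem measurable_asum {n k d : ℕ} (A : Finset (Fin n)) (π : Fin n → ℕ) (lab src : A → Fin k)
    (b : Fin n) (i : Fin k) (β : ℝ) (r : Fin d) :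
    Measurable fun ω : Fin n → Fin d → ℝ => asum A π lab src b i β (fun a => ω a r) := by
  unfold asum
  refine measurable_const.add (Finset.measurable_sum _ fun a _ => ?_)
  split_ifs <;> fun_prop

theorem measurableSet_evB {n k d : ℕ} (A : Finset (Fin n)) (π : Fin n → ℕ) (sz : Fin k → ℕ)
    (g : Fin k → Fin d → ℝ) (lab src : A → Fin k) (b : Fin n) (i j : Fin k) (lo l : ℝ) :
    MeasurableSet (evB A π sz g lab src b i j lo l) := by
  have hm : Measurable fun ω : Fin n → Fin d → ℝ =>
      ∑ r, gainC (asum A π lab src b i (sz i) (fun _ => 1))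
        (asum A π lab src b j (sz j) (fun _ => 1))
        (asum A π lab src b i (sz i * g i r) (fun a => ω a r))
        (asum A π lab src b j (sz j * g j r) (fun a => ω a r)) (ω b r) := by
    refine Finset.measurable_sum _ fun r _ => ?_
    have h1 := measurable_asum A π lab src b i (sz i * g i r) r
    have h2 := measurable_asum A π lab src b j (sz j * g j r) r
    unfold gainC
    fun_prop
  unfold evB
  rw [Set.ofPred_and]
  refine (MeasurableSet.const _).inter ?_
  rw [Set.ofPred_and]
  exact (measurableSet_le measurable_const hm).inter (measurableSet_le hm measurable_const)

theorem evB_dep {n k d : ℕ} (A : Finset (Fin n)) (π : Fin n → ℕ) (sz : Fin k → ℕ)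
    (g : Fin k → Fin d → ℝ) (lab src : A → Fin k) (b : Fin n) (i j : Fin k) (lo l : ℝ)
    (c : Fin n) (hc : π b < π c) (ω : Fin n → Fin d → ℝ) (x : Fin d → ℝ) :
    Function.update ω c x ∈ evB A π sz g lab src b i j lo l
      ↔ ω ∈ evB A π sz g lab src b i j lo l := by
  have h1 : ∀ i β r, asum A π lab src b i β (fun a => Function.update ω c x a r)
      = asum A π lab src b i β (fun a => ω a r) := by
    intro i β r
    refine asum_congr _ _ _ _ _ _ _ _ _ fun a ha => ?_
    have : a ≠ c := by rintro rfl; omega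
    rw [Function.update_of_ne this]
  have h2 : Function.update ω c x b = ω b := by
    have : b ≠ c := by rintro rfl; omega
    rw [Function.update_of_ne this]
  simp only [evB, Set.mem_ofPred_eq, h1, h2]

theorem one_point {d : ℕ} (hd : 0 < d) (ν : Fin d → Measure ℝ) [∀ r, IsProbabilityMeasure (ν r)]
    (σ : ℝ) (hσ : 0 < σ) (hν : ∀ r T, ν r T ≤ ENNReal.ofReal (2 / σ) * volume T)
    (n : ℕ) (P Q : ℝ) (hP : 2 ≤ P) (hPn : P ≤ n) (hQ : 0 ≤ Q) (hQn : Q + 1 ≤ n)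
    (s t : Fin d → ℝ) (lo l v : ℝ) (hv : 0 ≤ v) (hl : n * l ≤ v ^ 2) :
    Measure.pi ν {x | lo ≤ ∑ r, gainC P Q (s r) (t r) (x r) ∧
      ∑ r, gainC P Q (s r) (t r) (x r) ≤ lo + l} ≤ ENNReal.ofReal (4 * v / σ) := by
  set B := {x : Fin d → ℝ | lo ≤ ∑ r, gainC P Q (s r) (t r) (x r) ∧
      ∑ r, gainC P Q (s r) (t r) (x r) ≤ lo + l} with hB
  have hm : Measurable fun x : Fin d → ℝ => ∑ r, gainC P Q (s r) (t r) (x r) := by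
    unfold gainC; fun_prop
  have := pi_inter_le ν (fun _ => 0) (ENNReal.ofReal (4 * v / σ)) (fun _ => B) {⟨0, hd⟩}
    (by simp)
    (fun _ _ => by
      rw [hB, Set.ofPred_and]
      exact (measurableSet_le measurable_const hm).inter (measurableSet_le hm measurable_const))
    (by simp) ?_
  · simpa using this
  intro r _ ω
  have hn : (0 : ℝ) < n := by linarith
  set a := 1 / (P - 1) + 1 / (Q + 1) with ha
  have hP1 : P - 1 ≠ 0 := by linarith
  have hQ1 : Q + 1 ≠ 0 := by linarith
  have ha1 : 1 / (n : ℝ) ≤ a := by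
    have : 1 / (n : ℝ) ≤ 1 / (Q + 1) := one_div_le_one_div_of_le (by linarith) hQn
    have : 0 ≤ 1 / (P - 1) := div_nonneg zero_le_one (by linarith)
    linarith
  have hapos : 0 < a := lt_of_lt_of_le (by positivity) ha1
  have hset : {x | Function.update ω r x ∈ B} ⊆
      {y : ℝ | lo ≤ a * y ^ 2 + (-2 * s r / (P - 1) + 2 * t r / (Q + 1)) * y
          + (s r ^ 2 / (P - 1) - s r ^ 2 / P + t r ^ 2 / (Q + 1) - t r ^ 2 / Q
            + ∑ r' ∈ Finset.univ.erase r, gainC P Q (s r') (t r') (ω r')) ∧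
        a * y ^ 2 + (-2 * s r / (P - 1) + 2 * t r / (Q + 1)) * y
          + (s r ^ 2 / (P - 1) - s r ^ 2 / P + t r ^ 2 / (Q + 1) - t r ^ 2 / Q
            + ∑ r' ∈ Finset.univ.erase r, gainC P Q (s r') (t r') (ω r')) ≤ lo + l} := by
    intro y hy
    have hy' : lo ≤ ∑ r', gainC P Q (s r') (t r') (Function.update ω r y r') ∧
      ∑ r', gainC P Q (s r') (t r') (Function.update ω r y r') ≤ lo + l := hy
    have he : ∑ r', gainC P Q (s r') (t r') (Function.update ω r y r')
        = a * y ^ 2 + (-2 * s r / (P - 1) + 2 * t r / (Q + 1)) * y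
          + (s r ^ 2 / (P - 1) - s r ^ 2 / P + t r ^ 2 / (Q + 1) - t r ^ 2 / Q
            + ∑ r' ∈ Finset.univ.erase r, gainC P Q (s r') (t r') (ω r')) := by
      rw [← Finset.add_sum_erase _ _ (Finset.mem_univ r), Function.update_self]
      have : ∑ r' ∈ Finset.univ.erase r, gainC P Q (s r') (t r') (Function.update ω r y r')
          = ∑ r' ∈ Finset.univ.erase r, gainC P Q (s r') (t r') (ω r') :=
        Finset.sum_congr rfl fun r' hr' => by
          rw [Function.update_of_ne (Finset.ne_of_mem_erase hr')]
      rw [this, ha]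
      unfold gainC
      ring
    rw [he] at hy'
    exact hy'
  have hlv : l ≤ a * v ^ 2 := by
    calc l ≤ 1 / (n : ℝ) * v ^ 2 := by
          rw [one_div_mul_eq_div, le_div_iff₀ hn]; linarith
      _ ≤ _ := by gcongr
  calc ν r {x | Function.update ω r x ∈ B} ≤ ENNReal.ofReal (2 / σ) * volume _ :=
        (measure_mono hset).trans (hν r _)
    _ ≤ ENNReal.ofReal (2 / σ) * ENNReal.ofReal (2 * v) := by
        gcongr
        exact quad_vol a _ _ lo l v hapos hlv hv
    _ = _ := by
        rw [← ENNReal.ofReal_mul (by positivity)]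
        congr 1; ring

theorem evB_prob {n k d : ℕ} (hd : 0 < d) (ν : Fin d → Measure ℝ)
    [∀ r, IsProbabilityMeasure (ν r)]
    (σ : ℝ) (hσ : 0 < σ) (hν : ∀ r T, ν r T ≤ ENNReal.ofReal (2 / σ) * volume T)
    (A : Finset (Fin n)) (π : Fin n → ℕ) (sz : Fin k → ℕ)
    (g : Fin k → Fin d → ℝ) (lab src : A → Fin k) (b : Fin n) (i j : Fin k) (lo l v : ℝ)
    (hv : 0 ≤ v) (hl : n * l ≤ v ^ 2) (ω : Fin n → Fin d → ℝ) :
    Measure.pi ν {x | Function.update ω b x ∈ evB A π sz g lab src b i j lo l}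
      ≤ ENNReal.ofReal (4 * v / σ) := by
  have h1 : ∀ x i β r, asum A π lab src b i β (fun a => Function.update ω b x a r)
      = asum A π lab src b i β (fun a => ω a r) := by
    intro x i β r
    refine asum_congr _ _ _ _ _ _ _ _ _ fun a ha => ?_
    have : a ≠ b := by rintro rfl; omega
    rw [Function.update_of_ne this]
  simp only [evB, Set.mem_ofPred_eq, h1, Function.update_self]
  by_cases hc : (2 ≤ asum A π lab src b i (sz i) (fun _ => 1) ∧
      asum A π lab src b i (sz i) (fun _ => 1) ≤ n ∧
      0 ≤ asum A π lab src b j (sz j) (fun _ => 1) ∧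
      asum A π lab src b j (sz j) (fun _ => 1) + 1 ≤ n)
  · refine (measure_mono ?_).trans (one_point hd ν σ hσ hν n _ _ hc.1 hc.2.1 hc.2.2.1 hc.2.2.2
      (fun r => asum A π lab src b i (sz i * g i r) (fun a => ω a r))
      (fun r => asum A π lab src b j (sz j * g j r) (fun a => ω a r)) lo l v hv hl)
    intro x hx
    exact hx.2
  · simp [hc]

/-- Grid points. -/
noncomputable def gridPt (N : ℕ) (D : ℝ) (r : Fin N) : ℝ := -(D / 2) + D * r / N

theorem exists_grid (N : ℕ) (hN : 0 < N) (D v : ℝ) (hD : 0 < D) (hv : |v| ≤ D / 2) :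
    ∃ r : Fin N, |v - gridPt N D r| ≤ D / N := by
  have hN' : (0 : ℝ) < N := by exact_mod_cast hN
  obtain ⟨h1, h2⟩ := abs_le.1 hv
  set y := (v + D / 2) * N / D with hy
  have hy0 : 0 ≤ y := by
    apply div_nonneg _ hD.le
    apply mul_nonneg _ hN'.le; linarith
  have hyN : y ≤ N := by
    rw [hy, div_le_iff₀ hD]; nlinarith
  have hvy : v = -(D / 2) + D * y / N := by rw [hy]; field_simp; ring
  have key : ∀ r : ℕ, (r : ℝ) ≤ y → y ≤ r + 1 → |v - (-(D / 2) + D * r / N)| ≤ D / N := by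
    intro r hr1 hr2
    have : v - (-(D / 2) + D * r / N) = D / N * (y - r) := by rw [hvy]; ring
    rw [this, abs_of_nonneg (mul_nonneg (by positivity) (by linarith))]
    exact mul_le_of_le_one_right (by positivity) (by linarith)
  by_cases hlt : y < N
  · refine ⟨⟨⌊y⌋₊, (Nat.floor_lt hy0).2 hlt⟩, key _ (Nat.floor_le hy0) (Nat.lt_floor_add_one y).le⟩
  · have hyeq : y = N := le_antisymm hyN (not_lt.1 hlt)
    have hc : ((N - 1 : ℕ) : ℝ) = N - 1 := by rw [Nat.cast_sub hN]; simp
    exact ⟨⟨N - 1, by omega⟩, key _ (by rw [hc, hyeq]; linarith) (by rw [hc, hyeq]; linarith)⟩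


/-- Starting labels recovered from the labels after first moves. -/
def srcOf {n k : ℕ} {A : Finset (Fin n)} (f : A) (i0 : Fin k) (dat : A → A → Fin k) (a : A) :
    Fin k := if a = f then i0 else dat f a

/-- The property of a sequence of iterations considered in the main theorem. -/
def goodSeq {n k d : ℕ} (A : Finset (Fin n)) (sz : Fin k → ℕ) (π : Fin n → ℕ) (ε : ℝ)
    (ω : Fin n → Fin d → ℝ) (L : ℕ) (seq : ℕ → Fin n → Fin k) : Prop :=
  (∀ t < L, SingleMove (seq t) (seq (t + 1)) ∧
    kmeansPot (fun i => toEuc (ω i)) (seq (t + 1))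
      < kmeansPot (fun i => toEuc (ω i)) (seq t)) ∧
  {x : Fin n | ∃ t < L, seq (t + 1) x ≠ seq t x} = ↑A ∧
  (∀ i : Fin k, (clusterIdx (seq 0) i).card = sz i) ∧
  (∀ a ∈ A, ∀ b ∈ A, π a < π b →
    sInf {t : ℕ | t < L ∧ seq (t + 1) a ≠ seq t a}
      < sInf {t : ℕ | t < L ∧ seq (t + 1) b ≠ seq t b}) ∧
  kmeansPot (fun i => toEuc (ω i)) (seq 0)
      - kmeansPot (fun i => toEuc (ω i)) (seq L) ≤ ε

theorem goodSeq_two_le {n k d : ℕ} (A : Finset (Fin n)) (sz : Fin k → ℕ) (π : Fin n → ℕ) (ε : ℝ)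
    (ω : Fin n → Fin d → ℝ) (L : ℕ) (seq : ℕ → Fin n → Fin k) (h : goodSeq A sz π ε ω L seq)
    (hA : A.Nonempty) : 2 ≤ n ∧ 2 ≤ k := by
  obtain ⟨a, ha⟩ := hA
  have ha' : a ∈ (A : Set (Fin n)) := ha
  rw [← h.2.1] at ha'
  obtain ⟨t, ht, hne⟩ := ha'
  obtain ⟨⟨j, hj1, hj2⟩, hlt⟩ := h.1 t ht
  have h2 := two_le_of_gain ω _ _ j hj1 hj2 hlt
  have h3 := h2.trans (wsum_le_n _ _)
  refine ⟨by exact_mod_cast h3, ?_⟩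
  by_contra hk
  apply hne
  have := (seq t a).2
  have := (seq (t+1) a).2
  ext; omega

theorem det_main {n k d : ℕ} (A : Finset (Fin n)) (sz : Fin k → ℕ) (π : Fin n → ℕ)
    (hinj : Set.InjOn π (A : Set (Fin n))) (ε D : ℝ) (hε : 0 < ε) (hD : 2 ≤ D)
    (hnε : n * ε ≤ 1) (N : ℕ) (hN : 0 < N) (hDN : D / N ≤ 2 * ε)
    (ω : Fin n → Fin d → ℝ) (hω : ∀ j r, |ω j r| ≤ D / 2)
    (L : ℕ) (seq : ℕ → Fin n → Fin k) (h : goodSeq A sz π ε ω L seq)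
    (f : A) (hf : ∀ a : A, π f ≤ π a) :
    ∃ (g : Fin k → Fin d → Fin N) (i0 : Fin k) (dat : A → A → Fin k), ∀ b : A,
      ω ∈ evB A π sz (fun i r => gridPt N D (g i r)) (dat b) (srcOf f i0 dat) b
        (srcOf f i0 dat b) (dat b b) (-(16 * d * n * ε * D)) (ε + 2 * (16 * d * n * ε * D)) := by
  obtain ⟨hstep, hact, hsz, hord, hgain⟩ := h
  set τ : Fin n → ℕ := fun a => sInf {t : ℕ | t < L ∧ seq (t + 1) a ≠ seq t a} with hτdef
  have hτ : ∀ a ∈ A, τ a < L ∧ seq (τ a + 1) a ≠ seq (τ a) a := by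
    intro a ha
    have ha' : a ∈ (A : Set (Fin n)) := ha
    rw [← hact] at ha'
    obtain ⟨t, ht⟩ := ha'
    exact Nat.sInf_mem (s := {t : ℕ | t < L ∧ seq (t + 1) a ≠ seq t a}) ⟨t, ht⟩
  have hbefore : ∀ a ∈ A, ∀ t ≤ τ a, seq t a = seq 0 a := by
    intro a ha t
    induction t with
    | zero => simp
    | succ t ih =>
      intro ht
      rw [← ih (by omega)]
      by_contra hne
      have : τ a ≤ t := Nat.sInf_le ⟨by have := (hτ a ha).1; omega, hne⟩
      omega
  have hinact : ∀ j, j ∉ A → ∀ t ≤ L, seq t j = seq 0 j := by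
    intro j hj t
    induction t with
    | zero => simp
    | succ t ih =>
      intro ht
      rw [← ih (by omega)]
      by_contra hne
      apply hj
      have : j ∈ (A : Set (Fin n)) := by
        rw [← hact]; exact ⟨t, by omega, hne⟩
      exact this
  have hmono : ∀ s t, s ≤ t → t ≤ L → kmeansPot (fun i => toEuc (ω i)) (seq t)
      ≤ kmeansPot (fun i => toEuc (ω i)) (seq s) := by
    intro s t hst
    induction t, hst using Nat.le_induction with
    | base => simp
    | succ t _ ih => intro ht; exact ((hstep t (by omega)).2.le).trans (ih (by omega))
  have hmove : ∀ b ∈ A, ∀ j, j ≠ b → seq (τ b + 1) j = seq (τ b) j := by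
    intro b hb j hj
    obtain ⟨⟨c, hc1, hc2⟩, -⟩ := hstep (τ b) (hτ b hb).1
    have hcb : b = c := by
      by_contra hne
      exact (hτ b hb).2 (hc2 b hne)
    exact hc2 j (hcb ▸ hj)
  -- grid points
  have hsz' : ∀ i, wsum (seq 0) i (fun _ => 1) = sz i := fun i => by rw [wsum_one, hsz]
  have hszn : ∀ i, (sz i : ℝ) ≤ n := fun i => by rw [← hsz']; exact wsum_le_n _ _
  have hgrid : ∀ (i : Fin k) (r : Fin d), ∃ m : Fin N,
      |wsum (seq 0) i (fun j => ω j r) - sz i * gridPt N D m| ≤ n * (2 * ε) := by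
    intro i r
    have hw := wsum_abs_le (seq 0) i (fun j => ω j r) (D / 2) (fun j => hω j r)
    rw [hsz'] at hw
    rcases Nat.eq_zero_or_pos (sz i) with h0 | h0
    · refine ⟨⟨0, hN⟩, ?_⟩
      rw [h0] at hw ⊢
      simp only [Nat.cast_zero, zero_mul, sub_zero] at hw ⊢
      exact hw.trans (by positivity)
    · have h0' : (0 : ℝ) < sz i := by exact_mod_cast h0
      obtain ⟨m, hm⟩ := exists_grid N hN D (wsum (seq 0) i (fun j => ω j r) / sz i) (by linarith)
        (by rw [abs_div, abs_of_pos h0', div_le_iff₀ h0']; linarith)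
      refine ⟨m, ?_⟩
      have : wsum (seq 0) i (fun j => ω j r) - sz i * gridPt N D m
          = sz i * (wsum (seq 0) i (fun j => ω j r) / sz i - gridPt N D m) := by field_simp
      rw [this, abs_mul, abs_of_pos h0']
      have := hszn i
      have := hm.trans hDN
      gcongr
  choose g hg using hgrid
  refine ⟨g, seq 0 f, fun b a => seq (τ b + 1) a, ?_⟩
  have hsrc : ∀ a : A, srcOf f (seq 0 f) (fun b a : A => seq (τ b + 1) a) a = seq 0 a := by
    intro a
    unfold srcOf
    split_ifs with haf
    · rw [haf]
    · have hlt : π f < π a := lt_of_le_of_ne (hf a) fun he =>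
        haf (Subtype.ext (hinj a.2 f.2 he.symm))
      exact hbefore a a.2 _ (hord f f.2 a a.2 hlt)
  intro b
  have hb := hτ b b.2
  have hb0 : seq (τ b) b = seq 0 b := hbefore b b.2 _ le_rfl
  have hlab : ∀ a : A, π a < π b → seq (τ b + 1) a = seq (τ b) a := by
    intro a ha
    refine hmove b b.2 a ?_
    intro hab
    rw [hab] at ha
    exact lt_irrefl _ ha
  have hout : ∀ j, ¬ (j ∈ A ∧ π j < π b) → seq (τ b) j = seq 0 j := by
    intro j hj
    by_cases hjA : j ∈ A
    · have h1 : π b ≤ π j := by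
        by_contra h1; exact hj ⟨hjA, not_le.1 h1⟩
      rcases h1.lt_or_eq with h1 | h1
      · exact hbefore j hjA _ (hord b b.2 j hjA h1).le
      · have : (b : Fin n) = j := hinj b.2 hjA h1
        rw [← this]; exact hb0
    · exact hinact j hjA _ hb.1.le
  set src := srcOf f (seq 0 f) (fun b a : A => seq (τ b + 1) a) with hsrcdef
  have hws := wsum_asum A π (fun a : A => seq (τ b + 1) a) src b (seq (τ b)) (seq 0) hlab hsrc hout
  have hP : ∀ i, asum A π (fun a : A => seq (τ b + 1) a) src b i (sz i) (fun _ => 1)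
      = wsum (seq (τ b)) i (fun _ => 1) := fun i => by rw [hws, hsz']
  have hmv := hmove b b.2
  have hlt := (hstep (τ b) hb.1).2
  have hp2 := two_le_of_gain ω _ _ b hb.2 hmv hlt
  have hge := gain_eq ω _ _ b hb.2 hmv
  have hle : kmeansPot (fun i => toEuc (ω i)) (seq (τ b))
      - kmeansPot (fun i => toEuc (ω i)) (seq (τ b + 1)) ≤ ε := by
    have h1 := hmono 0 (τ b) (by omega) hb.1.le
    have h2 := hmono (τ b + 1) L hb.1 le_rfl
    linarith
  -- the moved cluster sums
  have hmvs := wsum_move (seq (τ b)) (seq (τ b + 1)) b hb.2 hmv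
  set i := seq (τ b) b with hi
  set j := seq (τ b + 1) b with hj
  have hsi : src b = i := by rw [hsrc b, hb0]
  have hi' : ∀ v : Fin n → ℝ, wsum (seq (τ b + 1)) i v = wsum (seq (τ b)) i v - v b := by
    intro v; rw [hmvs i v, if_pos rfl, if_neg hb.2, add_zero]
  have hj' : ∀ v : Fin n → ℝ, wsum (seq (τ b + 1)) j v = wsum (seq (τ b)) j v + v b := by
    intro v; rw [hmvs j v, if_neg hb.2.symm, if_pos rfl, sub_zero]
  have hjn : wsum (seq (τ b)) j (fun _ => 1) + 1 ≤ n := by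
    have := hj' (fun _ => 1)
    rw [← this]; exact wsum_le_n _ _
  have herr : ∀ r, |gainC (wsum (seq (τ b)) i fun _ => 1) (wsum (seq (τ b)) j fun _ => 1)
        (wsum (seq (τ b)) i fun j => ω j r) (wsum (seq (τ b)) j fun j => ω j r) (ω b r)
      - gainC (wsum (seq (τ b)) i fun _ => 1) (wsum (seq (τ b)) j fun _ => 1)
        (asum A π (fun a : A => seq (τ b + 1) a) src b i (sz i * gridPt N D (g i r)) (fun a => ω a r))
        (asum A π (fun a : A => seq (τ b + 1) a) src b j (sz j * gridPt N D (g j r)) (fun a => ω a r))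
        (ω b r)| ≤ 16 * n * ε * D := by
    intro r
    have hn0 : (0 : ℝ) ≤ n := by positivity
    refine (gainC_err _ _ _ _ _ _ _ D (n * (2 * ε)) hp2 (wsum_zero_or _ _) (by linarith)
      (by positivity) ?_ ?_ ?_ ?_ ?_ ?_).trans ?_
    · have := wsum_abs_le (seq (τ b + 1)) i (fun j => ω j r) (D / 2) (fun j => hω j r)
      rw [hi', hi'] at this
      exact this
    · exact wsum_abs_le _ _ _ _ (fun j => hω j r)
    · have := wsum_abs_le (seq (τ b + 1)) j (fun j => ω j r) (D / 2) (fun j => hω j r)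
      rw [hj', hj'] at this
      exact this
    · exact wsum_abs_le _ _ _ _ (fun j => hω j r)
    · rw [hws, asum_sub]; exact hg _ _
    · rw [hws, asum_sub]; exact hg _ _
    · have h0 : 0 ≤ n * ε := by positivity
      nlinarith
  have htot := Finset.abs_sum_le_sum_abs (fun r => gainC (wsum (seq (τ b)) i fun _ => 1) (wsum (seq (τ b)) j fun _ => 1)
        (wsum (seq (τ b)) i fun j => ω j r) (wsum (seq (τ b)) j fun j => ω j r) (ω b r)
      - gainC (wsum (seq (τ b)) i fun _ => 1) (wsum (seq (τ b)) j fun _ => 1)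
        (asum A π (fun a : A => seq (τ b + 1) a) src b i (sz i * gridPt N D (g i r)) (fun a => ω a r))
        (asum A π (fun a : A => seq (τ b + 1) a) src b j (sz j * gridPt N D (g j r)) (fun a => ω a r))
        (ω b r)) Finset.univ
  have htot2 := htot.trans (Finset.sum_le_card_nsmul _ _ _ fun r _ => herr r)
  rw [Finset.sum_sub_distrib, ← hge] at htot2
  simp only [Finset.card_univ, Fintype.card_fin, nsmul_eq_mul] at htot2
  obtain ⟨ht1, ht2⟩ := abs_le.1 htot2
  show _ ∧ _
  simp only [hsi, hP]
  refine ⟨⟨hp2, wsum_le_n _ _, wsum_nonneg _ _, hjn⟩, ?_, ?_⟩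
  · linarith
  · linarith


theorem cubeD_lower (n k d M : ℕ) (c : ℝ) (hn : 1 ≤ n) (hM : 1 ≤ M) (h : M ≤ n * k * d) (hc : 0 ≤ c)
    (hc2 : c ^ 2 ≤ 2 * n * Real.log M) : c ≤ cubeD n k d := by
  unfold cubeD
  refine Real.le_sqrt_of_sq_le (hc2.trans ?_)
  have h1 : (M : ℝ) ≤ (n : ℝ) * k * d := by exact_mod_cast h
  have h2 : (0 : ℝ) < M := by exact_mod_cast hM
  gcongr

theorem box_eq (n d : ℕ) (R : ℝ) :
    {ω : Fin n → Fin d → ℝ | ∀ (i : Fin n) (j : Fin d), ω i j ∈ Set.Icc (-R) R}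
      = Set.univ.pi fun _ => Set.univ.pi fun _ => Set.Icc (-R) R := by
  ext ω; simp only [Set.mem_univ_pi]; rfl

theorem box_meas (n d : ℕ) (R : ℝ) : MeasurableSet
    {ω : Fin n → Fin d → ℝ | ∀ (i : Fin n) (j : Fin d), ω i j ∈ Set.Icc (-R) R} := by
  rw [box_eq]
  exact MeasurableSet.univ_pi fun _ => MeasurableSet.univ_pi fun _ => measurableSet_Icc

instance perturbed_prob (n d : ℕ) (Y : Fin n → Fin d → ℝ) (σ : ℝ) :
    IsProbabilityMeasure (perturbedPoints n d Y σ) := by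
  unfold perturbedPoints; infer_instance

theorem cond_eq_prod (n d : ℕ) (Y : Fin n → Fin d → ℝ) (σ R : ℝ) (hσ : 0 < σ) (hσ1 : σ ≤ 1)
    (hY : ∀ i j, Y i j ∈ Set.Icc (0 : ℝ) 1) (hR : 1 ≤ R) :
    ProbabilityTheory.cond (perturbedPoints n d Y σ)
      {ω : Fin n → Fin d → ℝ | ∀ (i : Fin n) (j : Fin d), ω i j ∈ Set.Icc (-R) R}
      = Measure.pi fun i => Measure.pi fun j =>
        ProbabilityTheory.cond (gaussianReal (Y i j) ((σ ^ 2).toNNReal)) (Set.Icc (-R) R) := by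
  have h0 : ∀ i j, gaussianReal (Y i j) ((σ ^ 2).toNNReal) (Set.Icc (-R) R) ≠ 0 := fun i j =>
    (gauss_cond_le (Y i j) σ R hσ hσ1 (hY i j) hR ∅).1
  rw [box_eq, perturbedPoints, cond_pi_eq _ _
    (fun _ => MeasurableSet.univ_pi fun _ => measurableSet_Icc)]
  · congr 1
    funext i
    rw [cond_pi_eq _ _ (fun _ => measurableSet_Icc) (h0 i)]
  · intro i
    rw [Measure.pi_pi]
    exact Finset.prod_ne_zero_iff.2 fun j _ => h0 i j

theorem prob_main {n k d : ℕ} (hn : 2 ≤ n) (hk : 2 ≤ k) (hd : 0 < d)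
    (A : Finset (Fin n)) (hA : A.Nonempty) (sz : Fin k → ℕ) (π : Fin n → ℕ)
    (hinj : Set.InjOn π (A : Set (Fin n)))
    (Y : Fin n → Fin d → ℝ) (hY : ∀ i j, Y i j ∈ Set.Icc (0 : ℝ) 1) (σ : ℝ) (hσ : 0 < σ)
    (hσ1 : σ ≤ 1) (ε : ℝ) (hε : 0 < ε) (hε1 : ε ≤ 1) (D : ℝ) (hD : 2 ≤ D) (hnε : n * ε ≤ 1) :
    ProbabilityTheory.cond (perturbedPoints n d Y σ)
      {ω | ∀ (i : Fin n) (j : Fin d), ω i j ∈ Set.Icc (-(D / 2)) (D / 2)}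
      {ω | ∃ (L : ℕ) (seq : ℕ → Fin n → Fin k), goodSeq A sz π ε ω L seq}
    ≤ ENNReal.ofReal ((2 * D / ε) ^ (k * d) *
        (24 * (k : ℝ) ^ A.card * (d : ℝ) ^ ((3 : ℝ) / 4) * D
          * n * A.card * Real.sqrt ε / σ) ^ A.card) := by
  set N := ⌊D / ε⌋₊ with hNdef
  have hDε : 2 ≤ D / ε := by rw [le_div_iff₀ hε]; nlinarith
  have hN1 : (N : ℝ) ≤ D / ε := Nat.floor_le (by linarith)
  have hN2 : D / ε < N + 1 := Nat.lt_floor_add_one _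
  have hN : 0 < N := Nat.floor_pos.2 (by linarith)
  have hN' : (0 : ℝ) < N := by exact_mod_cast hN
  have hDN : D / N ≤ 2 * ε := by
    rw [div_le_iff₀ hN']
    have h1 : (1 : ℝ) ≤ N := by exact_mod_cast hN
    rw [div_lt_iff₀ hε] at hN2
    nlinarith
  obtain ⟨f, hfA, hf⟩ := A.exists_min_image π hA
  set m := A.card with hm
  have hm1 : 1 ≤ m := hA.card_pos
  have hd1 : (1 : ℝ) ≤ d := by exact_mod_cast hd
  have hn1 : (1 : ℝ) ≤ n := by exact_mod_cast (by omega : 1 ≤ n)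
  set v : ℝ := 6 * n * √(d * D * ε) with hv
  have hv0 : 0 ≤ v := by positivity
  have hvsq : n * (ε + 2 * (16 * d * n * ε * D)) ≤ v ^ 2 := by
    rw [hv, mul_pow, Real.sq_sqrt (by positivity)]
    have h1 : (1 : ℝ) ≤ d * n * D := by
      have : (1 : ℝ) ≤ d * n := one_le_mul_of_one_le_of_one_le hd1 hn1
      exact one_le_mul_of_one_le_of_one_le this (by linarith)
    have h2 : (n * ε) * 1 ≤ (n * ε) * (d * n * D) := by gcongr
    have h3 : 0 ≤ n * ε * (d * n * D) := by positivity
    nlinarith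
  -- the measure
  have h1R : 1 ≤ D / 2 := by linarith
  have hp : ∀ i j, IsProbabilityMeasure (ProbabilityTheory.cond
      (gaussianReal (Y i j) ((σ ^ 2).toNNReal)) (Set.Icc (-(D / 2)) (D / 2))) := fun i j =>
    cond_isProbabilityMeasure (gauss_cond_le (Y i j) σ (D / 2) hσ hσ1 (hY i j) h1R ∅).1
  set E : (Fin k → Fin d → Fin N) × Fin k × (A → A → Fin k) → Fin n → Set (Fin n → Fin d → ℝ) :=
    fun q b => if hb : b ∈ A then
      evB A π sz (fun i r => gridPt N D (q.1 i r)) (q.2.2 ⟨b, hb⟩) (srcOf ⟨f, hfA⟩ q.2.1 q.2.2) b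
        (srcOf ⟨f, hfA⟩ q.2.1 q.2.2 ⟨b, hb⟩) (q.2.2 ⟨b, hb⟩ ⟨b, hb⟩) (-(16 * d * n * ε * D))
        (ε + 2 * (16 * d * n * ε * D)) else Set.univ with hE
  rw [← cond_inter_self (box_meas n d (D / 2)), cond_eq_prod n d Y σ (D / 2) hσ hσ1 hY h1R]
  set μ := Measure.pi fun i => Measure.pi fun j =>
        ProbabilityTheory.cond (gaussianReal (Y i j) ((σ ^ 2).toNNReal))
          (Set.Icc (-(D / 2)) (D / 2)) with hμ
  have hsub : ({ω | ∀ (i : Fin n) (j : Fin d), ω i j ∈ Set.Icc (-(D / 2)) (D / 2)} ∩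
      {ω | ∃ (L : ℕ) (seq : ℕ → Fin n → Fin k), goodSeq A sz π ε ω L seq})
      ⊆ ⋃ q, ⋂ b ∈ A, E q b := by
    rintro ω ⟨hbox, L, seq, hgood⟩
    obtain ⟨g, i0, dat, hg⟩ := det_main A sz π hinj ε D hε hD hnε N hN hDN ω
      (fun j r => abs_le.2 (hbox j r)) L seq hgood ⟨f, hfA⟩ (fun a => hf a a.2)
    refine Set.mem_iUnion.2 ⟨(g, i0, dat), Set.mem_iInter₂.2 fun b hb => ?_⟩
    simp only [hE, dif_pos hb]
    exact hg ⟨b, hb⟩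
  have hone : ∀ q, μ (⋂ b ∈ A, E q b) ≤ ENNReal.ofReal (4 * v / σ) ^ m := by
    intro q
    refine pi_inter_le _ π _ (E q) A hinj ?_ ?_ ?_
    · intro b hb
      simp only [hE, dif_pos hb]
      exact measurableSet_evB _ _ _ _ _ _ _ _ _ _ _
    · intro b hb c hc hbc ω x
      simp only [hE, dif_pos hb]
      exact evB_dep _ _ _ _ _ _ _ _ _ _ _ c hbc ω x
    · intro b hb ω
      simp only [hE, dif_pos hb]
      exact evB_prob hd _ σ hσ
        (fun r T => (gauss_cond_le (Y b r) σ (D / 2) hσ hσ1 (hY b r) h1R T).2)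
        _ _ _ _ _ _ _ _ _ _ _ v hv0 hvsq ω
  have hcard : Fintype.card ((Fin k → Fin d → Fin N) × Fin k × (A → A → Fin k))
      = N ^ (k * d) * k * (k ^ m) ^ m := by
    simp only [Fintype.card_prod, Fintype.card_fun, Fintype.card_fin, Fintype.card_coe, ← hm]
    rw [← pow_mul, mul_comm d k, mul_assoc]
  calc μ _ ≤ μ (⋃ q, ⋂ b ∈ A, E q b) := measure_mono hsub
    _ ≤ ∑' q, μ (⋂ b ∈ A, E q b) := measure_iUnion_le _
    _ ≤ ∑' _ : (Fin k → Fin d → Fin N) × Fin k × (A → A → Fin k),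
        ENNReal.ofReal (4 * v / σ) ^ m := ENNReal.tsum_le_tsum hone
    _ = ENNReal.ofReal (((N ^ (k * d) * k * (k ^ m) ^ m : ℕ) : ℝ) * (4 * v / σ) ^ m) := by
        rw [tsum_fintype, Finset.sum_const, Finset.card_univ, hcard, nsmul_eq_mul,
          ENNReal.ofReal_mul (by positivity), ENNReal.ofReal_pow (by positivity),
          ENNReal.ofReal_natCast]
    _ ≤ _ := by
        refine ENNReal.ofReal_le_ofReal ?_
        push_cast
        have ha : (N : ℝ) ^ (k * d) * k ≤ (2 * D / ε) ^ (k * d) := by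
          have h2 : (k : ℝ) ≤ 2 ^ (k * d) := by
            have : k ≤ 2 ^ (k * d) := (Nat.lt_two_pow_self (n := k)).le.trans
              (Nat.pow_le_pow_right (by norm_num) (Nat.le_mul_of_pos_right k hd))
            exact_mod_cast this
          calc (N : ℝ) ^ (k * d) * k ≤ (D / ε) ^ (k * d) * 2 ^ (k * d) := by gcongr
            _ = _ := by rw [← mul_pow]; congr 1; ring
        have hb : 4 * v / σ ≤ 24 * (d : ℝ) ^ ((3 : ℝ) / 4) * D * n * m * √ε / σ := by
          have h1 : √(d * D * ε) ≤ (d : ℝ) ^ ((3 : ℝ) / 4) * D * √ε := by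
            rw [Real.sqrt_mul (by positivity), Real.sqrt_mul (by positivity)]
            have e1 : √(d : ℝ) ≤ (d : ℝ) ^ ((3 : ℝ) / 4) := by
              rw [Real.sqrt_eq_rpow]
              exact Real.rpow_le_rpow_of_exponent_le hd1 (by norm_num)
            have e2 : √D ≤ D := by
              rw [Real.sqrt_le_left (by linarith)]; nlinarith
            gcongr
          have hm1' : (1 : ℝ) ≤ m := by exact_mod_cast hm1
          have h3 : 4 * v ≤ 24 * (d : ℝ) ^ ((3 : ℝ) / 4) * D * n * m * √ε := by
            calc 4 * v = 24 * n * √(d * D * ε) * 1 := by rw [hv]; ring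
              _ ≤ 24 * n * ((d : ℝ) ^ ((3 : ℝ) / 4) * D * √ε) * m := by gcongr
              _ = _ := by ring
          gcongr
        calc (N : ℝ) ^ (k * d) * k * (k ^ m) ^ m * (4 * v / σ) ^ m
            ≤ (2 * D / ε) ^ (k * d) * (k ^ m) ^ m
              * (24 * (d : ℝ) ^ ((3 : ℝ) / 4) * D * n * m * √ε / σ) ^ m := by gcongr
          _ = _ := by
              rw [mul_assoc, ← mul_pow]
              congr 2
              ring

/-- Fix an active set `A` of point indices, starting cluster sizes `sz`, and
an order `π` (injective on `A`) in which the points of `A` first move. Let the random point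
set `X` consist of `n` independent Gaussian perturbations (mean `0`, standard deviation
`σ ≤ 1`) of fixed points of `[0,1]^d`, conditioned on `X ⊆ [−D/2, D/2]^d` with
`D = √(2n·ln(nkd))`. Then the probability that some sequence of Hartigan--Wong iterations —
in which exactly the points of `A` move, the initial cluster sizes are given by `sz`, the
first moves occur in the order `π`, and every iteration strictly decreases `Φ` — improves the
potential by at most `ε ≤ 1` is bounded by
`(2D/ε)^{kd} · (c·k^{|A|}·d^{3/4}·D·n·|A|·√ε/σ)^{|A|}` for an absolute constant `c > 0`. -/
theorem improving_sequence_fixed_active_set :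
    ∃ c : ℝ, 0 < c ∧
      ∀ (n k d : ℕ), 0 < n → 0 < k → 0 < d →
        ∀ (A : Finset (Fin n)) (sz : Fin k → ℕ) (π : Fin n → ℕ), Set.InjOn π ↑A →
          ∀ (Y : Fin n → Fin d → ℝ), (∀ i j, Y i j ∈ Set.Icc (0 : ℝ) 1) →
            ∀ σ : ℝ, 0 < σ → σ ≤ 1 →
              ∀ ε : ℝ, 0 < ε → ε ≤ 1 →
                ProbabilityTheory.cond (perturbedPoints n d Y σ)
                    {ω | ∀ (i : Fin n) (j : Fin d),
                        ω i j ∈ Set.Icc (-(cubeD n k d / 2)) (cubeD n k d / 2)}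
                    {ω | ∃ (L : ℕ) (seq : ℕ → Fin n → Fin k),
                      (∀ t < L, SingleMove (seq t) (seq (t + 1)) ∧
                        kmeansPot (fun i => toEuc (ω i)) (seq (t + 1))
                          < kmeansPot (fun i => toEuc (ω i)) (seq t)) ∧
                      {x : Fin n | ∃ t < L, seq (t + 1) x ≠ seq t x} = ↑A ∧
                      (∀ i : Fin k, (clusterIdx (seq 0) i).card = sz i) ∧
                      (∀ a ∈ A, ∀ b ∈ A, π a < π b →
                        sInf {t : ℕ | t < L ∧ seq (t + 1) a ≠ seq t a}
                          < sInf {t : ℕ | t < L ∧ seq (t + 1) b ≠ seq t b}) ∧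
                      kmeansPot (fun i => toEuc (ω i)) (seq 0)
                          - kmeansPot (fun i => toEuc (ω i)) (seq L) ≤ ε}
                  ≤ ENNReal.ofReal
                      ((2 * cubeD n k d / ε) ^ (k * d) *
                        (c * (k : ℝ) ^ A.card * (d : ℝ) ^ ((3 : ℝ) / 4) * cubeD n k d
                            * n * A.card * Real.sqrt ε / σ) ^ A.card) := by
  refine ⟨24, by norm_num, ?_⟩
  intro n k d hn hk hd A sz π hinj Y hY σ hσ hσ1 ε hε hε1
  change ProbabilityTheory.cond (perturbedPoints n d Y σ)
      {ω | ∀ (i : Fin n) (j : Fin d), ω i j ∈ Set.Icc (-(cubeD n k d / 2)) (cubeD n k d / 2)}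
      {ω | ∃ (L : ℕ) (seq : ℕ → Fin n → Fin k), goodSeq A sz π ε ω L seq} ≤ _
  rcases A.eq_empty_or_nonempty with hA | hA
  · by_cases h1 : n * k * d = 1
    · have hn1 : n = 1 := Nat.eq_one_of_mul_eq_one_right (by rwa [mul_assoc] at h1)
      have h0 : cubeD n k d = 0 := by
        have : (n : ℝ) * k * d = 1 := by exact_mod_cast h1
        unfold cubeD; rw [this]; simp
      have hz : perturbedPoints n d Y σ
          {ω | ∀ (i : Fin n) (j : Fin d),
            ω i j ∈ Set.Icc (-(cubeD n k d / 2)) (cubeD n k d / 2)} = 0 := by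
        have hv : (σ ^ 2).toNNReal ≠ 0 := by
          simp only [ne_eq, Real.toNNReal_eq_zero, not_le]; positivity
        rw [box_eq, perturbedPoints, Measure.pi_pi]
        refine Finset.prod_eq_zero (Finset.mem_univ ⟨0, hn⟩) ?_
        rw [Measure.pi_pi]
        refine Finset.prod_eq_zero (Finset.mem_univ ⟨0, hd⟩) ?_
        rw [gaussianReal_apply _ hv, h0]
        simp
      rw [cond_eq_zero_of_meas_eq_zero hz]
      simp
    · have h2 : 2 ≤ n * k * d := by
        have : 0 < n * k * d := by positivity
        omega
      have hn1 : (1 : ℝ) ≤ n := by exact_mod_cast hn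
      have hD : 1 ≤ cubeD n k d := cubeD_lower n k d 2 1 hn (by norm_num) h2 (by norm_num) (by
        have := Real.log_two_gt_d9
        push_cast
        nlinarith)
      refine prob_le_one.trans ?_
      rw [hA]
      simp only [Finset.card_empty, pow_zero, mul_one]
      rw [← ENNReal.ofReal_one]
      refine ENNReal.ofReal_le_ofReal (one_le_pow₀ ?_)
      rw [le_div_iff₀ hε]; linarith
  by_cases hnk : 2 ≤ n ∧ 2 ≤ k
  swap
  · have : {ω : Fin n → Fin d → ℝ | ∃ (L : ℕ) (seq : ℕ → Fin n → Fin k),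
        goodSeq A sz π ε ω L seq} = ∅ := by
      ext ω
      constructor
      · rintro ⟨L, seq, h⟩
        exact hnk (goodSeq_two_le A sz π ε ω L seq h hA)
      · intro h; exact h.elim
    rw [this]; simp
  obtain ⟨hn2, hk2⟩ := hnk
  have hn2' : (2 : ℝ) ≤ n := by exact_mod_cast hn2
  have hD : 2 ≤ cubeD n k d := cubeD_lower n k d 4 2 hn (by norm_num)
    (by nlinarith [Nat.mul_le_mul hn2 hk2, Nat.le_mul_of_pos_right (n * k) hd]) (by norm_num) (by
      have := Real.log_two_gt_d9
      have h4 : Real.log ((4 : ℕ) : ℝ) = 2 * Real.log 2 := by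
        rw [show ((4 : ℕ) : ℝ) = 2 ^ 2 by norm_num, Real.log_pow]; norm_num
      rw [h4]
      nlinarith)
  by_cases hnε : n * ε ≤ 1
  · exact prob_main hn2 hk2 hd A hA sz π hinj Y hY σ hσ hσ1 ε hε hε1 _ hD hnε
  · refine prob_le_one.trans ?_
    rw [← ENNReal.ofReal_one]
    refine ENNReal.ofReal_le_ofReal ?_
    have hm1 : (1 : ℝ) ≤ A.card := by exact_mod_cast hA.card_pos
    have hk1 : (1 : ℝ) ≤ (k : ℝ) ^ A.card := one_le_pow₀ (by exact_mod_cast hk)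
    have hd1 : (1 : ℝ) ≤ (d : ℝ) ^ ((3 : ℝ) / 4) :=
      Real.one_le_rpow (by exact_mod_cast hd) (by norm_num)
    have hs : 1 ≤ n * √ε := by
      have h1 : ε ≤ √ε := by
        rw [Real.le_sqrt hε.le hε.le]; nlinarith
      have : n * ε ≤ n * √ε := by gcongr
      linarith [not_le.1 hnε]
    refine one_le_mul_of_one_le_of_one_le (one_le_pow₀ ?_) (one_le_pow₀ ?_)
    · rw [le_div_iff₀ hε]; linarith
    · rw [le_div_iff₀ hσ]
      calc 1 * σ ≤ 1 * 1 * 1 * 1 * 1 * 1 := by linarith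
        _ ≤ 24 * (k : ℝ) ^ A.card * (d : ℝ) ^ ((3 : ℝ) / 4) * cubeD n k d * (n * √ε)
            * A.card := by
          gcongr <;> linarith
        _ = _ := by ring
end
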